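/- arXiv:1306.6899 — 10 statements merged into one kernel-verified Lean document; each statement's English description precedes it below -/
import Mathlib

section
/- Let γ ∈ (-1, 0) and p ≥ 1. Let f : ℝ → [0,∞) be a bounded Lipschitz continuous function, not identically zero. For t > 0 define h_t(z) = sup{((f(x))^γ + t·|y|^p/p)^{1/γ} : x, y ∈ ℝ, z = x + t·y, f(x) > 0, y ≠ 0} (with sup of the empty set taken as 0), and assume that for each t > 0 the function h_t is Lebesgue-measurable and Lebesgue-integrable on ℝ. Then the function F(t) = ∫_ℝ h_t(z) dz is concave on (0,∞). -/
open MeasureTheory Set Filter Topology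

/-- Joint convexity of `(t, y) ↦ P t y` on the half-plane `t > 0`. -/
def JointlyConvex (P : ℝ → ℝ → ℝ) : Prop :=
  ∀ ⦃s t : ℝ⦄, 0 < s → 0 < t → ∀ ⦃a b : ℝ⦄, 0 ≤ a → 0 ≤ b → a + b = 1 →
    ∀ y z : ℝ, P (a * s + b * t) (a * y + b * z) ≤ a * P s y + b * P t z

/-- The lower envelope of the translates `φ i + P t (z - x i)`, `i ≤ n`. -/
noncomputable def lowerEnvelope (P : ℝ → ℝ → ℝ) (x φ : ℕ → ℝ) : ℕ → ℝ → ℝ → ℝ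
  | 0, t, z => φ 0 + P t (z - x 0)
  | n + 1, t, z => min (lowerEnvelope P x φ n t z) (φ (n + 1) + P t (z - x (n + 1)))

theorem pos_combination {s t a b : ℝ} (hs : 0 < s) (ht : 0 < t) (ha : 0 ≤ a) (hb : 0 ≤ b)
    (hab : a + b = 1) : 0 < a * s + b * t := by
  rcases ha.eq_or_lt with rfl | ha
  · have : b = 1 := by linarith
    simpa [this] using ht
  · positivity

theorem convex_increment_monotone {P : ℝ → ℝ → ℝ} (hP : JointlyConvex P) {t : ℝ} (ht : 0 < t)
    {x y : ℝ} (hxy : x ≤ y) : Monotone fun z => P t (z - x) - P t (z - y) := by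
  intro z w hzw
  have key : ∀ A B C D : ℝ, A ≤ B → B ≤ D → A + D = B + C → P t B + P t C ≤ P t A + P t D := by
    intro A B C D hAB hBD hsum
    rcases (hAB.trans hBD).eq_or_lt with h | h
    · have h1 : B = A := by linarith
      have h2 : C = A := by linarith
      rw [h1, h2, ← h]
    · have hd : 0 < D - A := by linarith
      have ha : 0 ≤ (D - B) / (D - A) := div_nonneg (by linarith) hd.le
      have hb : 0 ≤ (B - A) / (D - A) := div_nonneg (by linarith) hd.le
      have hab : (D - B) / (D - A) + (B - A) / (D - A) = 1 := by field_simp; ring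
      have e1 := hP ht ht ha hb hab A D
      have e2 := hP ht ht hb ha (by linarith) A D
      have ht1 : (D - B) / (D - A) * t + (B - A) / (D - A) * t = t := by
        rw [← add_mul, hab, one_mul]
      have ht2 : (B - A) / (D - A) * t + (D - B) / (D - A) * t = t := by linarith
      have hB : (D - B) / (D - A) * A + (B - A) / (D - A) * D = B := by field_simp; ring
      have hC : (B - A) / (D - A) * A + (D - B) / (D - A) * D = C := by
        have : C = A + D - B := by linarith
        rw [this]; field_simp; ring
      rw [ht1, hB] at e1
      rw [ht2, hC] at e2
      have h3 : (B - A) / (D - A) = 1 - (D - B) / (D - A) := by linarith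
      rw [h3] at e1 e2
      linarith
  have := key (z - y) (z - x) (w - y) (w - x) (by linarith) (by linarith) (by ring)
  dsimp only
  linarith

section Envelope

variable {P : ℝ → ℝ → ℝ} (x φ : ℕ → ℝ)

theorem lowerEnvelope_continuous (hc : ∀ t, 0 < t → Continuous (P t)) (n : ℕ) {t : ℝ}
    (ht : 0 < t) : Continuous (lowerEnvelope P x φ n t) := by
  have hU : ∀ i, Continuous fun z => φ i + P t (z - x i) := fun i =>
    continuous_const.add ((hc t ht).comp (continuous_id.sub continuous_const))
  induction n with
  | zero => exact hU 0
  | succ n ih => exact ih.min (hU (n + 1))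

theorem lowerEnvelope_le {n i : ℕ} (hi : i ≤ n) (t z : ℝ) :
    lowerEnvelope P x φ n t z ≤ φ i + P t (z - x i) := by
  induction n with
  | zero => obtain rfl : i = 0 := by omega
            exact le_rfl
  | succ n ih =>
    rcases hi.eq_or_lt with rfl | hi
    · exact min_le_right _ _
    · exact (min_le_left _ _).trans (ih (by omega))

theorem exists_lowerEnvelope_eq (n : ℕ) (t z : ℝ) :
    ∃ i ≤ n, lowerEnvelope P x φ n t z = φ i + P t (z - x i) := by
  induction n with
  | zero => exact ⟨0, le_rfl, rfl⟩
  | succ n ih =>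
    obtain ⟨i, hi, h⟩ := ih
    rcases min_choice (lowerEnvelope P x φ n t z) (φ (n + 1) + P t (z - x (n + 1))) with h' | h'
    · exact ⟨i, by omega, h'.trans h⟩
    · exact ⟨n + 1, le_rfl, h'⟩

variable {x}

theorem lowerEnvelope_sub_monotone (hP : JointlyConvex P) (hx : Monotone x) {t : ℝ} (ht : 0 < t)
    (n : ℕ) {y : ℝ} (hy : x n ≤ y) :
    Monotone fun z => lowerEnvelope P x φ n t z - P t (z - y) := by
  intro z w hzw
  obtain ⟨i, hi, h⟩ := exists_lowerEnvelope_eq (P := P) x φ n t w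
  have h1 := lowerEnvelope_le (P := P) x φ hi t z
  have h2 := convex_increment_monotone hP ht ((hx hi).trans hy) hzw
  dsimp only at h2 ⊢
  linarith

/-- The translates are ordered, so the last one is active exactly to the right of a point. -/
theorem exists_integral_lowerEnvelope_succ (hP : JointlyConvex P)
    (hc : ∀ t, 0 < t → Continuous (P t)) (hx : Monotone x) {t : ℝ} (ht : 0 < t) (n : ℕ)
    {A σ : ℝ} (hA : A ≤ σ) :
    ∃ ρ ∈ Icc A σ, ∫ z in A..σ, lowerEnvelope P x φ (n + 1) t z =
      (∫ z in A..ρ, lowerEnvelope P x φ n t z) +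
        ∫ z in ρ..σ, (φ (n + 1) + P t (z - x (n + 1))) := by
  have hcn := lowerEnvelope_continuous x φ hc n ht
  have hcs := lowerEnvelope_continuous x φ hc (n + 1) ht
  have hPc : Continuous fun z => P t (z - x (n + 1)) :=
    (hc t ht).comp (continuous_id.sub continuous_const)
  set g : ℝ → ℝ := fun z => lowerEnvelope P x φ n t z - P t (z - x (n + 1)) with hg
  have hgm : Monotone g := lowerEnvelope_sub_monotone φ hP hx ht n (hx (Nat.le_succ n))
  have hgc : Continuous g := hcn.sub hPc
  obtain ⟨ρ, hρ, hl, hr⟩ : ∃ ρ ∈ Icc A σ, (∀ z ∈ Ioc A ρ, g z ≤ φ (n + 1)) ∧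
      ∀ z ∈ Ioc ρ σ, φ (n + 1) ≤ g z := by
    rcases le_or_gt (φ (n + 1)) (g A) with h1 | h1
    · exact ⟨A, ⟨le_rfl, hA⟩, by simp, fun z hz => h1.trans (hgm hz.1.le)⟩
    · rcases le_or_gt (g σ) (φ (n + 1)) with h2 | h2
      · exact ⟨σ, ⟨hA, le_rfl⟩, fun z hz => (hgm hz.2).trans h2, by simp⟩
      · obtain ⟨ρ, hρ, h⟩ := intermediate_value_Icc hA hgc.continuousOn ⟨h1.le, h2.le⟩
        exact ⟨ρ, hρ, fun z hz => (hgm hz.2).trans h.le, fun z hz => h.ge.trans (hgm hz.1.le)⟩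
  refine ⟨ρ, hρ, ?_⟩
  rw [← intervalIntegral.integral_add_adjacent_intervals (hcs.intervalIntegrable A ρ)
    (hcs.intervalIntegrable ρ σ), intervalIntegral.integral_of_le hρ.1,
    intervalIntegral.integral_of_le hρ.1, intervalIntegral.integral_of_le hρ.2,
    intervalIntegral.integral_of_le hρ.2]
  congr 1
  · refine setIntegral_congr_fun measurableSet_Ioc fun z hz => ?_
    have := hl z hz
    exact min_eq_left (by simp only [hg] at this; linarith)
  · refine setIntegral_congr_fun measurableSet_Ioc fun z hz => ?_
    have := hr z hz
    exact min_eq_right (by simp only [hg] at this; linarith)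

theorem integral_lowerEnvelope_succ_le (hc : ∀ t, 0 < t → Continuous (P t)) {t : ℝ} (ht : 0 < t)
    (n : ℕ) {A σ ρ : ℝ} (hρ : ρ ∈ Icc A σ) :
    ∫ z in A..σ, lowerEnvelope P x φ (n + 1) t z ≤
      (∫ z in A..ρ, lowerEnvelope P x φ n t z) +
        ∫ z in ρ..σ, (φ (n + 1) + P t (z - x (n + 1))) := by
  have hcn := lowerEnvelope_continuous x φ hc n ht
  have hcs := lowerEnvelope_continuous x φ hc (n + 1) ht
  have hPc : Continuous fun z => φ (n + 1) + P t (z - x (n + 1)) :=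
    continuous_const.add ((hc t ht).comp (continuous_id.sub continuous_const))
  rw [← intervalIntegral.integral_add_adjacent_intervals (hcs.intervalIntegrable A ρ)
    (hcs.intervalIntegrable ρ σ)]
  refine add_le_add ?_ ?_
  · exact intervalIntegral.integral_mono_on hρ.1 (hcs.intervalIntegrable _ _)
      (hcn.intervalIntegrable _ _) fun z _ => min_le_left _ _
  · exact intervalIntegral.integral_mono_on hρ.2 (hcs.intervalIntegrable _ _)
      (hPc.intervalIntegrable _ _) fun z _ => min_le_right _ _

end Envelope

/-- Integrating a jointly convex function over translations keeps joint convexity. -/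
theorem JointlyConvex.integral_translate {P : ℝ → ℝ → ℝ} (hP : JointlyConvex P)
    (hc : ∀ t, 0 < t → Continuous (P t)) {u v : ℝ} (huv : u ≤ v) :
    JointlyConvex fun t σ => ∫ r in u..v, P t (σ - r) := by
  intro s t hs ht a b ha hb hab σ₁ σ₂
  have hcont : ∀ τ, 0 < τ → ∀ σ, Continuous fun r => P τ (σ - r) := fun τ hτ σ =>
    (hc τ hτ).comp (continuous_const.sub continuous_id)
  have h1 := (hcont s hs σ₁).const_mul a
  have h2 := (hcont t ht σ₂).const_mul b
  have h3 := hcont _ (pos_combination hs ht ha hb hab) (a * σ₁ + b * σ₂)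
  dsimp only
  rw [← intervalIntegral.integral_const_mul, ← intervalIntegral.integral_const_mul,
    ← intervalIntegral.integral_add (h1.intervalIntegrable _ _) (h2.intervalIntegrable _ _)]
  refine intervalIntegral.integral_mono_on huv (h3.intervalIntegrable _ _)
    ((h1.add h2).intervalIntegrable _ _) fun r _ => ?_
  have := hP hs ht ha hb hab (σ₁ - r) (σ₂ - r)
  have e : a * (σ₁ - r) + b * (σ₂ - r) = a * σ₁ + b * σ₂ - r := by
    linear_combination (-r) * hab
  rwa [e] at this

/-- Difference of the primitives of two translates, as an integral over the translation. -/
theorem integral_translate_sub {g : ℝ → ℝ} (hg : Continuous g) (x y c d σ : ℝ) :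
    (∫ z in x..σ, (c + g (z - x))) - ∫ z in y..σ, (d + g (z - y)) =
      c * (σ - x) - d * (σ - y) + ∫ r in x..y, g (σ - r) := by
  have hx : Continuous fun z => g (z - x) := hg.comp (continuous_id.sub continuous_const)
  have hy : Continuous fun z => g (z - y) := hg.comp (continuous_id.sub continuous_const)
  rw [intervalIntegral.integral_add (by simp) (hx.intervalIntegrable _ _),
    intervalIntegral.integral_add (by simp) (hy.intervalIntegrable _ _),
    intervalIntegral.integral_comp_sub_right, intervalIntegral.integral_comp_sub_right,
    intervalIntegral.integral_comp_sub_left, intervalIntegral.integral_const,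
    intervalIntegral.integral_const]
  have h := intervalIntegral.integral_add_adjacent_intervals (μ := volume)
    (hg.intervalIntegrable 0 (σ - y)) (hg.intervalIntegrable (σ - y) (σ - x))
  simp only [sub_self, smul_eq_mul]
  linarith

/-- The primitive of the lower envelope, minus that of its last piece, is jointly convex in the
time and the upper limit of integration. -/
theorem integral_lowerEnvelope_sub_jointly_convex {P : ℝ → ℝ → ℝ} (hP : JointlyConvex P)
    (hc : ∀ t, 0 < t → Continuous (P t)) {x : ℕ → ℝ} (φ : ℕ → ℝ) (hx : Monotone x) {A : ℝ}
    (hA : A ≤ x 0) {s t a b : ℝ} (hs : 0 < s) (ht : 0 < t) (ha : 0 ≤ a) (hb : 0 ≤ b)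
    (hab : a + b = 1) (n : ℕ) {σ₁ σ₂ : ℝ} (h₁ : A ≤ σ₁) (h₂ : A ≤ σ₂) :
    (∫ z in A..(a * σ₁ + b * σ₂), lowerEnvelope P x φ n (a * s + b * t) z) -
        ∫ z in x n..(a * σ₁ + b * σ₂), (φ n + P (a * s + b * t) (z - x n)) ≤
      a * ((∫ z in A..σ₁, lowerEnvelope P x φ n s z) - ∫ z in x n..σ₁, (φ n + P s (z - x n))) +
      b * ((∫ z in A..σ₂, lowerEnvelope P x φ n t z) - ∫ z in x n..σ₂, (φ n + P t (z - x n))) := by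
  have hτ := pos_combination hs ht ha hb hab
  have hU : ∀ i τ, 0 < τ → Continuous fun z => φ i + P τ (z - x i) := fun i τ hτ =>
    continuous_const.add ((hc τ hτ).comp (continuous_id.sub continuous_const))
  induction n generalizing σ₁ σ₂ with
  | zero =>
    have key : ∀ τ, 0 < τ → ∀ σ, (∫ z in A..σ, lowerEnvelope P x φ 0 τ z) -
        ∫ z in x 0..σ, (φ 0 + P τ (z - x 0)) = φ 0 * (x 0 - A) + ∫ r in A..x 0, P τ (r - x 0) := by
      intro τ hτ σ
      have := intervalIntegral.integral_add_adjacent_intervals (μ := volume)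
        ((hU 0 τ hτ).intervalIntegrable A (x 0)) ((hU 0 τ hτ).intervalIntegrable (x 0) σ)
      have h2 : ∫ z in A..x 0, (φ 0 + P τ (z - x 0)) =
          φ 0 * (x 0 - A) + ∫ r in A..x 0, P τ (r - x 0) := by
        have hPc : Continuous fun z => P τ (z - x 0) :=
          (hc τ hτ).comp (continuous_id.sub continuous_const)
        rw [intervalIntegral.integral_add (by simp) (hPc.intervalIntegrable _ _),
          intervalIntegral.integral_const, smul_eq_mul, mul_comm]
      change (∫ z in A..σ, (φ 0 + P τ (z - x 0))) - _ = _
      linarith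
    rw [key _ hτ, key _ hs, key _ ht]
    have h := hP.integral_translate hc (u := 0) (v := x 0 - A) (by linarith) hs ht ha hb hab 0 0
    have e : ∀ τ, ∫ r in 0..x 0 - A, P τ (0 - r) = ∫ r in A..x 0, P τ (r - x 0) := by
      intro τ
      rw [intervalIntegral.integral_comp_sub_left, intervalIntegral.integral_comp_sub_right]
      simp
    simp only [mul_zero, add_zero, e] at h
    have e2 : φ 0 * (x 0 - A) = a * (φ 0 * (x 0 - A)) + b * (φ 0 * (x 0 - A)) := by
      rw [← add_mul, hab, one_mul]
    linarith
  | succ n ih =>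
    obtain ⟨ρ₁, hρ₁, e₁⟩ := exists_integral_lowerEnvelope_succ φ hP hc hx hs n h₁
    obtain ⟨ρ₂, hρ₂, e₂⟩ := exists_integral_lowerEnvelope_succ φ hP hc hx ht n h₂
    have hA' : A = a * A + b * A := by rw [← add_mul, hab, one_mul]
    have hρ : a * ρ₁ + b * ρ₂ ∈ Icc A (a * σ₁ + b * σ₂) := by
      constructor
      · have := mul_le_mul_of_nonneg_left hρ₁.1 ha
        have := mul_le_mul_of_nonneg_left hρ₂.1 hb
        linarith
      · have := mul_le_mul_of_nonneg_left hρ₁.2 ha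
        have := mul_le_mul_of_nonneg_left hρ₂.2 hb
        linarith
    have e := integral_lowerEnvelope_succ_le (x := x) φ hc hτ n hρ
    have ih' := ih hρ₁.1 hρ₂.1
    have hD := hP.integral_translate hc (hx (Nat.le_succ n)) hs ht ha hb hab ρ₁ ρ₂
    have hsplit : ∀ τ, 0 < τ → ∀ ρ σ, (∫ z in ρ..σ, (φ (n + 1) + P τ (z - x (n + 1)))) -
        ∫ z in x (n + 1)..σ, (φ (n + 1) + P τ (z - x (n + 1))) =
        φ n * (ρ - x n) - φ (n + 1) * (ρ - x (n + 1)) + (∫ r in x n..x (n + 1), P τ (ρ - r)) -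
          ∫ z in x n..ρ, (φ n + P τ (z - x n)) := by
      intro τ hτ ρ σ
      have h1 := intervalIntegral.integral_add_adjacent_intervals (μ := volume)
        ((hU (n + 1) τ hτ).intervalIntegrable (x (n + 1)) ρ)
        ((hU (n + 1) τ hτ).intervalIntegrable ρ σ)
      have h2 := integral_translate_sub (hc τ hτ) (x n) (x (n + 1)) (φ n) (φ (n + 1)) ρ
      linarith
    have s₀ := hsplit _ hτ (a * ρ₁ + b * ρ₂) (a * σ₁ + b * σ₂)
    have s₁ := congrArg (a * ·) (hsplit s hs ρ₁ σ₁)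
    have s₂ := congrArg (b * ·) (hsplit t ht ρ₂ σ₂)
    have c₁ : φ n * (a * ρ₁ + b * ρ₂ - x n) = a * (φ n * (ρ₁ - x n)) + b * (φ n * (ρ₂ - x n)) := by
      linear_combination (φ n * x n) * hab
    have c₂ : φ (n + 1) * (a * ρ₁ + b * ρ₂ - x (n + 1)) =
        a * (φ (n + 1) * (ρ₁ - x (n + 1))) + b * (φ (n + 1) * (ρ₂ - x (n + 1))) := by
      linear_combination (φ (n + 1) * x (n + 1)) * hab
    rw [e₁, e₂]
    dsimp only at s₁ s₂ hD
    simp only [Nat.succ_eq_add_one] at hD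
    linarith

theorem integral_lowerEnvelope_convex {P : ℝ → ℝ → ℝ} (hP : JointlyConvex P)
    (hc : ∀ t, 0 < t → Continuous (P t)) {x : ℕ → ℝ} (φ : ℕ → ℝ) (hx : Monotone x) {A B : ℝ}
    (hA : A ≤ x 0) {s t a b : ℝ} (hs : 0 < s) (ht : 0 < t) (ha : 0 ≤ a) (hb : 0 ≤ b)
    (hab : a + b = 1) (n : ℕ) (hB : x n ≤ B) :
    ∫ z in A..B, lowerEnvelope P x φ n (a * s + b * t) z ≤
      a * (∫ z in A..B, lowerEnvelope P x φ n s z) +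
        b * ∫ z in A..B, lowerEnvelope P x φ n t z := by
  have hAB : A ≤ B := hA.trans ((hx (Nat.zero_le n)).trans hB)
  have hτ := pos_combination hs ht ha hb hab
  have h := integral_lowerEnvelope_sub_jointly_convex hP hc φ hx hA hs ht ha hb hab n hAB hAB
  have eB : a * B + b * B = B := by rw [← add_mul, hab, one_mul]
  rw [eB] at h
  have key : ∀ τ, 0 < τ → ∫ z in x n..B, (φ n + P τ (z - x n)) =
      φ n * (B - x n) + ∫ r in x n..B, P τ (B - r) := by
    intro τ hτ
    have := integral_translate_sub (hc τ hτ) (x n) B (φ n) 0 B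
    simpa using this
  have hD := hP.integral_translate hc hB hs ht ha hb hab B B
  rw [eB] at hD
  rw [key _ hτ, key _ hs, key _ ht] at h
  have e2 : φ n * (B - x n) = a * (φ n * (B - x n)) + b * (φ n * (B - x n)) := by
    rw [← add_mul, hab, one_mul]
  dsimp only at hD
  linarith

/-- Convexity in time of the integral of the inf-convolution with a jointly convex kernel. -/
theorem integral_infConvolution_convex {P : ℝ → ℝ → ℝ} (hP : JointlyConvex P)
    (hc : ∀ t, 0 < t → Continuous (P t)) (hP0 : ∀ t, 0 < t → ∀ y, 0 ≤ P t y) {φ : ℝ → ℝ}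
    (hφ : Continuous φ) (hφ0 : ∀ x, 0 ≤ φ x) {A B : ℝ} (hAB : A < B) {W : ℝ → ℝ → ℝ}
    (hW : ∀ t, 0 < t → ∀ z ∈ Icc A B, IsGLB ((fun x => φ x + P t (z - x)) '' Icc A B) (W t z))
    {s t a b : ℝ} (hs : 0 < s) (ht : 0 < t) (ha : 0 ≤ a) (hb : 0 ≤ b) (hab : a + b = 1) :
    ∫ z in A..B, W (a * s + b * t) z ≤ a * (∫ z in A..B, W s z) + b * ∫ z in A..B, W t z := by
  set x : ℕ → ℕ → ℝ := fun N i => A + (B - A) * (i / N) with hxdef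
  have hx : ∀ N, Monotone (x N) := by
    intro N i j hij
    have : (i : ℝ) / N ≤ j / N := by gcongr
    have := mul_le_mul_of_nonneg_left this (sub_nonneg.2 hAB.le)
    simp only [hxdef]
    linarith
  have hx0 : ∀ N, x N 0 = A := by simp [hxdef]
  have hxN : ∀ N, x N N ≤ B := by
    intro N
    have : (N : ℝ) / N ≤ 1 := div_self_le_one _
    have := mul_le_mul_of_nonneg_left this (sub_nonneg.2 hAB.le)
    simp only [hxdef]
    linarith
  have hxmem : ∀ N, ∀ i ≤ N, x N i ∈ Icc A B := fun N i hi =>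
    ⟨(hx0 N).ge.trans (hx N (Nat.zero_le i)), (hx N hi).trans (hxN N)⟩
  set u : ℕ → ℝ → ℝ → ℝ := fun N => lowerEnvelope P (x N) (fun i => φ (x N i)) N with hu
  have hlim : ∀ t, 0 < t → ∀ z ∈ Icc A B, Tendsto (fun N => u N t z) atTop (𝓝 (W t z)) := by
    intro t ht z hz
    refine tendsto_order.2 ⟨fun c hcW => Eventually.of_forall fun N => ?_, fun c hcW => ?_⟩
    · obtain ⟨i, hi, h⟩ := exists_lowerEnvelope_eq (P := P) (x N) (fun i => φ (x N i)) N t z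
      exact hcW.trans_le (((hW t ht z hz).1 ⟨x N i, hxmem N i hi, rfl⟩).trans h.ge)
    · obtain ⟨_, ⟨y, hy, rfl⟩, -, hyc⟩ := (hW t ht z hz).exists_between hcW
      have hd : 0 < B - A := sub_pos.2 hAB
      have hθ0 : 0 ≤ (y - A) / (B - A) := div_nonneg (by linarith [hy.1]) hd.le
      have hθ1 : (y - A) / (B - A) ≤ 1 := (div_le_one hd).2 (by linarith [hy.2])
      have hg : Tendsto (fun N : ℕ => x N ⌊(y - A) / (B - A) * N⌋₊) atTop (𝓝 y) := by
        have h1 := ((tendsto_nat_floor_mul_div_atTop hθ0).comp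
          tendsto_natCast_atTop_atTop).const_mul (B - A) |>.const_add A
        have e : A + (B - A) * ((y - A) / (B - A)) = y := by field_simp; ring
        rw [e] at h1
        exact h1
      have hcont : Continuous fun y => φ y + P t (z - y) :=
        hφ.add ((hc t ht).comp (continuous_const.sub continuous_id))
      filter_upwards [((hcont.tendsto y).comp hg).eventually (gt_mem_nhds hyc)] with N hN
      refine lt_of_le_of_lt (lowerEnvelope_le (P := P) (x N) (fun i => φ (x N i)) ?_ t z) hN
      refine Nat.floor_le_of_le ?_
      exact mul_le_of_le_one_left (Nat.cast_nonneg N) hθ1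
  have hint : ∀ t, 0 < t →
      Tendsto (fun N => ∫ z in A..B, u N t z) atTop (𝓝 (∫ z in A..B, W t z)) := by
    intro t ht
    have hUc : Continuous fun z => φ A + P t (z - A) :=
      continuous_const.add ((hc t ht).comp (continuous_id.sub continuous_const))
    refine intervalIntegral.tendsto_integral_filter_of_dominated_convergence
      (fun z => φ A + P t (z - A)) (Eventually.of_forall fun N => ?_)
      (Eventually.of_forall fun N => ae_of_all _ fun z _ => ?_) (hUc.intervalIntegrable _ _)
      (ae_of_all _ fun z hz => hlim t ht z ?_)
    · exact (lowerEnvelope_continuous _ _ hc N ht).aestronglyMeasurable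
    · obtain ⟨i, hi, h⟩ := exists_lowerEnvelope_eq (P := P) (x N) (fun i => φ (x N i)) N t z
      have h0 : 0 ≤ u N t z := by
        simp only [hu, h]
        exact add_nonneg (hφ0 _) (hP0 t ht _)
      rw [Real.norm_of_nonneg h0]
      have := lowerEnvelope_le (P := P) (x N) (fun i => φ (x N i)) (Nat.zero_le N) t z
      simpa only [hx0] using this
    · rw [uIoc_of_le hAB.le] at hz
      exact Ioc_subset_Icc_self hz
  exact le_of_tendsto_of_tendsto' (hint _ (pos_combination hs ht ha hb hab))
    (((hint s hs).const_mul a).add ((hint t ht).const_mul b)) fun N =>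
    integral_lowerEnvelope_convex hP hc _ (hx N) (hx0 N).ge hs ht ha hb hab N (hxN N)

/-- A negative power as a mixture of the truncations `(R - u)₊`. -/
theorem lintegral_truncation_eq_rpow {k : ℝ} (hk : 0 < k) {u : ℝ} (hu : 0 < u) :
    ∫⁻ R in Ioi (0 : ℝ), ENNReal.ofReal (k * (k + 1) * R ^ (-k - 2)) * ENNReal.ofReal (R - u) =
      ENNReal.ofReal (u ^ (-k)) := by
  have h1 : IntegrableOn (fun R : ℝ => R ^ (-k - 1)) (Ioi u) :=
    integrableOn_Ioi_rpow_of_lt (by linarith) hu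
  have h2 : IntegrableOn (fun R : ℝ => R ^ (-k - 2)) (Ioi u) :=
    integrableOn_Ioi_rpow_of_lt (by linarith) hu
  have hsplit : Ioi (0 : ℝ) = Ioc 0 u ∪ Ioi u := (Ioc_union_Ioi_eq_Ioi hu.le).symm
  have hzero : ∫⁻ R in Ioc (0 : ℝ) u,
      ENNReal.ofReal (k * (k + 1) * R ^ (-k - 2)) * ENNReal.ofReal (R - u) = 0 := by
    rw [setLIntegral_congr_fun (g := fun _ => 0) measurableSet_Ioc, lintegral_zero]
    intro R hR
    simp [ENNReal.ofReal_of_nonpos (sub_nonpos.2 hR.2)]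
  have hreal : ∀ R ∈ Ioi u, ENNReal.ofReal (k * (k + 1) * R ^ (-k - 2)) * ENNReal.ofReal (R - u) =
      ENNReal.ofReal (k * (k + 1) * R ^ (-k - 1) - k * (k + 1) * u * R ^ (-k - 2)) := by
    intro R hR
    have hR0 : 0 < R := hu.trans hR
    rw [← ENNReal.ofReal_mul (by positivity)]
    have : R ^ (-k - 1) = R ^ (-k - 2) * R := by
      rw [← Real.rpow_add_one hR0.ne']; congr 1; ring
    rw [this]
    congr 1
    ring
  have hI : IntegrableOn
      (fun R : ℝ => k * (k + 1) * R ^ (-k - 1) - k * (k + 1) * u * R ^ (-k - 2)) (Ioi u) :=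
    (h1.const_mul _).sub (h2.const_mul _)
  rw [hsplit, lintegral_union measurableSet_Ioi
    (Set.disjoint_left.2 fun R h h' => (not_lt.2 h.2) h'), hzero, zero_add,
    setLIntegral_congr_fun measurableSet_Ioi hreal,
    ← ofReal_integral_eq_lintegral_ofReal hI]
  · rw [integral_sub (h1.const_mul _) (h2.const_mul _), integral_const_mul, integral_const_mul,
      integral_Ioi_rpow_of_lt (by linarith) hu, integral_Ioi_rpow_of_lt (by linarith) hu]
    congr 1
    have e1 : -k - 1 + 1 = -k := by ring
    have e2 : u ^ (-k - 2 + 1) = u ^ (-k) / u := by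
      rw [← Real.rpow_sub_one hu.ne']; congr 1; ring
    have e3 : -k - 2 + 1 = -(k + 1) := by ring
    rw [e2, e1, e3]
    have : k + 1 ≠ 0 := by positivity
    field_simp
    ring
  · refine (ae_restrict_iff' measurableSet_Ioi).2 (ae_of_all _ fun R hR => ?_)
    have hR0 : 0 < R := hu.trans hR
    have : R ^ (-k - 1) = R ^ (-k - 2) * R := by
      rw [← Real.rpow_add_one hR0.ne']; congr 1; ring
    have h0 : 0 ≤ k * (k + 1) * R ^ (-k - 2) * (R - u) :=
      mul_nonneg (by positivity) (sub_nonneg.2 (le_of_lt hR))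
    simp only [Pi.zero_apply, this]
    linarith

theorem lintegral_rpow_neg_eq {α : Type*} [MeasurableSpace α] {μ : Measure α} [SFinite μ]
    {k : ℝ} (hk : 0 < k) {u : α → ℝ} (hu : Measurable u) (hpos : ∀ z, 0 < u z) :
    ∫⁻ z, ENNReal.ofReal (u z ^ (-k)) ∂μ = ∫⁻ R in Ioi (0 : ℝ),
      ENNReal.ofReal (k * (k + 1) * R ^ (-k - 2)) * ∫⁻ z, ENNReal.ofReal (R - u z) ∂μ := by
  simp_rw [← lintegral_truncation_eq_rpow hk (hpos _)]
  rw [lintegral_lintegral_swap (by fun_prop)]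
  refine lintegral_congr fun R => ?_
  rw [lintegral_const_mul _ (by fun_prop)]

/-- Convexity of all truncated integrals passes to concavity of integrals of negative powers. -/
theorem integral_rpow_neg_concave {α : Type*} [MeasurableSpace α] {μ : Measure α}
    [IsFiniteMeasure μ] {k c a b : ℝ} (hk : 0 < k) (hc : 0 < c) (ha : 0 ≤ a) (hb : 0 ≤ b)
    (hab : a + b = 1) {u v w : α → ℝ} (hu : Measurable u) (hv : Measurable v) (hw : Measurable w)
    (huc : ∀ z, c ≤ u z) (hvc : ∀ z, c ≤ v z) (hwc : ∀ z, c ≤ w z)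
    (h : ∀ R, 0 < R →
      ∫ z, min R (w z) ∂μ ≤ a * (∫ z, min R (u z) ∂μ) + b * ∫ z, min R (v z) ∂μ) :
    a * (∫ z, u z ^ (-k) ∂μ) + b * ∫ z, v z ^ (-k) ∂μ ≤ ∫ z, w z ^ (-k) ∂μ := by
  have hI : ∀ g : α → ℝ, Measurable g → (∀ z, c ≤ g z) →
      Integrable (fun z => g z ^ (-k)) μ := by
    intro g hg hgc
    refine Integrable.of_bound (C := c ^ (-k)) (hg.pow_const _).aestronglyMeasurable
      (ae_of_all _ fun z => ?_)
    have hgz : 0 < g z := hc.trans_le (hgc z)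
    rw [Real.norm_of_nonneg (by positivity)]
    exact Real.rpow_le_rpow_of_nonpos hc (hgc z) (by linarith)
  have hE : ∀ g : α → ℝ, Measurable g → (∀ z, c ≤ g z) →
      ∫⁻ z, ENNReal.ofReal (g z ^ (-k)) ∂μ = ENNReal.ofReal (∫ z, g z ^ (-k) ∂μ) := by
    intro g hg hgc
    rw [ofReal_integral_eq_lintegral_ofReal (hI g hg hgc)]
    exact ae_of_all _ fun z => Real.rpow_nonneg (hc.le.trans (hgc z)) _
  have hM : ∀ g : α → ℝ, Measurable g → (∀ z, c ≤ g z) → ∀ R, 0 < R →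
      Integrable (fun z => min R (g z)) μ := by
    intro g hg hgc R hR
    refine Integrable.of_bound (C := R) (by fun_prop) (ae_of_all _ fun z => ?_)
    rw [Real.norm_of_nonneg (le_min hR.le (hc.le.trans (hgc z)))]
    exact min_le_left _ _
  have hT : ∀ g : α → ℝ, Measurable g → (∀ z, c ≤ g z) → ∀ R, 0 < R →
      ∫⁻ z, ENNReal.ofReal (R - g z) ∂μ =
        ENNReal.ofReal (R * μ.real univ - ∫ z, min R (g z) ∂μ) ∧
      0 ≤ R * μ.real univ - ∫ z, min R (g z) ∂μ := by
    intro g hg hgc R hR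
    have e : ∫ z, (R - min R (g z)) ∂μ = R * μ.real univ - ∫ z, min R (g z) ∂μ := by
      rw [integral_sub (integrable_const _) (hM g hg hgc R hR), integral_const, smul_eq_mul,
        mul_comm]
    have h0 : ∀ z, 0 ≤ R - min R (g z) := fun z => sub_nonneg.2 (min_le_left _ _)
    refine ⟨?_, e ▸ integral_nonneg h0⟩
    have hI' : Integrable (fun z => R - min R (g z)) μ :=
      (integrable_const _).sub (hM g hg hgc R hR)
    rw [← e, ofReal_integral_eq_lintegral_ofReal hI' (ae_of_all _ h0)]
    refine lintegral_congr fun z => ?_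
    rcases le_total R (g z) with h | h
    · rw [min_eq_left h, sub_self, ENNReal.ofReal_zero, ENNReal.ofReal_of_nonpos (by linarith)]
    · rw [min_eq_right h]
  have hn : ∀ g : α → ℝ, (∀ z, c ≤ g z) → 0 ≤ ∫ z, g z ^ (-k) ∂μ := fun g hgc =>
    integral_nonneg fun z => Real.rpow_nonneg (hc.le.trans (hgc z)) _
  rw [← ENNReal.ofReal_le_ofReal_iff (hn w hwc),
    ENNReal.ofReal_add (mul_nonneg ha (hn u huc)) (mul_nonneg hb (hn v hvc)),
    ENNReal.ofReal_mul ha, ENNReal.ofReal_mul hb, ← hE u hu huc, ← hE v hv hvc, ← hE w hw hwc,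
    lintegral_rpow_neg_eq hk hu fun z => hc.trans_le (huc z),
    lintegral_rpow_neg_eq hk hv fun z => hc.trans_le (hvc z),
    lintegral_rpow_neg_eq hk hw fun z => hc.trans_le (hwc z),
    ← lintegral_const_mul' _ _ ENNReal.ofReal_ne_top,
    ← lintegral_const_mul' _ _ ENNReal.ofReal_ne_top]
  refine (le_lintegral_add _ _).trans (setLIntegral_mono' measurableSet_Ioi fun R hR => ?_)
  obtain ⟨eu, nu⟩ := hT u hu huc R hR
  obtain ⟨ev, nv⟩ := hT v hv hvc R hR
  obtain ⟨ew, -⟩ := hT w hw hwc R hR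
  rw [mul_left_comm, mul_left_comm (ENNReal.ofReal b), ← mul_add, eu, ev, ew,
    ← ENNReal.ofReal_mul ha, ← ENNReal.ofReal_mul hb,
    ← ENNReal.ofReal_add (mul_nonneg ha nu) (mul_nonneg hb nv)]
  gcongr
  have e : R * μ.real univ = a * (R * μ.real univ) + b * (R * μ.real univ) := by
    rw [← add_mul, hab, one_mul]
  have := h R hR
  linarith

/-- The cost `t * V (y / t)` of a displacement `y` in time `t`, for `V v = |v| ^ p / p`. -/
noncomputable def kineticCost (p t y : ℝ) : ℝ := t * (|y / t| ^ p / p)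

theorem kineticCost_jointly_convex {p : ℝ} (hp : 1 ≤ p) : JointlyConvex (kineticCost p) := by
  intro s t hs ht a b ha hb hab y z
  have hτ := pos_combination hs ht ha hb hab
  have hp0 : 0 < p := by linarith
  have hα : 0 ≤ a * s / (a * s + b * t) := by positivity
  have hβ : 0 ≤ b * t / (a * s + b * t) := by positivity
  have hαβ : a * s / (a * s + b * t) + b * t / (a * s + b * t) = 1 := by field_simp
  have hconv := (convexOn_rpow hp).2 (mem_Ici.2 (abs_nonneg (y / s)))
    (mem_Ici.2 (abs_nonneg (z / t))) hα hβ hαβ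
  simp only [smul_eq_mul] at hconv
  have hle : |(a * y + b * z) / (a * s + b * t)| ≤
      a * s / (a * s + b * t) * |y / s| + b * t / (a * s + b * t) * |z / t| := by
    have e : (a * y + b * z) / (a * s + b * t) =
        a * s / (a * s + b * t) * (y / s) + b * t / (a * s + b * t) * (z / t) := by
      field_simp
    rw [e]
    refine (abs_add_le _ _).trans_eq ?_
    rw [abs_mul, abs_mul, abs_of_nonneg hα, abs_of_nonneg hβ]
  have h := (Real.rpow_le_rpow (abs_nonneg _) hle hp0.le).trans hconv
  have h' := mul_le_mul_of_nonneg_left h (div_pos hτ hp0).le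
  unfold kineticCost
  calc (a * s + b * t) * (|(a * y + b * z) / (a * s + b * t)| ^ p / p)
      = (a * s + b * t) / p * |(a * y + b * z) / (a * s + b * t)| ^ p := by ring
    _ ≤ _ := h'
    _ = a * (s * (|y / s| ^ p / p)) + b * (t * (|z / t| ^ p / p)) := by field_simp

theorem kineticCost_continuous {p : ℝ} (hp : 1 ≤ p) (t : ℝ) : Continuous (kineticCost p t) := by
  unfold kineticCost
  exact continuous_const.mul (((continuous_id.div_const t).abs.rpow_const
    fun _ => Or.inr (by linarith)).div_const p)

theorem kineticCost_nonneg {p : ℝ} (hp : 1 ≤ p) {t : ℝ} (ht : 0 < t) (y : ℝ) :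
    0 ≤ kineticCost p t y := by
  unfold kineticCost
  positivity

theorem kineticCost_zero {p : ℝ} (hp : 1 ≤ p) (t : ℝ) : kineticCost p t 0 = 0 := by
  simp [kineticCost, Real.zero_rpow (by linarith : p ≠ 0)]

/-- The infimum of `f x ^ γ + t * V ((z - x) / t)` over the `x ∈ [A, B]` with `0 < f x`. -/
noncomputable def infCost (γ p : ℝ) (f : ℝ → ℝ) (A B t z : ℝ) : ℝ :=
  ⨅ x : {x : ℝ // x ∈ Icc A B ∧ 0 < f x}, (f x ^ γ + kineticCost p t (z - x))

section InfCost

variable {γ p : ℝ} {f : ℝ → ℝ} {A B t : ℝ}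

theorem infCost_le (hp : 1 ≤ p) (ht : 0 < t) (z : ℝ) {x : ℝ} (hx : x ∈ Icc A B) (hfx : 0 < f x) :
    infCost γ p f A B t z ≤ f x ^ γ + kineticCost p t (z - x) :=
  ciInf_le (f := fun x : {x : ℝ // x ∈ Icc A B ∧ 0 < f x} =>
      f x ^ γ + kineticCost p t (z - x))
    ⟨0, by
      rintro _ ⟨y, rfl⟩
      exact add_nonneg (Real.rpow_nonneg y.2.2.le _) (kineticCost_nonneg hp ht _)⟩ ⟨x, hx, hfx⟩

theorem le_infCost {z c : ℝ} (hne : ∃ x ∈ Icc A B, 0 < f x)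
    (h : ∀ x ∈ Icc A B, 0 < f x → c ≤ f x ^ γ + kineticCost p t (z - x)) :
    c ≤ infCost γ p f A B t z := by
  obtain ⟨x₀, hx₀, hf₀⟩ := hne
  have : Nonempty {x : ℝ // x ∈ Icc A B ∧ 0 < f x} := ⟨⟨x₀, hx₀, hf₀⟩⟩
  exact le_ciInf fun x => h x x.2.1 x.2.2

theorem infCost_measurable (hp : 1 ≤ p) (ht : 0 < t) :
    Measurable (infCost γ p f A B t) := by
  refine UpperSemicontinuous.measurable (upperSemicontinuous_ciInf (fun z => ?_) fun x => ?_)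
  · refine ⟨0, ?_⟩
    rintro _ ⟨y, rfl⟩
    exact add_nonneg (Real.rpow_nonneg y.2.2.le _) (kineticCost_nonneg hp ht _)
  · exact (continuous_const.add ((kineticCost_continuous hp t).comp
      (continuous_id.sub continuous_const))).upperSemicontinuous

theorem rpow_le_infCost (hγ : γ < 0) (hp : 1 ≤ p) (ht : 0 < t) {M : ℝ} (hM : ∀ x, f x ≤ M)
    (hne : ∃ x ∈ Icc A B, 0 < f x) (z : ℝ) : M ^ γ ≤ infCost γ p f A B t z := by
  refine le_infCost hne fun x _ hfx => ?_
  have := Real.rpow_le_rpow_of_nonpos hfx (hM x) hγ.le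
  have := kineticCost_nonneg hp ht (z - x)
  linarith

/-- Truncating the cost amounts to truncating the initial datum. -/
theorem isGLB_min_infCost (hγ : γ < 0) (hp : 1 ≤ p) (ht : 0 < t)
    (hne : ∃ x ∈ Icc A B, 0 < f x) {R : ℝ} (hR : 0 < R) {z : ℝ} (hz : z ∈ Icc A B) :
    IsGLB ((fun x => max (f x) (R ^ (1 / γ)) ^ γ + kineticCost p t (z - x)) '' Icc A B)
      (min R (infCost γ p f A B t z)) := by
  have hRγ : (R ^ (1 / γ)) ^ γ = R := by
    rw [← Real.rpow_mul hR.le, one_div_mul_cancel hγ.ne, Real.rpow_one]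
  have hR' : 0 < R ^ (1 / γ) := by positivity
  constructor
  · rintro _ ⟨x, hx, rfl⟩
    dsimp only
    rcases le_total (f x) (R ^ (1 / γ)) with h | h
    · rw [max_eq_right h, hRγ]
      exact (min_le_left _ _).trans (le_add_of_nonneg_right (kineticCost_nonneg hp ht _))
    · rw [max_eq_left h]
      exact (min_le_right _ _).trans (infCost_le hp ht z hx (hR'.trans_le h))
  · intro c hc
    refine le_min ?_ (le_infCost hne fun x hx hfx => ?_)
    · have h1 : c ≤ _ := hc ⟨z, hz, rfl⟩
      have h2 := Real.rpow_le_rpow_of_nonpos hR' (le_max_right (f z) (R ^ (1 / γ))) hγ.le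
      rw [hRγ] at h2
      simp only [sub_self, kineticCost_zero hp, add_zero] at h1
      exact h1.trans h2
    · have h1 : c ≤ _ := hc ⟨x, hx, rfl⟩
      have h2 := Real.rpow_le_rpow_of_nonpos hfx (le_max_left (f x) (R ^ (1 / γ))) hγ.le
      dsimp only at h1
      linarith

theorem integral_infCost_rpow_concave (hγ : γ < 0) (hp : 1 ≤ p) (hf : Continuous f)
    {M : ℝ} (hM : ∀ x, f x ≤ M) (hAB : A < B) (hne : ∃ x ∈ Icc A B, 0 < f x)
    {s a b : ℝ} (hs : 0 < s) (ht : 0 < t) (ha : 0 ≤ a) (hb : 0 ≤ b) (hab : a + b = 1) :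
    a * (∫ z in Ioc A B, infCost γ p f A B s z ^ (1 / γ)) +
        b * (∫ z in Ioc A B, infCost γ p f A B t z ^ (1 / γ)) ≤
      ∫ z in Ioc A B, infCost γ p f A B (a * s + b * t) z ^ (1 / γ) := by
  have hτ := pos_combination hs ht ha hb hab
  have hM0 : 0 < M := by
    obtain ⟨x₀, -, h₀⟩ := hne
    exact h₀.trans_le (hM x₀)
  have e : 1 / γ = -(-(1 / γ)) := (neg_neg _).symm
  rw [e]
  refine integral_rpow_neg_concave (c := M ^ γ) (neg_pos.2 (one_div_neg.2 hγ)) (by positivity)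
    ha hb hab (infCost_measurable hp hs) (infCost_measurable hp ht) (infCost_measurable hp hτ)
    (rpow_le_infCost hγ hp hs hM hne) (rpow_le_infCost hγ hp ht hM hne)
    (rpow_le_infCost hγ hp hτ hM hne) fun R hR => ?_
  have hR' : 0 < R ^ (1 / γ) := by positivity
  have hmax : ∀ x, 0 < max (f x) (R ^ (1 / γ)) := fun x => hR'.trans_le (le_max_right _ _)
  have h := integral_infConvolution_convex (kineticCost_jointly_convex hp)
    (fun t _ => kineticCost_continuous hp t) (fun t ht => kineticCost_nonneg hp ht)
    (φ := fun x => max (f x) (R ^ (1 / γ)) ^ γ)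
    ((hf.max continuous_const).rpow_const fun x => Or.inl (hmax x).ne')
    (fun x => Real.rpow_nonneg (hmax x).le _) hAB
    (W := fun t z => min R (infCost γ p f A B t z))
    (fun t ht z hz => isGLB_min_infCost hγ hp ht hne hR hz) hs ht ha hb hab
  simpa only [intervalIntegral.integral_of_le hAB.le] using h

end InfCost

/-- The supremal convolution is unaffected by the restriction to nonzero velocities. -/
theorem isLUB_hopfLax {γ p : ℝ} (hγ : γ < 0) (hp : 1 ≤ p) {f : ℝ → ℝ} (hf : Continuous f)
    {M : ℝ} (hM : ∀ x, f x ≤ M) (hne : ∃ x, 0 < f x) {t : ℝ} (ht : 0 < t) (z : ℝ) :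
    IsLUB ((fun x => (f x ^ γ + kineticCost p t (z - x)) ^ (1 / γ)) '' {x | 0 < f x})
      (sSup {v : ℝ | ∃ x y : ℝ, z = x + t * y ∧ 0 < f x ∧ y ≠ 0 ∧
        v = (f x ^ γ + t * (|y| ^ p / p)) ^ (1 / γ)}) := by
  set T : ℝ → ℝ := fun x => (f x ^ γ + kineticCost p t (z - x)) ^ (1 / γ) with hT
  have hset : {v : ℝ | ∃ x y : ℝ, z = x + t * y ∧ 0 < f x ∧ y ≠ 0 ∧
      v = (f x ^ γ + t * (|y| ^ p / p)) ^ (1 / γ)} = T '' {x | 0 < f x ∧ x ≠ z} := by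
    ext v
    constructor
    · rintro ⟨x, y, rfl, hfx, hy, rfl⟩
      refine ⟨x, ⟨hfx, fun h => ?_⟩, ?_⟩
      · have : t * y = 0 := by linarith
        exact (mul_ne_zero ht.ne' hy) this
      · simp only [hT, kineticCost, add_sub_cancel_left, mul_div_cancel_left₀ y ht.ne']
    · rintro ⟨x, ⟨hfx, hxz⟩, rfl⟩
      refine ⟨x, (z - x) / t, by field_simp; ring, hfx,
        div_ne_zero (sub_ne_zero.2 hxz.symm) ht.ne', rfl⟩
  rw [hset]
  have hcont : ∀ x, 0 < f x → ContinuousAt T x := by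
    intro x hfx
    have h1 : ContinuousAt (fun x => f x ^ γ) x := hf.continuousAt.rpow_const (Or.inl hfx.ne')
    have h2 : ContinuousAt (fun x => kineticCost p t (z - x)) x :=
      ((kineticCost_continuous hp t).comp (continuous_const.sub continuous_id)).continuousAt
    exact (h1.add h2).rpow_const (Or.inl (add_pos_of_pos_of_nonneg
      (Real.rpow_pos_of_pos hfx γ) (kineticCost_nonneg hp ht (z - x))).ne')
  have hnear : ∀ x, 0 < f x → ∀ᶠ y in 𝓝[≠] x, 0 < f y := fun x hfx =>
    nhdsWithin_le_nhds (hf.continuousAt.eventually (lt_mem_nhds hfx))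
  have hbdd : BddAbove (T '' {x | 0 < f x ∧ x ≠ z}) := by
    refine ⟨M, ?_⟩
    rintro _ ⟨x, ⟨hfx, -⟩, rfl⟩
    refine le_trans ?_ (hM x)
    have h1 : f x ^ γ ≤ f x ^ γ + kineticCost p t (z - x) :=
      le_add_of_nonneg_right (kineticCost_nonneg hp ht _)
    have h2 := Real.rpow_le_rpow_of_nonpos (by positivity) h1 (one_div_neg.2 hγ).le
    rwa [← Real.rpow_mul hfx.le, mul_one_div_cancel hγ.ne, Real.rpow_one] at h2
  have hnonempty : (T '' {x | 0 < f x ∧ x ≠ z}).Nonempty := by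
    obtain ⟨x, hfx⟩ := hne
    rcases eq_or_ne x z with rfl | hxz
    · obtain ⟨y, hy, hyx⟩ := ((hnear x hfx).and self_mem_nhdsWithin).exists
      exact ⟨_, y, ⟨hy, hyx⟩, rfl⟩
    · exact ⟨_, x, ⟨hfx, hxz⟩, rfl⟩
  have hlub := isLUB_csSup hnonempty hbdd
  refine ⟨?_, fun c hc => hlub.2 ?_⟩
  · rintro _ ⟨x, hfx, rfl⟩
    rcases eq_or_ne x z with rfl | hxz
    · refine le_of_tendsto ((hcont x hfx).tendsto.mono_left (nhdsWithin_le_nhds (s := {x}ᶜ))) ?_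
      filter_upwards [hnear x hfx, self_mem_nhdsWithin] with y hy hyx
      exact hlub.1 ⟨y, ⟨hy, hyx⟩, rfl⟩
    · exact hlub.1 ⟨x, ⟨hfx, hxz⟩, rfl⟩
  · rintro _ ⟨x, ⟨hfx, -⟩, rfl⟩
    exact hc ⟨x, hfx, rfl⟩

/-- The convolutions restricted to `[-m, m]` exhaust the full one. -/
theorem tendsto_integral_infCost {γ p : ℝ} (hγ : γ < 0) (hp : 1 ≤ p) {f : ℝ → ℝ}
    (hne : ∃ x, 0 < f x) {t : ℝ} (ht : 0 < t) {g : ℝ → ℝ} (hg : Integrable g)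
    (hlub : ∀ z, IsLUB ((fun x => (f x ^ γ + kineticCost p t (z - x)) ^ (1 / γ)) ''
      {x | 0 < f x}) (g z)) :
    Tendsto (fun m : ℕ => ∫ z in Ioc (-m : ℝ) m, infCost γ p f (-m) m t z ^ (1 / γ)) atTop
      (𝓝 (∫ z, g z)) := by
  obtain ⟨x₀, hx₀⟩ := hne
  have hγ' : 1 / γ < 0 := one_div_neg.2 hγ
  have hmem : ∀ x : ℝ, ∀ᶠ m : ℕ in atTop, x ∈ Ioc (-m : ℝ) m := by
    intro x
    filter_upwards [tendsto_natCast_atTop_atTop.eventually_gt_atTop |x|] with m hm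
    exact ⟨(abs_lt.1 hm).1, (abs_lt.1 hm).2.le⟩
  have hcost : ∀ z x, 0 < f x → 0 < f x ^ γ + kineticCost p t (z - x) := fun z x hfx => by
    have := kineticCost_nonneg hp ht (z - x)
    positivity
  have hgpos : ∀ z, 0 < g z := fun z =>
    (Real.rpow_pos_of_pos (hcost z x₀ hx₀) _).trans_le ((hlub z).1 ⟨x₀, hx₀, rfl⟩)
  have hinv : ∀ r : ℝ, 0 < r → (r ^ γ) ^ (1 / γ) = r := fun r hr => by
    rw [← Real.rpow_mul hr.le, mul_one_div_cancel hγ.ne, Real.rpow_one]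
  have hinv' : ∀ r : ℝ, 0 < r → (r ^ (1 / γ)) ^ γ = r := fun r hr => by
    rw [← Real.rpow_mul hr.le, one_div_mul_cancel hγ.ne, Real.rpow_one]
  have hlow : ∀ᶠ m : ℕ in atTop, ∀ z, g z ^ γ ≤ infCost γ p f (-m) m t z := by
    filter_upwards [hmem x₀] with m hm z
    refine le_infCost ⟨x₀, Ioc_subset_Icc_self hm, hx₀⟩ fun x _ hfx => ?_
    have := Real.rpow_le_rpow_of_nonpos (Real.rpow_pos_of_pos (hcost z x hfx) _)
      ((hlub z).1 ⟨x, hfx, rfl⟩) hγ.le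
    rwa [hinv' _ (hcost z x hfx)] at this
  have hup : ∀ᶠ m : ℕ in atTop, ∀ z, infCost γ p f (-m) m t z ^ (1 / γ) ≤ g z := by
    filter_upwards [hlow] with m hm z
    have := Real.rpow_le_rpow_of_nonpos (Real.rpow_pos_of_pos (hgpos z) γ) (hm z) hγ'.le
    rwa [hinv _ (hgpos z)] at this
  simp_rw [← integral_indicator measurableSet_Ioc]
  refine tendsto_integral_filter_of_dominated_convergence g (Eventually.of_forall fun m => ?_) ?_
    hg (ae_of_all _ fun z => ?_)
  · exact (((infCost_measurable hp ht).pow_const _).indicator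
      measurableSet_Ioc).aestronglyMeasurable
  · filter_upwards [hup, hlow] with m hm hl
    refine ae_of_all _ fun z => ?_
    refine (norm_indicator_le_norm_self _ _).trans ?_
    rw [Real.norm_of_nonneg (Real.rpow_nonneg
      ((Real.rpow_pos_of_pos (hgpos z) γ).le.trans (hl z)) _)]
    exact hm z
  · refine Tendsto.congr' (f₁ := fun m : ℕ => infCost γ p f (-m) m t z ^ (1 / γ)) ?_ ?_
    · filter_upwards [hmem z] with m hm
      rw [indicator_of_mem hm]
    · refine tendsto_order.2 ⟨fun c hc => ?_, fun c hc => ?_⟩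
      · obtain ⟨_, ⟨x, hfx, rfl⟩, hcx, -⟩ := (hlub z).exists_between hc
        filter_upwards [hmem x, hlow] with m hm hl
        exact hcx.trans_le (Real.rpow_le_rpow_of_nonpos
          ((Real.rpow_pos_of_pos (hgpos z) γ).trans_le (hl z))
          (infCost_le hp ht z (Ioc_subset_Icc_self hm) hfx) hγ'.le)
      · filter_upwards [hup] with m hm
        exact (hm z).trans_lt hc

/-- Theorem B, case γ < 0: concavity in time of the integral of the
γ-Hopf-Lax supremal convolution with kinetic cost `|y|^p/p`. -/
theorem hopf_lax_integral_concave_gamma_neg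
    (γ : ℝ) (hγ : γ ∈ Ioo (-1 : ℝ) 0) (p : ℝ) (hp : 1 ≤ p)
    (f : ℝ → ℝ) (hf0 : ∀ x, 0 ≤ f x) (hfb : ∃ M, ∀ x, f x ≤ M)
    (hflip : ∃ K, LipschitzWith K f) (hfne : ∃ x, 0 < f x)
    (h : ℝ → ℝ → ℝ)
    (hh : ∀ t, 0 < t → ∀ z, h t z = sSup {v : ℝ | ∃ x y : ℝ, z = x + t * y ∧
      0 < f x ∧ y ≠ 0 ∧ v = (f x ^ γ + t * (|y| ^ p / p)) ^ (1 / γ)})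
    (hint : ∀ t, 0 < t → Integrable (h t))
    (F : ℝ → ℝ) (hF : ∀ t, F t = ∫ z, h t z) :
    ConcaveOn ℝ (Ioi 0) F := by
  obtain ⟨M, hM⟩ := hfb
  obtain ⟨K, hK⟩ := hflip
  have hf : Continuous f := hK.continuous
  have hlim : ∀ t, 0 < t → Tendsto
      (fun m : ℕ => ∫ z in Ioc (-m : ℝ) m, infCost γ p f (-m) m t z ^ (1 / γ)) atTop
      (𝓝 (F t)) := by
    intro t ht
    rw [hF t]
    refine tendsto_integral_infCost hγ.2 hp hfne ht (hint t ht) fun z => ?_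
    rw [hh t ht z]
    exact isLUB_hopfLax hγ.2 hp hf hM hfne ht z
  refine ⟨convex_Ioi 0, fun s hs t ht a b ha hb hab => ?_⟩
  simp only [smul_eq_mul]
  refine le_of_tendsto_of_tendsto (((hlim s hs).const_mul a).add ((hlim t ht).const_mul b))
    (hlim _ (pos_combination hs ht ha hb hab)) ?_
  obtain ⟨x₀, hx₀⟩ := hfne
  filter_upwards [tendsto_natCast_atTop_atTop.eventually_gt_atTop |x₀|] with m hm
  have hm0 : (0 : ℝ) < m := (abs_nonneg _).trans_lt hm
  exact integral_infCost_rpow_concave hγ.2 hp hf hM (by linarith)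
    ⟨x₀, ⟨(abs_lt.1 hm).1.le, (abs_lt.1 hm).2.le⟩, hx₀⟩ hs ht ha hb hab
end

section
/- Let p ≥ 1. Let f : ℝ → [0,∞) be a bounded Lipschitz continuous function, not identically zero. For t > 0 define h_t(z) = sup{f(x)·exp(-t·|y|^p/p) : x, y ∈ ℝ, z = x + t·y}, and assume that for each t > 0 the function h_t is Lebesgue-measurable and Lebesgue-integrable on ℝ. Then the function F(t) = ∫_ℝ h_t(z) dz is concave on (0,∞). -/
open MeasureTheory Set Filter Topology

/-- An even convex cost vanishing at the origin and differentiable away from it. -/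
structure IsKineticCost (V : ℝ → ℝ) : Prop where
  convexOn : ConvexOn ℝ univ V
  map_zero : V 0 = 0
  nonneg : ∀ y, 0 ≤ V y
  map_neg : ∀ y, V (-y) = V y
  differentiableAt : ∀ y, y ≠ 0 → DifferentiableAt ℝ V y

namespace IsKineticCost

variable {V : ℝ → ℝ}

lemma locallyLipschitz (hV : IsKineticCost V) : LocallyLipschitz V :=
  hV.convexOn.locallyLipschitz

lemma continuous (hV : IsKineticCost V) : Continuous V := hV.locallyLipschitz.continuous

lemma deriv_neg_eq (hV : IsKineticCost V) (y : ℝ) : deriv V (-y) = -deriv V y := by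
  have h : (fun x ↦ V (-x)) = V := funext hV.map_neg
  have h' := deriv_comp_neg V y
  rw [h] at h'
  linarith

lemma deriv_le_deriv (hV : IsKineticCost V) {s y : ℝ} (hs : 0 < s) (hsy : s ≤ y) :
    deriv V s ≤ deriv V y :=
  (hV.convexOn.subset (subset_univ (Ioi 0)) (convex_Ioi 0)).monotoneOn_deriv
    (fun x hx ↦ hV.differentiableAt x (ne_of_gt hx)) hs (hs.trans_le hsy) hsy

/-- Of two pairs of points with the same sum, the more spread out one costs more. -/
lemma add_le_add_of_convex (hV : IsKineticCost V) {u c d : ℝ} (hc : 0 < c) (hd : 0 < d) :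
    V (u + c) + V (u + d) ≤ V u + V (u + c + d) := by
  have hcd : c + d ≠ 0 := by positivity
  have h₁ := hV.convexOn.2 (mem_univ u) (mem_univ (u + c + d))
    (show 0 ≤ d / (c + d) by positivity) (show 0 ≤ c / (c + d) by positivity)
    (by field_simp; ring)
  have h₂ := hV.convexOn.2 (mem_univ u) (mem_univ (u + c + d))
    (show 0 ≤ c / (c + d) by positivity) (show 0 ≤ d / (c + d) by positivity)
    (by field_simp)
  simp only [smul_eq_mul] at h₁ h₂
  have e₁ : d / (c + d) * u + c / (c + d) * (u + c + d) = u + c := by field_simp; ring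
  have e₂ : c / (c + d) * u + d / (c + d) * (u + c + d) = u + d := by field_simp; ring
  rw [e₁] at h₁
  rw [e₂] at h₂
  have e₃ : d / (c + d) * V u + c / (c + d) * V (u + c + d)
      + (c / (c + d) * V u + d / (c + d) * V (u + c + d)) = V u + V (u + c + d) := by
    field_simp
    ring
  linarith

end IsKineticCost

lemma isKineticCost_abs_rpow_div {p : ℝ} (hp : 1 ≤ p) :
    IsKineticCost fun y ↦ |y| ^ p / p := by
  have hp0 : 0 < p := by linarith
  refine ⟨?_, ?_, fun y ↦ by positivity, fun y ↦ by simp, fun y hy ↦ ?_⟩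
  · have h : ConvexOn ℝ univ ((fun x : ℝ ↦ x ^ p) ∘ fun y : ℝ ↦ |y|) := by
      have himg : (fun y : ℝ ↦ |y|) '' univ = Ici 0 := by
        ext x
        simp only [image_univ, mem_range, mem_Ici]
        exact ⟨fun ⟨y, hy⟩ ↦ hy ▸ abs_nonneg y, fun hx ↦ ⟨x, abs_of_nonneg hx⟩⟩
      refine ConvexOn.comp (himg ▸ convexOn_rpow hp) ?_ ?_
      · exact convexOn_norm (E := ℝ) convex_univ
      · rw [himg]
        exact Real.monotoneOn_rpow_Ici_of_exponent_nonneg hp0.le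
    have h' := h.smul (inv_nonneg.2 hp0.le)
    refine h'.congr fun y _ ↦ ?_
    simp [div_eq_inv_mul]
  · simp [Real.zero_rpow hp0.ne']
  · exact ((differentiableAt_abs hy).rpow_const (Or.inl (abs_ne_zero.2 hy))).div_const p

lemma hasDerivAt_primitive {g : ℝ → ℝ} (hg : Continuous g) (x : ℝ) :
    HasDerivAt (fun s ↦ ∫ v in (0 : ℝ)..s, g v) (g x) x :=
  intervalIntegral.integral_hasDerivAt_right (hg.intervalIntegrable _ _)
    (hg.stronglyMeasurableAtFilter _ _) hg.continuousAt

lemma locallyLipschitz_primitive {g : ℝ → ℝ} (hg : Continuous g) :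
    LocallyLipschitz fun s ↦ ∫ v in (0 : ℝ)..s, g v := by
  refine ContDiff.locallyLipschitz (𝕂 := ℝ) (contDiff_one_iff_deriv.2
    ⟨fun y ↦ (hasDerivAt_primitive hg y).differentiableAt, ?_⟩)
  rwa [funext fun y ↦ (hasDerivAt_primitive hg y).deriv]

/-- The primitive of `y ↦ b * (exp ((a + b) * V y) - exp (b * V y))` vanishing at the origin. -/
noncomputable def costPotential (V : ℝ → ℝ) (a b y : ℝ) : ℝ :=
  ∫ s in (0 : ℝ)..y, b * (Real.exp ((a + b) * V s) - Real.exp (b * V s))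

section CostPotential

variable {V : ℝ → ℝ} {a b : ℝ}

lemma costPotential_zero : costPotential V a b 0 = 0 := by simp [costPotential]

lemma hasDerivAt_costPotential (hV : IsKineticCost V) (y : ℝ) :
    HasDerivAt (costPotential V a b)
      (b * (Real.exp ((a + b) * V y) - Real.exp (b * V y))) y := by
  have hc := hV.continuous
  exact hasDerivAt_primitive (by fun_prop) y

lemma locallyLipschitz_costPotential (hV : IsKineticCost V) :
    LocallyLipschitz (costPotential V a b) := by
  have hc := hV.continuous
  exact locallyLipschitz_primitive (by fun_prop)

lemma costPotential_neg (hV : IsKineticCost V) (y : ℝ) :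
    costPotential V a b (-y) = -costPotential V a b y := by
  have h := intervalIntegral.integral_comp_neg (a := 0) (b := y)
    fun s ↦ b * (Real.exp ((a + b) * V s) - Real.exp (b * V s))
  simp only [hV.map_neg, neg_zero] at h
  rw [costPotential, costPotential, h, intervalIntegral.integral_symm]

lemma costPotential_nonneg (hV : IsKineticCost V) (ha : 0 < a) (hb : 0 < b) {y : ℝ}
    (hy : 0 ≤ y) : 0 ≤ costPotential V a b y := by
  refine intervalIntegral.integral_nonneg hy fun s _ ↦ mul_nonneg hb.le (sub_nonneg.2 ?_)
  exact Real.exp_le_exp.2 (mul_le_mul_of_nonneg_right (by linarith) (hV.nonneg s))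

lemma costPotential_nonpos (hV : IsKineticCost V) (ha : 0 < a) (hb : 0 < b) {y : ℝ}
    (hy : y ≤ 0) : costPotential V a b y ≤ 0 := by
  have h := costPotential_nonneg hV ha hb (neg_nonneg.2 hy)
  rw [costPotential_neg hV] at h
  linarith

lemma le_deriv_mul_costPotential_of_pos (hV : IsKineticCost V) (ha : 0 < a) (hb : 0 < b)
    {y : ℝ} (hy : 0 < y) :
    b * Real.exp ((a + b) * V y) + a - (a + b) * Real.exp (b * V y)
      ≤ (a + b) * deriv V y * costPotential V a b y := by
  set D : ℝ → ℝ := fun s ↦ (a + b) * deriv V y * costPotential V a b s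
    - (b * Real.exp ((a + b) * V s) + a - (a + b) * Real.exp (b * V s)) with hD
  have hderiv : ∀ s, 0 < s → HasDerivAt D ((a + b) * (deriv V y - deriv V s)
      * (b * (Real.exp ((a + b) * V s) - Real.exp (b * V s)))) s := by
    intro s hs
    have hVs := (hV.differentiableAt s hs.ne').hasDerivAt
    have h := ((hasDerivAt_costPotential (a := a) (b := b) hV s).const_mul
      ((a + b) * deriv V y)).sub (((((hVs.const_mul (a + b)).exp).const_mul b).add_const a).sub
      (((hVs.const_mul b).exp).const_mul (a + b)))
    convert! h using 1
    ring
  have hmono : MonotoneOn D (Icc 0 y) := by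
    refine monotoneOn_of_deriv_nonneg (convex_Icc 0 y) ?_ ?_ ?_
    · have h₁ := hV.continuous
      have h₂ := (locallyLipschitz_costPotential (a := a) (b := b) hV).continuous
      exact Continuous.continuousOn (by fun_prop)
    · rw [interior_Icc]
      exact fun s hs ↦ (hderiv s hs.1).differentiableAt.differentiableWithinAt
    · rw [interior_Icc]
      intro s hs
      rw [(hderiv s hs.1).deriv]
      refine mul_nonneg (mul_nonneg (by linarith) ?_) (mul_nonneg hb.le ?_)
      · linarith [hV.deriv_le_deriv hs.1 hs.2.le]
      · exact sub_nonneg.2 (Real.exp_le_exp.2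
          (mul_le_mul_of_nonneg_right (by linarith) (hV.nonneg s)))
  have h := hmono (left_mem_Icc.2 hy.le) (right_mem_Icc.2 hy.le) hy.le
  simp only [hD, costPotential_zero, hV.map_zero] at h
  simp at h
  linarith

lemma le_deriv_mul_costPotential (hV : IsKineticCost V) (ha : 0 < a) (hb : 0 < b)
    {y : ℝ} (hy : y ≠ 0) :
    b * Real.exp ((a + b) * V y) + a - (a + b) * Real.exp (b * V y)
      ≤ (a + b) * deriv V y * costPotential V a b y := by
  rcases hy.lt_or_gt with hy | hy
  · have h := le_deriv_mul_costPotential_of_pos hV ha hb (neg_pos.2 hy)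
    rw [hV.map_neg, hV.deriv_neg_eq, costPotential_neg hV] at h
    linarith
  · exact le_deriv_mul_costPotential_of_pos hV ha hb hy

end CostPotential

lemma lipschitzWith_of_monotone_of_monotone_sub {φ : ℝ → ℝ} {c : NNReal} (hφ : Monotone φ)
    (h : Monotone fun m ↦ c * m - φ m) : LipschitzWith c φ := by
  refine LipschitzWith.of_le_add_mul c fun m m' ↦ ?_
  rcases le_total m m' with hm | hm
  · have := hφ hm
    have := mul_nonneg c.2 (dist_nonneg (x := m) (y := m'))
    simp only [NNReal.val_eq_coe] at this
    linarith
  · have := h hm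
    rw [Real.dist_eq, abs_of_nonneg (by linarith)]
    simp only at this
    linarith

/-- The completed graph of a bounded monotone function, parametrized by a convex combination of
the two coordinates. -/
lemma Monotone.exists_graph_parametrization {X : ℝ → ℝ} (hX : Monotone X) {n : ℝ}
    (hn : ∀ z, X z ∈ Icc (-n) n) {μ : ℝ} (hμ₀ : 0 < μ) (hμ₁ : μ < 1) :
    ∃ ζ ξ : ℝ → ℝ, Monotone ζ ∧ Monotone ξ ∧ (∀ m, ξ m ∈ Icc (-n) n) ∧
      (∀ m, (1 - μ) * ξ m + μ * ζ m = m) ∧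
      ∀ m, (∀ᶠ m' in 𝓝[>] m, ζ m' = ζ m) ∨
        (ζ m, ξ m) ∈ closure (range fun s ↦ (s, X s)) := by
  have hμ : 0 < 1 - μ := by linarith
  set G : ℝ → ℝ := fun z ↦ (1 - μ) * X z + μ * z with hG
  set ζ : ℝ → ℝ := fun m ↦ sSup {z | G z ≤ m} with hζ
  set ξ : ℝ → ℝ := fun m ↦ (m - μ * ζ m) / (1 - μ) with hξ
  have hmem : ∀ m, (m - (1 - μ) * n) / μ ∈ {z | G z ≤ m} := by
    intro m
    have h := mul_le_mul_of_nonneg_left (hn ((m - (1 - μ) * n) / μ)).2 hμ.le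
    have e : μ * ((m - (1 - μ) * n) / μ) = m - (1 - μ) * n := by field_simp
    simp only [hG, mem_ofPred_eq, e]
    linarith
  have hub : ∀ m, ∀ z ∈ {z | G z ≤ m}, z ≤ (m + (1 - μ) * n) / μ := by
    intro m z hz
    have h := mul_le_mul_of_nonneg_left (hn z).1 hμ.le
    simp only [hG, mem_ofPred_eq] at hz
    rw [le_div_iff₀ hμ₀]
    linarith
  have hbdd : ∀ m, BddAbove {z | G z ≤ m} := fun m ↦ ⟨_, hub m⟩
  have hrel : ∀ m, (1 - μ) * ξ m + μ * ζ m = m := by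
    intro m
    simp only [hξ]
    field_simp
    ring
  have hζmono : Monotone ζ := fun m m' hm ↦
    csSup_le_csSup (hbdd m') ⟨_, hmem m⟩ fun z hz ↦ le_trans hz hm
  have hζle : ∀ m m', m ≤ m' → ζ m' ≤ ζ m + (m' - m) / μ := by
    intro m m' hm
    refine csSup_le ⟨_, hmem m'⟩ fun z hz ↦ ?_
    have hd : 0 ≤ (m' - m) / μ := div_nonneg (by linarith) hμ₀.le
    have h : z - (m' - m) / μ ≤ ζ m := by
      refine le_csSup (hbdd m) ?_
      have h₁ := mul_le_mul_of_nonneg_left (hX (sub_le_self z hd)) hμ.le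
      have e : μ * (z - (m' - m) / μ) = μ * z - (m' - m) := by field_simp
      simp only [hG, mem_ofPred_eq, e] at hz ⊢
      linarith
    linarith
  refine ⟨ζ, ξ, hζmono, fun m m' hm ↦ ?_, fun m ↦ ⟨?_, ?_⟩, hrel, fun m ↦ ?_⟩
  · have h := mul_le_mul_of_nonneg_left (hζle m m' hm) hμ₀.le
    have e : μ * (ζ m + (m' - m) / μ) = μ * ζ m + (m' - m) := by field_simp
    exact div_le_div_of_nonneg_right (by linarith) hμ.le
  · have h := (le_div_iff₀ hμ₀).1 (csSup_le ⟨_, hmem m⟩ (hub m))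
    rw [hξ, le_div_iff₀ hμ]
    linarith
  · have h := (div_le_iff₀ hμ₀).1 (le_csSup (hbdd m) (hmem m))
    rw [hξ, div_le_iff₀ hμ]
    linarith
  · refine or_iff_not_imp_left.2 fun hconst ↦ Metric.mem_closure_range_iff.2 fun ε hε ↦ ?_
    have hδ : 0 < ε * μ * (1 - μ) / 2 := by positivity
    obtain ⟨m', hne, hm'⟩ := ((not_eventually.1 hconst).and_eventually
      (Ioo_mem_nhdsGT (show m < m + ε * μ * (1 - μ) / 2 by linarith))).exists
    have hlt : ζ m < ζ m' := lt_of_le_of_ne (hζmono hm'.1.le) (Ne.symm hne)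
    set s := (ζ m + ζ m') / 2 with hs
    have hs₁ : m < G s := by
      by_contra! h
      have : s ≤ ζ m := le_csSup (hbdd m) h
      linarith
    have hs₂ : G s ≤ m' := by
      obtain ⟨z, hz, hsz⟩ := exists_lt_of_lt_csSup ⟨_, hmem m'⟩ (show s < ζ m' by linarith)
      have h₁ := mul_le_mul_of_nonneg_left (hX hsz.le) hμ.le
      have h₂ := mul_le_mul_of_nonneg_left hsz.le hμ₀.le
      simp only [hG, mem_ofPred_eq] at hz ⊢
      linarith
    have hζs : μ * (s - ζ m) ≤ ε * μ * (1 - μ) / 2 := by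
      have h := mul_le_mul_of_nonneg_left (hζle m m' hm'.1.le) hμ₀.le
      have e : μ * (ζ m + (m' - m) / μ) = μ * ζ m + (m' - m) := by field_simp
      have h₁ := mul_le_mul_of_nonneg_left hlt.le hμ₀.le
      have h₂ := hm'.2
      rw [hs]
      linarith
    have hXs : (1 - μ) * (X s - ξ m) + μ * (s - ζ m) = G s - m := by
      have := hrel m
      simp only [hG]
      linarith
    have hnn : 0 ≤ μ * (s - ζ m) := mul_nonneg hμ₀.le (by linarith)
    have hεμ : ε * μ * (1 - μ) / 2 < ε * (1 - μ) := by nlinarith [mul_pos hε hμ]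
    have hεμ' : ε * μ * (1 - μ) / 2 < ε * μ := by nlinarith [mul_pos hε hμ₀]
    refine ⟨s, ?_⟩
    have h₂ := hm'.2
    rw [Prod.dist_eq, max_lt_iff, Real.dist_eq, Real.dist_eq, abs_sub_comm, abs_sub_comm (ξ m),
      abs_lt, abs_lt]
    refine ⟨⟨by linarith, ?_⟩, ?_, ?_⟩
    · exact lt_of_mul_lt_mul_left (by linarith) hμ₀.le
    · exact lt_of_mul_lt_mul_left (by linarith) hμ.le
    · exact lt_of_mul_lt_mul_left (by linarith) hμ.le

/-- The Hopf-Lax supremal convolution at time `t`, with starting points restricted to `K`. -/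
noncomputable def hopfLaxOn (V f : ℝ → ℝ) (K : Set ℝ) (t z : ℝ) : ℝ :=
  sSup ((fun x ↦ f x * Real.exp (-(t * V ((z - x) / t)))) '' K)

section HopfLax

variable {V f : ℝ → ℝ} {K : Set ℝ} {t : ℝ}

lemma hopfLaxOn_isGreatest (hV : IsKineticCost V) (hf : Continuous f) (hK : IsCompact K)
    (hne : K.Nonempty) (t z : ℝ) :
    IsGreatest ((fun x ↦ f x * Real.exp (-(t * V ((z - x) / t)))) '' K)
      (hopfLaxOn V f K t z) := by
  have hc := hV.continuous
  exact (hK.image (by fun_prop)).isGreatest_sSup (hne.image _)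

lemma le_hopfLaxOn (hV : IsKineticCost V) (hf : Continuous f) (hK : IsCompact K)
    {x : ℝ} (hx : x ∈ K) (t z : ℝ) :
    f x * Real.exp (-(t * V ((z - x) / t))) ≤ hopfLaxOn V f K t z :=
  (hopfLaxOn_isGreatest hV hf hK ⟨x, hx⟩ t z).2 (mem_image_of_mem _ hx)

lemma exists_eq_hopfLaxOn (hV : IsKineticCost V) (hf : Continuous f) (hK : IsCompact K)
    (hne : K.Nonempty) (t z : ℝ) :
    ∃ x ∈ K, f x * Real.exp (-(t * V ((z - x) / t))) = hopfLaxOn V f K t z :=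
  (hopfLaxOn_isGreatest hV hf hK hne t z).1

lemma hopfLaxOn_pos (hV : IsKineticCost V) (hf : Continuous f) (hK : IsCompact K)
    (hpos : ∃ x ∈ K, 0 < f x) (t z : ℝ) : 0 < hopfLaxOn V f K t z := by
  obtain ⟨x, hx, hfx⟩ := hpos
  exact (mul_pos hfx (Real.exp_pos _)).trans_le (le_hopfLaxOn hV hf hK hx t z)

lemma IsKineticCost.locallyLipschitz_exp (hV : IsKineticCost V) (t : ℝ) :
    LocallyLipschitz fun u ↦ Real.exp (-(t * V (u / t))) := by
  have h₁ : ContDiff ℝ 1 fun s : ℝ ↦ Real.exp (-(t * s)) := by fun_prop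
  have h₂ : ContDiff ℝ 1 fun u : ℝ ↦ u / t := by fun_prop
  exact h₁.locallyLipschitz.comp (hV.locallyLipschitz.comp h₂.locallyLipschitz)

lemma locallyLipschitz_hopfLaxOn (hV : IsKineticCost V) (hf : Continuous f) (hK : IsCompact K)
    (hne : K.Nonempty) (t : ℝ) : LocallyLipschitz (hopfLaxOn V f K t) := by
  intro z₀
  have hcomp : IsCompact ((fun q : ℝ × ℝ ↦ q.1 - q.2) '' (Metric.closedBall z₀ 1 ×ˢ K)) :=
    ((isCompact_closedBall z₀ 1).prod hK).image (by fun_prop)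
  obtain ⟨C, hC⟩ :=
    (hV.locallyLipschitz_exp t).locallyLipschitzOn.exists_lipschitzOnWith_of_compact hcomp
  obtain ⟨M, hM⟩ := hK.exists_bound_of_continuousOn hf.continuousOn
  refine ⟨M.toNNReal * C, Metric.closedBall z₀ 1, Metric.closedBall_mem_nhds z₀ one_pos,
    LipschitzOnWith.of_le_add_mul _ fun z hz z' hz' ↦ ?_⟩
  obtain ⟨x, hx, hxz⟩ := exists_eq_hopfLaxOn hV hf hK hne t z
  have h := hC.dist_le_mul (z - x) ⟨(z, x), ⟨hz, hx⟩, rfl⟩ (z' - x) ⟨(z', x), ⟨hz', hx⟩, rfl⟩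
  rw [dist_sub_right, Real.dist_eq] at h
  have hle := le_hopfLaxOn hV hf hK hx t z'
  have hfx : |f x| ≤ M.toNNReal := (hM x hx).trans (Real.le_coe_toNNReal M)
  have hprod : f x * Real.exp (-(t * V ((z - x) / t)))
      - f x * Real.exp (-(t * V ((z' - x) / t))) ≤ M.toNNReal * (C * dist z z') := by
    rw [← mul_sub]
    refine (le_abs_self _).trans ?_
    rw [abs_mul]
    exact mul_le_mul hfx h (abs_nonneg _) (NNReal.coe_nonneg _)
  push_cast
  linarith

lemma continuous_hopfLaxOn (hV : IsKineticCost V) (hf : Continuous f)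
    (hK : IsCompact K) (hne : K.Nonempty) (t : ℝ) : Continuous (hopfLaxOn V f K t) :=
  (locallyLipschitz_hopfLaxOn hV hf hK hne t).continuous

/-- The semigroup inequality. -/
lemma hopfLaxOn_mul_exp_le (hV : IsKineticCost V) (hf : Continuous f) (hf₀ : ∀ x, 0 ≤ f x)
    (hK : IsCompact K) (hne : K.Nonempty) {a : ℝ} (ht : 0 < t) (ha : 0 < a) (x y : ℝ) :
    hopfLaxOn V f K t x * Real.exp (-(a * V y)) ≤ hopfLaxOn V f K (t + a) (x + a * y) := by
  obtain ⟨x₀, hx₀, h⟩ := exists_eq_hopfLaxOn hV hf hK hne t x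
  refine le_trans ?_ (le_hopfLaxOn hV hf hK hx₀ (t + a) (x + a * y))
  rw [← h, mul_assoc, ← Real.exp_add]
  refine mul_le_mul_of_nonneg_left (Real.exp_le_exp.2 ?_) (hf₀ x₀)
  have hconv := hV.convexOn.2 (mem_univ ((x - x₀) / t)) (mem_univ y)
    (show 0 ≤ t / (t + a) by positivity) (show 0 ≤ a / (t + a) by positivity)
    (by field_simp)
  simp only [smul_eq_mul] at hconv
  have e₁ : t / (t + a) * ((x - x₀) / t) + a / (t + a) * y = (x + a * y - x₀) / (t + a) := by
    field_simp
    ring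
  have e₂ : (t + a) * (t / (t + a) * V ((x - x₀) / t) + a / (t + a) * V y)
      = t * V ((x - x₀) / t) + a * V y := by field_simp
  rw [e₁] at hconv
  have := mul_le_mul_of_nonneg_left hconv (show 0 ≤ t + a by positivity)
  linarith

/-- The smallest optimal starting point depends monotonically on the end point. -/
lemma exists_monotone_optimal (hV : IsKineticCost V) (hf : Continuous f) (hf₀ : ∀ x, 0 ≤ f x)
    (hK : IsCompact K) (hpos : ∃ x ∈ K, 0 < f x) (ht : 0 < t) :
    ∃ X : ℝ → ℝ, Monotone X ∧ ∀ z, X z ∈ K ∧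
      f (X z) * Real.exp (-(t * V ((z - X z) / t))) = hopfLaxOn V f K t z := by
  have hne : K.Nonempty := hpos.imp fun _ h ↦ h.1
  have hc := hV.continuous
  have hleast : ∀ z, ∃ x, IsLeast
      (K ∩ {x | f x * Real.exp (-(t * V ((z - x) / t))) = hopfLaxOn V f K t z}) x := fun z ↦
    (hK.inter_right (isClosed_eq (by fun_prop) continuous_const)).exists_isLeast
      (exists_eq_hopfLaxOn hV hf hK hne t z)
  choose X hX using hleast
  refine ⟨X, fun z z' hzz' ↦ ?_, fun z ↦ (hX z).1⟩
  rcases hzz'.eq_or_lt with rfl | hlt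
  · exact le_rfl
  by_contra! hX'
  have hfpos : 0 < f (X z') := by
    refine (hf₀ _).lt_of_ne fun h ↦ (hopfLaxOn_pos hV hf hK hpos t z').ne ?_
    rw [← (hX z').1.2, ← h, zero_mul]
  have h₁ := le_hopfLaxOn hV hf hK (hX z).1.1 t z'
  have hconv := hV.add_le_add_of_convex (u := (z - X z) / t) (div_pos (sub_pos.2 hX') ht)
    (div_pos (sub_pos.2 hlt) ht)
  rw [show (z - X z) / t + (X z - X z') / t = (z - X z') / t by ring,
    show (z - X z) / t + (z' - z) / t = (z' - X z) / t by ring,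
    show (z - X z') / t + (z' - z) / t = (z' - X z') / t by ring] at hconv
  have hmem : X z' ∈ K ∩ {x | f x * Real.exp (-(t * V ((z - x) / t))) = hopfLaxOn V f K t z} := by
    refine ⟨(hX z').1.1, le_antisymm (le_hopfLaxOn hV hf hK (hX z').1.1 t z) ?_⟩
    rw [← (hX z').1.2] at h₁
    rw [← (hX z).1.2]
    have h₂ : f (X z) ≤ f (X z') * Real.exp (t * V ((z' - X z) / t) - t * V ((z' - X z') / t)) := by
      rw [sub_eq_neg_add, Real.exp_add, ← mul_assoc]
      rw [Real.exp_neg, ← div_eq_mul_inv] at h₁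
      exact (div_le_iff₀ (Real.exp_pos _)).1 h₁
    refine (mul_le_mul_of_nonneg_right h₂ (Real.exp_pos _).le).trans ?_
    rw [mul_assoc, ← Real.exp_add]
    refine mul_le_mul_of_nonneg_left (Real.exp_le_exp.2 ?_) hfpos.le
    have := mul_le_mul_of_nonneg_left hconv ht.le
    linarith
  exact absurd ((hX z).2 hmem) (not_le.2 hX')

end HopfLax

section Transport

variable {V f : ℝ → ℝ} {K : Set ℝ}

/-- The derivative of the optimal value along a differentiable curve of end points, by comparison
with the value obtained from a fixed optimal starting point. -/
lemma hasDerivAt_hopfLaxOn_comp_unique (hV : IsKineticCost V) (hf : Continuous f)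
    (hK : IsCompact K) {t : ℝ} (ht : 0 < t) {ζ : ℝ → ℝ} {m x ζ' B' : ℝ} (hx : x ∈ K)
    (hopt : f x * Real.exp (-(t * V ((ζ m - x) / t))) = hopfLaxOn V f K t (ζ m))
    (hne : (ζ m - x) / t ≠ 0) (hζ : HasDerivAt ζ ζ' m)
    (hB : HasDerivAt (fun s ↦ hopfLaxOn V f K t (ζ s)) B' m) :
    B' = -(hopfLaxOn V f K t (ζ m) * deriv V ((ζ m - x) / t) * ζ') := by
  have hVd := (hV.differentiableAt _ hne).hasDerivAt
  have hcost := HasDerivAt.comp m hVd ((hζ.sub_const x).div_const t)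
  have hval := (((hcost.const_mul t).neg).exp).const_mul (f x)
  have hmin : IsLocalMin (fun s ↦ hopfLaxOn V f K t (ζ s)
      - f x * Real.exp (-(t * V ((ζ s - x) / t)))) m := by
    refine Eventually.of_forall fun s ↦ ?_
    simp only [hopt, sub_self]
    exact sub_nonneg.2 (le_hopfLaxOn hV hf hK hx t (ζ s))
  have h := hmin.hasDerivAt_eq_zero (hB.sub hval)
  rw [← hopt]
  simp only [Function.comp_apply, Pi.neg_apply] at h
  have e : t * (deriv V ((ζ m - x) / t) * (ζ' / t)) = deriv V ((ζ m - x) / t) * ζ' := by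
    field_simp
  rw [e] at h
  linarith

lemma LocallyLipschitz.hasDerivAt_comp_zero {B ζ : ℝ → ℝ} {m : ℝ} (hB : LocallyLipschitz B)
    (hζ : HasDerivAt ζ 0 m) : HasDerivAt (fun s ↦ B (ζ s)) 0 m := by
  obtain ⟨C, u, hu, hC⟩ := hB (ζ m)
  rw [hasDerivAt_iff_isLittleO] at hζ ⊢
  simp only [smul_zero, sub_zero] at hζ ⊢
  refine Asymptotics.IsBigO.trans_isLittleO (Asymptotics.IsBigO.of_bound C ?_) hζ
  have hcont : ContinuousAt ζ m := by
    have h := hζ.tendsto_zero_of_tendsto (tendsto_sub_nhds_zero_iff.2 tendsto_id)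
    exact tendsto_sub_nhds_zero_iff.1 h
  filter_upwards [hcont hu] with s hs
  simpa [dist_eq_norm] using hC.dist_le_mul _ hs _ (mem_of_mem_nhds hu)

/-- The algebraic core of the transport inequality. -/
lemma transport_inequality {a b v g B h x' z' y' B' A D : ℝ} (ha : 0 < a) (hb : 0 < b)
    (hv : 0 ≤ v) (hB : 0 ≤ B) (hx' : 0 ≤ x') (hz' : 0 ≤ z')
    (hsum : b * x' + a * z' = a + b) (hdiff : x' = z' - (a + b) * y')
    (hh : g * Real.exp (-(a * v)) ≤ h) (hg : g ≤ B * Real.exp ((a + b) * v))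
    (hg' : z' ≠ 0 → g = B * Real.exp ((a + b) * v))
    (hB₀ : z' = 0 → B' = 0)
    (hB' : z' ≠ 0 → v = 0 ∧ A = 0 ∨ B' = -(B * D * z') ∧
      b * Real.exp ((a + b) * v) + a - (a + b) * Real.exp (b * v) ≤ (a + b) * D * A) :
    b * (g * x') + a * (B * z')
      + (a + b) * (B' * A + B * (b * (Real.exp ((a + b) * v) - Real.exp (b * v)) * y'))
      ≤ (a + b) * h := by
  have hexp : Real.exp ((a + b) * v) * Real.exp (-(a * v)) = Real.exp (b * v) := by
    rw [← Real.exp_add]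
    ring_nf
  have hle : Real.exp (-(a * v)) ≤ 1 := Real.exp_le_one_iff.2 (by nlinarith)
  have hT := mul_le_mul_of_nonneg_left hh (show 0 ≤ a + b by linarith)
  refine le_trans ?_ hT
  by_cases hz : z' = 0
  · subst hz
    rw [hB₀ rfl]
    have h₁ : 0 ≤ b * x' * ((B * Real.exp ((a + b) * v) - g) * (1 - Real.exp (-(a * v)))) :=
      mul_nonneg (mul_nonneg hb.le hx') (mul_nonneg (by linarith) (by linarith))
    rw [← hexp]
    have e : (a + b) * y' = -x' := by linarith
    have e' : a + b = b * x' := by linarith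
    calc _ = b * (g * x') + B * (b * (Real.exp ((a + b) * v)
          - Real.exp ((a + b) * v) * Real.exp (-(a * v)))) * ((a + b) * y') := by ring
      _ ≤ b * x' * (g * Real.exp (-(a * v))) := by
        rw [e]
        linarith
      _ = _ := by rw [← e']
  · have hg'' := hg' hz
    have hR : (a + b) * (g * Real.exp (-(a * v))) = (b * x' + a * z') * (B * Real.exp (b * v)) := by
      rw [hg'', hsum, mul_assoc B, hexp]
    rw [hR, hg'']
    have key : (a + b) * (B' * A) ≤ -(B * z'
        * (b * Real.exp ((a + b) * v) + a - (a + b) * Real.exp (b * v))) := by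
      rcases hB' hz with ⟨hv0, hA⟩ | ⟨hB'', hN⟩
      · simp [hv0, hA, add_comm]
      · rw [hB'']
        have := mul_le_mul_of_nonneg_left hN (mul_nonneg hB hz')
        linarith
    have e : (a + b) * y' = z' - x' := by linarith
    calc _ = b * (B * Real.exp ((a + b) * v) * x') + a * (B * z') + (a + b) * (B' * A)
          + B * (b * (Real.exp ((a + b) * v) - Real.exp (b * v))) * ((a + b) * y') := by ring
      _ ≤ _ := by
        rw [e]
        linarith

lemma LocallyLipschitz.absolutelyContinuousOnInterval {φ : ℝ → ℝ} (hφ : LocallyLipschitz φ)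
    (c d : ℝ) : AbsolutelyContinuousOnInterval φ c d := by
  obtain ⟨C, hC⟩ := (hφ.locallyLipschitzOn (s := uIcc c d)).exists_lipschitzOnWith_of_compact
    isCompact_uIcc
  exact hC.absolutelyContinuousOnInterval

lemma AbsolutelyContinuousOnInterval.sub_le_integral {φ h : ℝ → ℝ} {c d : ℝ} (hcd : c ≤ d)
    (hφ : AbsolutelyContinuousOnInterval φ c d) (hh : IntervalIntegrable h volume c d)
    (hle : ∀ᵐ m, m ∈ uIcc c d → deriv φ m ≤ h m) : φ d - φ c ≤ ∫ m in c..d, h m := by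
  rw [← hφ.integral_deriv_eq_sub]
  refine intervalIntegral.integral_mono_ae_restrict hcd hφ.intervalIntegrable_deriv hh ?_
  rw [uIcc_of_le hcd] at hle
  exact (ae_restrict_iff' measurableSet_Icc).2 hle

/-- Concavity in time of the integral, for starting points in a compact interval. -/
lemma integral_hopfLaxOn_concave (hV : IsKineticCost V) (hf : Continuous f)
    (hf₀ : ∀ x, 0 ≤ f x) {n : ℝ} (hpos : ∃ x ∈ Icc (-n) n, 0 < f x)
    {t a b : ℝ} (ht : 0 < t) (ha : 0 < a) (hb : 0 < b)
    (hint : ∀ s, 0 < s → Integrable (hopfLaxOn V f (Icc (-n) n) s)) :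
    b * (∫ z, hopfLaxOn V f (Icc (-n) n) t z)
      + a * (∫ z, hopfLaxOn V f (Icc (-n) n) (t + (a + b)) z)
      ≤ (a + b) * ∫ z, hopfLaxOn V f (Icc (-n) n) (t + a) z := by
  set K := Icc (-n) n with hKdef
  have hK : IsCompact K := isCompact_Icc
  have hne : K.Nonempty := hpos.imp fun _ h ↦ h.1
  set T := t + (a + b) with hT
  have hT₀ : 0 < T := by positivity
  set g := hopfLaxOn V f K t with hg
  set B := hopfLaxOn V f K T with hBdef
  have hBlip : LocallyLipschitz B := locallyLipschitz_hopfLaxOn hV hf hK hne T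
  have hgc : Continuous g := continuous_hopfLaxOn hV hf hK hne t
  have hhc : Continuous (hopfLaxOn V f K (t + a)) :=
    continuous_hopfLaxOn hV hf hK hne (t + a)
  have hBc := hBlip.continuous
  obtain ⟨X, hXmono, hX⟩ := exists_monotone_optimal hV hf hf₀ hK hpos hT₀
  have hμ₀ : 0 < (t + a) / T := by positivity
  have hμ₁ : (t + a) / T < 1 := by
    rw [div_lt_one hT₀]
    linarith
  obtain ⟨ζ, ξ, hζmono, hξmono, hξmem, hrel, hdich⟩ :=
    hXmono.exists_graph_parametrization (fun z ↦ (hX z).1) hμ₀ hμ₁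
  have hrel' : ∀ m, b * ξ m + (t + a) * ζ m = T * m := by
    intro m
    rw [← congrArg (T * ·) (hrel m)]
    field_simp
    rw [hT]
    ring
  have hopt : ∀ m, (∀ᶠ m' in 𝓝[>] m, ζ m' = ζ m) ∨ (ξ m ∈ K ∧
      f (ξ m) * Real.exp (-(T * V ((ζ m - ξ m) / T))) = B (ζ m)) := by
    refine fun m ↦ (hdich m).imp_right fun hm ↦ ?_
    have hc := hV.continuous
    have hclosed : IsClosed {q : ℝ × ℝ | q.2 ∈ K ∧
        f q.2 * Real.exp (-(T * V ((q.1 - q.2) / T))) = B q.1} :=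
      (hK.isClosed.preimage continuous_snd).inter (isClosed_eq (by fun_prop) (by fun_prop))
    exact closure_minimal (by rintro _ ⟨s, rfl⟩; exact hX s) hclosed hm
  have hζlip : LocallyLipschitz ζ := by
    refine (lipschitzWith_of_monotone_of_monotone_sub (c := (T / (t + a)).toNNReal) hζmono
      fun m m' hm ↦ ?_).locallyLipschitz
    rw [Real.coe_toNNReal _ (by positivity)]
    have e : ∀ m, T / (t + a) * m - ζ m = b / (t + a) * ξ m := by
      intro m
      have := hrel' m
      field_simp
      linarith
    simp only [e]
    exact mul_le_mul_of_nonneg_left (hξmono hm) (by positivity)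
  have hξlip : LocallyLipschitz ξ := by
    refine (lipschitzWith_of_monotone_of_monotone_sub (c := (T / b).toNNReal) hξmono
      fun m m' hm ↦ ?_).locallyLipschitz
    rw [Real.coe_toNNReal _ (by positivity)]
    have e : ∀ m, T / b * m - ξ m = (t + a) / b * ζ m := by
      intro m
      have := hrel' m
      field_simp
      linarith
    simp only [e]
    exact mul_le_mul_of_nonneg_left (hζmono hm) (by positivity)
  set y : ℝ → ℝ := fun m ↦ (ζ m - ξ m) / T with hy
  set x : ℝ → ℝ := fun m ↦ ξ m + t * y m with hx
  have hylip : LocallyLipschitz y := by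
    have h : ContDiff ℝ 1 fun q : ℝ × ℝ ↦ (q.1 - q.2) / T := by fun_prop
    exact h.locallyLipschitz.comp (hζlip.prodMk hξlip)
  have hxlip : LocallyLipschitz x := by
    have h : ContDiff ℝ 1 fun q : ℝ × ℝ ↦ q.1 + t * q.2 := by fun_prop
    exact h.locallyLipschitz.comp (hξlip.prodMk hylip)
  have hxm : ∀ m, x m + a * y m = m := by
    intro m
    have := hrel' m
    simp only [hx, hy]
    field_simp
    linarith
  have hxζ : ∀ m, x m + (a + b) * y m = ζ m := by
    intro m
    simp only [hx, hy]
    field_simp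
    rw [hT]
    ring
  set Φ : ℝ → ℝ := fun m ↦ b * (∫ v in (0 : ℝ)..x m, g v) + a * (∫ v in (0 : ℝ)..ζ m, B v)
    + (a + b) * (B (ζ m) * costPotential V a b (y m)) with hΦ
  have hBζac : ∀ c d, AbsolutelyContinuousOnInterval (fun m ↦ B (ζ m)) c d :=
    (hBlip.comp hζlip).absolutelyContinuousOnInterval
  have hΦac : ∀ c d, AbsolutelyContinuousOnInterval Φ c d := by
    intro c d
    have h₁ := ((locallyLipschitz_primitive hgc).comp hxlip).absolutelyContinuousOnInterval c d
    have h₂ := ((locallyLipschitz_primitive hBc).comp hζlip).absolutelyContinuousOnInterval c d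
    have h₃ := ((locallyLipschitz_costPotential (a := a) (b := b)
      hV).comp hylip).absolutelyContinuousOnInterval c d
    exact ((h₁.const_mul b).add (h₂.const_mul a)).add (((hBζac c d).mul h₃).const_mul (a + b))
  have hderiv : ∀ c d, ∀ᵐ m, m ∈ uIcc c d → deriv Φ m ≤ (a + b) * hopfLaxOn V f K (t + a) m := by
    intro c d
    filter_upwards [hζmono.ae_differentiableAt, hξmono.ae_differentiableAt,
      (hBζac c d).ae_differentiableAt] with m hζd hξd hBd hm
    have hζ' := hζd.hasDerivAt
    have hξ' := hξd.hasDerivAt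
    have hB' := (hBd hm).hasDerivAt
    have hy' : HasDerivAt y ((deriv ζ m - deriv ξ m) / T) m := (hζ'.sub hξ').div_const T
    have hx' := hξ'.add (hy'.const_mul t)
    have hΦ' := (((HasDerivAt.comp m (hasDerivAt_primitive hgc (x m)) hx').const_mul b).add
      ((HasDerivAt.comp m (hasDerivAt_primitive hBc (ζ m)) hζ').const_mul a)).add
      ((hB'.mul (HasDerivAt.comp m (hasDerivAt_costPotential (a := a) (b := b) hV (y m))
        hy')).const_mul (a + b))
    have hζ'₀ : 0 ≤ deriv ζ m := hζmono.deriv_nonneg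
    have hξ'₀ : 0 ≤ deriv ξ m := hξmono.deriv_nonneg
    have hrelderiv : b * deriv ξ m + (t + a) * deriv ζ m = T := by
      have h₁ := (hξ'.const_mul b).add (hζ'.const_mul (t + a))
      have h₂ : HasDerivAt (fun s ↦ T * s) T m := by simpa using (hasDerivAt_id m).const_mul T
      exact h₁.unique (h₂.congr_of_eventuallyEq (Eventually.of_forall hrel'))
    have hopt' : deriv ζ m ≠ 0 → ξ m ∈ K ∧
        f (ξ m) * Real.exp (-(T * V (y m))) = B (ζ m) := by
      intro hne'
      refine (hopt m).resolve_left fun hconst ↦ hne' ?_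
      have h₁ : HasDerivWithinAt ζ 0 (Ioi m) m :=
        (hasDerivWithinAt_const m (Ioi m) (ζ m)).congr_of_eventuallyEq hconst rfl
      exact (uniqueDiffWithinAt_Ioi m).eq_deriv _ hζ'.hasDerivWithinAt h₁
    have hgle : g (x m) ≤ B (ζ m) * Real.exp ((a + b) * V (y m)) := by
      have h := hopfLaxOn_mul_exp_le hV hf hf₀ hK hne ht (add_pos ha hb) (x m) (y m)
      rw [hxζ, Real.exp_neg, ← div_eq_mul_inv] at h
      exact (div_le_iff₀ (Real.exp_pos _)).1 h
    rw [show deriv Φ m = _ from hΦ'.deriv]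
    refine transport_inequality (v := V (y m)) (D := deriv V (y m)) ha hb (hV.nonneg _)
      (hopfLaxOn_pos hV hf hK hpos T (ζ m)).le ?_ hζ'₀ ?_ ?_ ?_ hgle ?_ ?_ ?_
    · have e : deriv ξ m + t * ((deriv ζ m - deriv ξ m) / T)
          = (a + b) / T * deriv ξ m + t / T * deriv ζ m := by
        field_simp
        rw [hT]
        ring
      rw [e]
      positivity
    · have h := hrelderiv
      field_simp
      rw [hT] at h ⊢
      linear_combination (a + b) * h
    · field_simp
      rw [hT]
      ring
    · have h := hopfLaxOn_mul_exp_le hV hf hf₀ hK hne ht ha (x m) (y m)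
      rwa [hxm] at h
    · intro hne'
      refine le_antisymm hgle ?_
      obtain ⟨hmem, heq⟩ := hopt' hne'
      have h := le_hopfLaxOn hV hf hK hmem t (x m)
      have e : (x m - ξ m) / t = y m := by
        simp only [hx]
        field_simp
        ring
      rw [e] at h
      rw [← heq, mul_assoc, ← Real.exp_add]
      have e' : -(T * V (y m)) + (a + b) * V (y m) = -(t * V (y m)) := by
        rw [hT]
        ring
      rwa [e']
    · intro h0
      rw [h0] at hζ'
      exact hB'.unique (hBlip.hasDerivAt_comp_zero hζ')
    · intro hne'
      obtain ⟨hmem, heq⟩ := hopt' hne'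
      by_cases hy0 : y m = 0
      · left
        simp [hy0, hV.map_zero, costPotential_zero]
      · exact Or.inr ⟨hasDerivAt_hopfLaxOn_comp_unique hV hf hK hT₀ hmem heq hy0 hζ' hB',
          le_deriv_mul_costPotential hV ha hb hy0⟩
  have hζge : ∀ m, (T * m - b * n) / (t + a) ≤ ζ m := by
    intro m
    have h₁ := hrel' m
    have h₂ := mul_le_mul_of_nonneg_left (hξmem m).2 hb.le
    rw [div_le_iff₀ (by positivity)]
    linarith
  have hζle : ∀ m, ζ m ≤ (T * m + b * n) / (t + a) := by
    intro m
    have h₁ := hrel' m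
    have h₂ := mul_le_mul_of_nonneg_left (hξmem m).1 hb.le
    rw [le_div_iff₀ (by positivity)]
    linarith
  have hζtop : Tendsto ζ atTop atTop := by
    refine tendsto_atTop_mono hζge (Tendsto.atTop_div_const (by positivity) ?_)
    exact tendsto_atTop_add_const_right _ _ (tendsto_id.const_mul_atTop hT₀)
  have hζbot : Tendsto ζ atBot atBot := by
    refine tendsto_atBot_mono hζle (Tendsto.atBot_div_const (by positivity) ?_)
    exact tendsto_atBot_add_const_right _ _ (tendsto_id.const_mul_atBot hT₀)
  have hxeq : ∀ m, x m = (a + b) / T * ξ m + t / T * ζ m := by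
    intro m
    simp only [hx, hy]
    field_simp
    rw [hT]
    ring
  have hxtop : Tendsto x atTop atTop := by
    rw [funext hxeq]
    exact tendsto_atTop_add_left_of_le _ _
      (fun m ↦ mul_le_mul_of_nonneg_left (hξmem m).1 (by positivity))
      (hζtop.const_mul_atTop (by positivity))
  have hxbot : Tendsto x atBot atBot := by
    rw [funext hxeq]
    exact tendsto_atBot_add_left_of_ge _ _
      (fun m ↦ mul_le_mul_of_nonneg_left (hξmem m).2 (by positivity))
      (hζbot.const_mul_atBot (by positivity))
  have hlim₁ := (intervalIntegral_tendsto_integral (hint t ht)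
    (hxbot.comp tendsto_neg_atTop_atBot) hxtop).const_mul b
  have hlim₂ := (intervalIntegral_tendsto_integral (hint T hT₀)
    (hζbot.comp tendsto_neg_atTop_atBot) hζtop).const_mul a
  have hlim₃ := (intervalIntegral_tendsto_integral (hint (t + a) (by positivity))
    tendsto_neg_atTop_atBot tendsto_id).const_mul (a + b)
  refine le_of_tendsto_of_tendsto (hlim₁.add hlim₂) hlim₃ ?_
  filter_upwards [eventually_ge_atTop 0, hζtop.eventually_ge_atTop n,
    (hζbot.comp tendsto_neg_atTop_atBot).eventually_le_atBot (-n)] with R hR hRtop hRbot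
  have h := (hΦac (-R) R).sub_le_integral (by linarith)
    ((hhc.const_mul (a + b)).intervalIntegrable _ _) (hderiv (-R) R)
  rw [intervalIntegral.integral_const_mul] at h
  have hA₁ : 0 ≤ (a + b) * (B (ζ R) * costPotential V a b (y R)) := by
    refine mul_nonneg (by positivity) (mul_nonneg (hopfLaxOn_pos hV hf hK hpos T _).le
      (costPotential_nonneg hV ha hb (div_nonneg ?_ hT₀.le)))
    linarith [(hξmem R).2]
  have hA₂ : (a + b) * (B (ζ (-R)) * costPotential V a b (y (-R))) ≤ 0 := by
    refine mul_nonpos_of_nonneg_of_nonpos (by positivity) (mul_nonpos_of_nonneg_of_nonpos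
      (hopfLaxOn_pos hV hf hK hpos T _).le
      (costPotential_nonpos hV ha hb (div_nonpos_of_nonpos_of_nonneg ?_ hT₀.le)))
    simp only [Function.comp_apply] at hRbot
    linarith [(hξmem (-R)).1]
  have e₁ := intervalIntegral.integral_interval_sub_left
    (hgc.intervalIntegrable (μ := volume) 0 (x R)) (hgc.intervalIntegrable 0 (x (-R)))
  have e₂ := intervalIntegral.integral_interval_sub_left
    (hBc.intervalIntegrable (μ := volume) 0 (ζ R)) (hBc.intervalIntegrable 0 (ζ (-R)))
  simp only [Function.comp_apply, id]
  rw [← e₁, ← e₂]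
  simp only [hΦ] at h
  linarith

end Transport

/-- Theorem B, case γ = 0: concavity in time of the integral of the
log-Hopf-Lax supremal convolution with kinetic cost `|y|^p/p`. -/
theorem hopf_lax_integral_concave_gamma_zero
    (p : ℝ) (hp : 1 ≤ p)
    (f : ℝ → ℝ) (hf0 : ∀ x, 0 ≤ f x) (hfb : ∃ M, ∀ x, f x ≤ M)
    (hflip : ∃ K, LipschitzWith K f) (hfne : ∃ x, 0 < f x)
    (h : ℝ → ℝ → ℝ)
    (hh : ∀ t, 0 < t → ∀ z, h t z = sSup {v : ℝ | ∃ x y : ℝ, z = x + t * y ∧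
      v = f x * Real.exp (-(t * (|y| ^ p / p)))})
    (hint : ∀ t, 0 < t → Integrable (h t))
    (F : ℝ → ℝ) (hF : ∀ t, F t = ∫ z, h t z) :
    ConcaveOn ℝ (Ioi 0) F := by
  set V : ℝ → ℝ := fun y ↦ |y| ^ p / p with hVdef
  have hV : IsKineticCost V := isKineticCost_abs_rpow_div hp
  obtain ⟨L, hL⟩ := hflip
  have hf := hL.continuous
  obtain ⟨M, hM⟩ := hfb
  obtain ⟨x₀, hx₀⟩ := hfne
  have hset : ∀ t, 0 < t → ∀ z, {v : ℝ | ∃ x y : ℝ, z = x + t * y ∧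
      v = f x * Real.exp (-(t * (|y| ^ p / p)))}
      = range fun x ↦ f x * Real.exp (-(t * V ((z - x) / t))) := by
    intro t ht z
    ext v
    constructor
    · rintro ⟨x, y, rfl, rfl⟩
      refine ⟨x, ?_⟩
      have e : (x + t * y - x) / t = y := by field_simp; ring
      simp only [e, hVdef]
    · rintro ⟨x, rfl⟩
      refine ⟨x, (z - x) / t, ?_, rfl⟩
      field_simp
      ring
  have hlub : ∀ t, 0 < t → ∀ z,
      IsLUB (range fun x ↦ f x * Real.exp (-(t * V ((z - x) / t)))) (h t z) := by
    intro t ht z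
    rw [hh t ht z, hset t ht z]
    refine isLUB_csSup (range_nonempty _) ⟨M, ?_⟩
    rintro _ ⟨x, rfl⟩
    have h₁ : Real.exp (-(t * V ((z - x) / t))) ≤ 1 :=
      Real.exp_le_one_iff.2 (neg_nonpos.2 (mul_nonneg ht.le (hV.nonneg _)))
    exact (mul_le_of_le_one_right (hf0 x) h₁).trans (hM x)
  set H : ℕ → ℝ → ℝ → ℝ := fun n t z ↦ hopfLaxOn V f (Icc (-(n : ℝ)) n) t z with hH
  have hne : ∀ n : ℕ, (Icc (-(n : ℝ)) n).Nonempty := fun n ↦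
    nonempty_Icc.2 (neg_le_self n.cast_nonneg)
  have hHle : ∀ n t, 0 < t → ∀ z, H n t z ≤ h t z := by
    intro n t ht z
    obtain ⟨x, -, hx⟩ := exists_eq_hopfLaxOn hV hf isCompact_Icc (hne n) t z
    exact hx.symm.trans_le ((hlub t ht z).1 (mem_range_self x))
  have hH0 : ∀ n t z, 0 ≤ H n t z := by
    intro n t z
    obtain ⟨x, -, hx⟩ := exists_eq_hopfLaxOn hV hf isCompact_Icc (hne n) t z
    exact (mul_nonneg (hf0 x) (Real.exp_pos _).le).trans_eq hx
  have hHmeas : ∀ n t, AEStronglyMeasurable (H n t) := fun n t ↦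
    (continuous_hopfLaxOn hV hf isCompact_Icc (hne n) t).aestronglyMeasurable
  have hHnorm : ∀ n t, 0 < t → ∀ z, ‖H n t z‖ ≤ h t z := fun n t ht z ↦ by
    rw [Real.norm_of_nonneg (hH0 n t z)]
    exact hHle n t ht z
  have hHint : ∀ n t, 0 < t → Integrable (H n t) := fun n t ht ↦
    (hint t ht).mono' (hHmeas n t) (Eventually.of_forall (hHnorm n t ht))
  have hHlim : ∀ t, 0 < t → ∀ z, Tendsto (fun n ↦ H n t z) atTop (𝓝 (h t z)) := by
    intro t ht z
    refine tendsto_order.2 ⟨fun c hc ↦ ?_, fun c hc ↦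
      Eventually.of_forall fun n ↦ (hHle n t ht z).trans_lt hc⟩
    obtain ⟨_, ⟨x, rfl⟩, hcx, -⟩ := (hlub t ht z).exists_between hc
    filter_upwards [tendsto_natCast_atTop_atTop.eventually_ge_atTop |x|] with n hn
    exact hcx.trans_le (le_hopfLaxOn hV hf isCompact_Icc (abs_le.1 hn) t z)
  have hFlim : ∀ t, 0 < t → Tendsto (fun n ↦ ∫ z, H n t z) atTop (𝓝 (F t)) := by
    intro t ht
    rw [hF t]
    exact tendsto_integral_of_dominated_convergence (h t) (fun n ↦ hHmeas n t) (hint t ht)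
      (fun n ↦ Eventually.of_forall (hHnorm n t ht)) (Eventually.of_forall (hHlim t ht))
  refine LinearOrder.concaveOn_of_lt (convex_Ioi 0) fun s hs t ht hst α β hα hβ hαβ ↦ ?_
  simp only [smul_eq_mul, mem_Ioi] at hs ht ⊢
  have hd : 0 < t - s := sub_pos.2 hst
  have hmid : s + β * (t - s) = α * s + β * t := by linear_combination (-s) * hαβ
  refine le_of_tendsto_of_tendsto (((hFlim s hs).const_mul α).add ((hFlim t ht).const_mul β))
    (hFlim _ (by positivity)) ?_
  filter_upwards [tendsto_natCast_atTop_atTop.eventually_ge_atTop |x₀|] with n hn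
  have key := integral_hopfLaxOn_concave hV hf hf0 ⟨x₀, abs_le.1 hn, hx₀⟩ hs
    (mul_pos hβ hd) (mul_pos hα hd) (hHint n)
  have e : β * (t - s) + α * (t - s) = t - s := by linear_combination (t - s) * hαβ
  rw [e, hmid, add_sub_cancel] at key
  refine le_of_mul_le_mul_left ?_ hd
  simp only [hH]
  linarith
end

section
/- Let μ be a Borel measure on ℝ with a continuous density ψ : ℝ → [0,∞) with respect to Lebesgue measure, let A ⊆ ℝ be a nonempty compact set, and let V(t) = μ(A + t·[-1,1]). Let s ∈ (0,1] and let t₀ > 0 with V(t₀) > 0. Then the function t ↦ V(t)^s has a left derivative L at t₀ (a derivative within (-∞, t₀]) and a right derivative R at t₀ (a derivative within [t₀, ∞)), and L ≥ R. -/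
open MeasureTheory Set Pointwise

open Filter Topology

lemma mem_add_smul_Icc_iff {A : Set ℝ} {t x : ℝ} (ht : 0 ≤ t) :
    x ∈ A + t • Icc (-1 : ℝ) 1 ↔ ∃ a ∈ A, |x - a| ≤ t := by
  have hIcc : t • Icc (-1 : ℝ) 1 = Metric.closedBall 0 t := by
    rw [← smul_unitClosedBall_of_nonneg ht, Real.closedBall_eq_Icc]
    norm_num
  rw [hIcc, Set.mem_add]
  constructor
  · rintro ⟨a, ha, y, hy, rfl⟩
    exact ⟨a, ha, by simpa using hy⟩
  · rintro ⟨a, ha, hxa⟩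
    exact ⟨a, ha, x - a, by simpa using hxa, by ring⟩

/-- The `t`-neighbourhoods of a compact set, for `t ≥ r > 0`, are those of a finite subset. -/
lemma IsCompact.exists_finset_add_smul_Icc_eq {A : Set ℝ} (hA : IsCompact A) {r : ℝ} (hr : 0 < r) :
    ∃ S : Finset ℝ, ∀ t, r ≤ t → A + t • Icc (-1 : ℝ) 1 = (S : Set ℝ) + t • Icc (-1 : ℝ) 1 := by
  have hextr : ∀ a ∈ A, ∃ l ∈ A, ∃ u ∈ A, u - l ≤ 2 * r ∧
      ∀ x ∈ A, |x - a| ≤ r → l ≤ x ∧ x ≤ u := by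
    intro a ha
    have hK : IsCompact (A ∩ Icc (a - r) (a + r)) := hA.inter_right isClosed_Icc
    have hne : (A ∩ Icc (a - r) (a + r)).Nonempty := ⟨a, ha, by constructor <;> linarith⟩
    obtain ⟨l, hl, hl'⟩ := hK.exists_isLeast hne
    obtain ⟨u, hu, hu'⟩ := hK.exists_isGreatest hne
    refine ⟨l, hl.1, u, hu.1, by linarith [hl.2.1, hu.2.2], fun x hx hxa => ?_⟩
    rw [abs_le] at hxa
    have hxK : x ∈ A ∩ Icc (a - r) (a + r) := ⟨hx, by constructor <;> linarith⟩
    exact ⟨hl' hxK, hu' hxK⟩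
  choose! l hl u hu hlu hbd using hextr
  obtain ⟨T, hT, hcover⟩ := hA.elim_nhds_subcover (fun a => Metric.closedBall a r)
    fun a _ => Metric.closedBall_mem_nhds a hr
  refine ⟨T.image l ∪ T.image u, fun t ht => ?_⟩
  have ht0 : 0 ≤ t := hr.le.trans ht
  ext x
  rw [mem_add_smul_Icc_iff ht0, mem_add_smul_Icc_iff ht0]
  constructor
  · rintro ⟨a, ha, hxa⟩
    obtain ⟨c, hc, hac⟩ := mem_iUnion₂.1 (hcover ha)
    have hcA := hT c hc
    obtain ⟨h₁, h₂⟩ := hbd c hcA a ha (by simpa [Real.dist_eq] using hac)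
    have h₃ := hlu c hcA
    rw [abs_le] at hxa
    by_cases hx : x - l c ≤ t
    · exact ⟨l c, by simp only [Finset.coe_union, Finset.coe_image]; exact Or.inl ⟨c, hc, rfl⟩,
        abs_le.2 ⟨by linarith, hx⟩⟩
    · exact ⟨u c, by simp only [Finset.coe_union, Finset.coe_image]; exact Or.inr ⟨c, hc, rfl⟩,
        abs_le.2 ⟨by linarith, by linarith⟩⟩
  · rintro ⟨a, ha, hxa⟩
    refine ⟨a, ?_, hxa⟩
    simp only [Finset.coe_union, Finset.coe_image] at ha
    rcases ha with ⟨c, hc, rfl⟩ | ⟨c, hc, rfl⟩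
    exacts [hl c (hT c hc), hu c (hT c hc)]

/-- `f` has one-sided derivatives at `x`, and the left one dominates the right one. -/
def HasConcaveKinkAt (f : ℝ → ℝ) (x : ℝ) : Prop :=
  ∃ L R : ℝ, HasDerivWithinAt f L (Iic x) x ∧ HasDerivWithinAt f R (Ici x) x ∧ R ≤ L

namespace HasConcaveKinkAt

variable {f g : ℝ → ℝ} {x : ℝ}

lemma of_hasDerivAt {f' : ℝ} (h : HasDerivAt f f' x) : HasConcaveKinkAt f x :=
  ⟨f', f', h.hasDerivWithinAt, h.hasDerivWithinAt, le_rfl⟩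

lemma add (hf : HasConcaveKinkAt f x) (hg : HasConcaveKinkAt g x) :
    HasConcaveKinkAt (fun t => f t + g t) x := by
  obtain ⟨L, R, hL, hR, h⟩ := hf
  obtain ⟨L', R', hL', hR', h'⟩ := hg
  exact ⟨L + L', R + R', hL.add hL', hR.add hR', add_le_add h h'⟩

lemma congr (hf : HasConcaveKinkAt f x) (h : g =ᶠ[𝓝 x] f) : HasConcaveKinkAt g x := by
  obtain ⟨L, R, hL, hR, hLR⟩ := hf
  exact ⟨L, R, hL.congr_of_eventuallyEq (h.filter_mono nhdsWithin_le_nhds) h.self_of_nhds,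
    hR.congr_of_eventuallyEq (h.filter_mono nhdsWithin_le_nhds) h.self_of_nhds, hLR⟩

lemma rpow_const (hf : HasConcaveKinkAt f x) (hx : 0 < f x) {s : ℝ} (hs : 0 ≤ s) :
    HasConcaveKinkAt (fun t => f t ^ s) x := by
  obtain ⟨L, R, hL, hR, h⟩ := hf
  refine ⟨_, _, hL.rpow_const (Or.inl hx.ne'), hR.rpow_const (Or.inl hx.ne'), ?_⟩
  gcongr

lemma min_zero_of_antitone {f' : ℝ} (hf : HasDerivAt f f' x) (hanti : Antitone f) :
    HasConcaveKinkAt (fun t => min (f t) 0) x := by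
  rcases lt_trichotomy (f x) 0 with h | h | h
  · refine (of_hasDerivAt hf).congr ?_
    filter_upwards [hf.continuousAt.eventually_lt_const h] with t ht using min_eq_left ht.le
  · refine ⟨0, f', ?_, ?_, ?_⟩
    · exact (hasDerivWithinAt_const x (Iic x) (0 : ℝ)).congr
        (fun t ht => min_eq_right (h ▸ hanti ht)) (by simp [h])
    · exact hf.hasDerivWithinAt.congr (fun t ht => min_eq_left (h ▸ hanti ht)) (by simp [h])
    · exact hf.deriv ▸ hanti.deriv_nonpos
  · refine (of_hasDerivAt (hasDerivAt_const x (0 : ℝ))).congr ?_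
    filter_upwards [hf.continuousAt.eventually_const_lt h] with t ht using min_eq_right ht.le

end HasConcaveKinkAt

section Density

variable {ψ : ℝ → ℝ}

lemma withDensity_real_Icc (hψc : Continuous ψ) (hψ0 : ∀ x, 0 ≤ ψ x) (a b : ℝ) :
    (volume.withDensity fun x => ENNReal.ofReal (ψ x)).real (Icc a b) =
      max ((∫ x in (0 : ℝ)..b, ψ x) - ∫ x in (0 : ℝ)..a, ψ x) 0 := by
  have hint := fun c d => hψc.intervalIntegrable (μ := volume) c d
  rw [intervalIntegral.integral_interval_sub_left (hint _ _) (hint _ _)]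
  rcases le_total a b with h | h
  · rw [max_eq_left (intervalIntegral.integral_nonneg h fun x _ => hψ0 x), measureReal_def,
      withDensity_apply _ measurableSet_Icc, ← integral_eq_lintegral_of_nonneg_ae
        (Eventually.of_forall hψ0) hψc.aestronglyMeasurable,
      integral_Icc_eq_integral_Ioc, intervalIntegral.integral_of_le h]
  · rw [intervalIntegral.integral_symm,
      max_eq_right (neg_nonpos.2 (intervalIntegral.integral_nonneg h fun x _ => hψ0 x)),
      measureReal_def, withDensity_apply _ measurableSet_Icc]
    rcases h.eq_or_lt with rfl | h
    · simp
    · simp [Icc_eq_empty_of_lt h]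

lemma finset_add_smul_Icc_hasConcaveKinkAt (hψc : Continuous ψ) (hψ0 : ∀ x, 0 ≤ ψ x)
    {t₀ : ℝ} (ht₀ : 0 < t₀) (S : Finset ℝ) :
    HasConcaveKinkAt (fun t => (volume.withDensity fun x => ENNReal.ofReal (ψ x)).real
      ((S : Set ℝ) + t • Icc (-1 : ℝ) 1)) t₀ := by
  set μ := volume.withDensity fun x => ENNReal.ofReal (ψ x)
  set Φ : ℝ → ℝ := fun y => ∫ x in (0 : ℝ)..y, ψ x
  have hIcc : ∀ a b, μ.real (Icc a b) = max (Φ b - Φ a) 0 := withDensity_real_Icc hψc hψ0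
  have hΦd : ∀ y, HasDerivAt Φ (ψ y) y := fun y =>
    intervalIntegral.integral_hasDerivAt_right (hψc.intervalIntegrable _ _)
      hψc.aestronglyMeasurable.stronglyMeasurableAtFilter hψc.continuousAt
  have hΦm : Monotone Φ := monotone_of_hasDerivAt_nonneg hΦd hψ0
  have hfin : ∀ a b, μ (Icc a b) ≠ ⊤ := fun a b => by
    have : IsLocallyFiniteMeasure μ := IsLocallyFiniteMeasure.withDensity_ofReal hψc
    exact isCompact_Icc.measure_ne_top
  have hd : ∀ a b, HasDerivAt (fun t => Φ (a + t) - Φ (b - t))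
      (ψ (a + t₀) + ψ (b - t₀)) t₀ := fun a b => by
    have h₁ := (hΦd (a + t₀)).comp_const_add a t₀
    have h₂ := (hΦd (b - t₀)).comp_const_sub b t₀
    exact (h₁.fun_sub h₂).congr_deriv (sub_neg_eq_add _ _)
  have hball : ∀ a, HasConcaveKinkAt (fun t => μ.real (Icc (a - t) (a + t))) t₀ := fun a => by
    refine (HasConcaveKinkAt.of_hasDerivAt (hd a a)).congr ?_
    filter_upwards [lt_mem_nhds ht₀] with t ht
    rw [hIcc, max_eq_left (sub_nonneg.2 (hΦm (by linarith)))]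
  induction S using Finset.induction_on_max with
  | empty => simpa using HasConcaveKinkAt.of_hasDerivAt (hasDerivAt_const t₀ (0 : ℝ))
  | insert a S hlt ih =>
    rcases S.eq_empty_or_nonempty with rfl | hne
    · refine (hball a).congr ?_
      filter_upwards [lt_mem_nhds ht₀] with t ht
      congr 1
      ext x
      rw [mem_add_smul_Icc_iff ht.le]
      simp [abs_le, and_comm, add_comm]
    · set b := S.max' hne
      have hba : b < a := hlt b (S.max'_mem hne)
      have hover : HasConcaveKinkAt (fun t => min (-(Φ (b + t) - Φ (a - t))) 0) t₀ :=
        HasConcaveKinkAt.min_zero_of_antitone (hd b a).neg fun t u htu =>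
          neg_le_neg (sub_le_sub (hΦm (by linarith)) (hΦm (by linarith)))
      refine ((ih.add (hball a)).add hover).congr ?_
      filter_upwards [lt_mem_nhds ht₀] with t ht
      have hunion : ((insert a S : Finset ℝ) : Set ℝ) + t • Icc (-1 : ℝ) 1 =
          ((S : Set ℝ) + t • Icc (-1 : ℝ) 1) ∪ Icc (a - t) (a + t) := by
        ext x
        rw [mem_union, mem_add_smul_Icc_iff ht.le, mem_add_smul_Icc_iff ht.le, mem_Icc]
        simp only [Finset.coe_insert, mem_insert_iff, exists_eq_or_imp, abs_le]
        rw [or_comm]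
        refine or_congr Iff.rfl ⟨fun h => ⟨by linarith, by linarith⟩,
          fun h => ⟨by linarith, by linarith⟩⟩
      have hinter : ((S : Set ℝ) + t • Icc (-1 : ℝ) 1) ∩ Icc (a - t) (a + t) =
          Icc (a - t) (b + t) := by
        ext x
        rw [mem_inter_iff, mem_add_smul_Icc_iff ht.le, mem_Icc, mem_Icc]
        constructor
        · rintro ⟨⟨c, hc, hxc⟩, hx⟩
          have := S.le_max' c hc
          rw [abs_le] at hxc
          exact ⟨hx.1, by linarith⟩
        · rintro ⟨h₁, h₂⟩
          exact ⟨⟨b, S.max'_mem hne, abs_le.2 ⟨by linarith, by linarith⟩⟩, h₁, by linarith⟩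
      have hSfin : μ ((S : Set ℝ) + t • Icc (-1 : ℝ) 1) ≠ ⊤ := by
        refine measure_ne_top_of_subset (fun x hx => ?_) (hfin (S.min' hne - t) (b + t))
        obtain ⟨c, hc, hxc⟩ := (mem_add_smul_Icc_iff ht.le).1 hx
        rw [abs_le] at hxc
        have h₁ := S.le_max' c hc
        have h₂ := S.min'_le c hc
        exact ⟨by linarith, by linarith⟩
      have key := measureReal_union_add_inter (μ := μ) (s := (S : Set ℝ) + t • Icc (-1 : ℝ) 1)
        (measurableSet_Icc (a := a - t) (b := a + t)) hSfin (hfin _ _)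
      rw [hinter, ← hunion, hIcc (a - t) (b + t)] at key
      have hneg : min (-(Φ (b + t) - Φ (a - t))) 0 = -max (Φ (b + t) - Φ (a - t)) 0 := by
        rw [← min_neg_neg, neg_zero]
      rw [hneg]
      linarith

end Density

/-- For a measure with continuous density on ℝ, the s-power of the parallel
μ-volume has one-sided derivatives at every t₀ > 0 with positive volume,
and the left derivative dominates the right one. -/
theorem parallel_volume_one_sided_derivatives
    (ψ : ℝ → ℝ) (hψc : Continuous ψ) (hψ0 : ∀ x, 0 ≤ ψ x)
    (A : Set ℝ) (hA : IsCompact A) (hAne : A.Nonempty)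
    (s : ℝ) (hs : s ∈ Ioc (0 : ℝ) 1) (t₀ : ℝ) (ht₀ : 0 < t₀)
    (hpos : 0 < ((volume.withDensity fun x => ENNReal.ofReal (ψ x))
      (A + t₀ • Icc (-1 : ℝ) 1)).toReal) :
    ∃ L R : ℝ,
      HasDerivWithinAt
        (fun t => ((volume.withDensity fun x => ENNReal.ofReal (ψ x))
          (A + t • Icc (-1 : ℝ) 1)).toReal ^ s) L (Iic t₀) t₀ ∧
      HasDerivWithinAt
        (fun t => ((volume.withDensity fun x => ENNReal.ofReal (ψ x))
          (A + t • Icc (-1 : ℝ) 1)).toReal ^ s) R (Ici t₀) t₀ ∧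
      R ≤ L := by
  obtain ⟨S, hS⟩ := hA.exists_finset_add_smul_Icc_eq (half_pos ht₀)
  refine HasConcaveKinkAt.rpow_const ?_ hpos hs.1.le
  refine (finset_add_smul_Icc_hasConcaveKinkAt hψc hψ0 ht₀ S).congr ?_
  filter_upwards [lt_mem_nhds (half_lt_self ht₀)] with t ht
  rw [hS t ht.le, measureReal_def]
end

section
/- Let s ∈ (1/2, 1), let γ = s/(1-s) (so γ > 1), let b = 10·(1 - 2^{(1-γ)/γ})^{-1}, let μ be the Borel measure on ℝ with density x ↦ x^{1/γ}·1_{[0,b]}(x) with respect to Lebesgue measure, and let A = [0,1] ∪ [2,b]. Then the function t ↦ μ(A + t·[-1,1]) is not s-concave on [0,∞): there exist t₁, t₂ ≥ 0 with μ(A + t₁·[-1,1])·μ(A + t₂·[-1,1]) > 0 and λ ∈ [0,1] such that μ(A + ((1-λ)t₁ + λt₂)·[-1,1]) < ((1-λ)·μ(A + t₁·[-1,1])^s + λ·μ(A + t₂·[-1,1])^s)^{1/s}. -/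
open MeasureTheory Set Pointwise

/-- A positive function whose `s`-th power has positive second derivative at the left endpoint of
an interval does not have a concave `s`-th power on that interval. -/
theorem not_concaveOn_rpow_of_second_deriv {H H' : ℝ → ℝ} {H'' s r : ℝ} (hs : 0 < s) (hr : 0 < r)
    (hH : ∀ t ∈ Icc 0 r, HasDerivAt H (H' t) t) (hH' : HasDerivAt H' H'' 0)
    (hpos : ∀ t ∈ Icc 0 r, 0 < H t) (h : (1 - s) * H' 0 ^ 2 < H 0 * H'') :
    ¬ ConcaveOn ℝ (Icc 0 r) fun t => H t ^ s := by
  intro hc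
  have h0 : (0 : ℝ) ∈ Icc 0 r := ⟨le_rfl, hr.le⟩
  have hφ : ∀ t ∈ Icc 0 r, HasDerivAt (fun t => H t ^ s) (H' t * s * H t ^ (s - 1)) t :=
    fun t ht => (hH t ht).rpow_const (Or.inl (hpos t ht).ne')
  have hφ' : HasDerivAt (fun t => H' t * s * H t ^ (s - 1))
      (H'' * s * H 0 ^ (s - 1) + H' 0 * s * (H' 0 * (s - 1) * H 0 ^ (s - 1 - 1))) 0 :=
    (hH'.mul_const s).mul ((hH 0 h0).rpow_const (Or.inl (hpos 0 h0).ne'))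
  have hH0 := hpos 0 h0
  have hd : 0 < H'' * s * H 0 ^ (s - 1) + H' 0 * s * (H' 0 * (s - 1) * H 0 ^ (s - 1 - 1)) := by
    have e : H 0 ^ (s - 1) = H 0 ^ (s - 1 - 1) * H 0 := by
      rw [Real.rpow_sub_one hH0.ne' (s - 1)]; field_simp
    have : 0 < s * H 0 ^ (s - 1 - 1) * (H 0 * H'' - (1 - s) * H' 0 ^ 2) :=
      mul_pos (mul_pos hs (Real.rpow_pos_of_pos hH0 _)) (by linarith)
    rw [e]
    linarith
  have hev := (hasDerivAt_iff_tendsto_slope.1 hφ').eventually (lt_mem_nhds hd)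
  rw [eventually_nhdsWithin_iff, Metric.eventually_nhds_iff] at hev
  obtain ⟨ε, hε, hev⟩ := hev
  have hm : 0 < min (ε / 2) r := lt_min (by linarith) hr
  have hsub : Icc 0 (min (ε / 2) r) ⊆ Icc 0 r := Icc_subset_Icc_right (min_le_right _ _)
  obtain ⟨c, hcm, hceq⟩ := exists_hasDerivAt_eq_slope (fun t => H t ^ s) _ hm
    (fun t ht => (hφ t (hsub ht)).continuousAt.continuousWithinAt)
    (fun t ht => hφ t (hsub (Ioo_subset_Icc_self ht)))
  have hle := hc.slope_le_of_hasDerivAt h0 (hsub ⟨hm.le, le_rfl⟩) hm (hφ 0 h0)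
  rw [slope_def_field, ← hceq] at hle
  have hlt := @hev c (by
    rw [Real.dist_eq, sub_zero, abs_of_pos hcm.1]
    linarith [hcm.2, min_le_left (ε / 2) r]) hcm.1.ne'
  rw [slope_def_field, sub_zero, div_pos_iff_of_pos_right hcm.1] at hlt
  linarith

theorem lintegral_Icc_rpow {a u v : ℝ} (ha : 0 ≤ a) (hu : 0 ≤ u) (huv : u ≤ v) :
    ∫⁻ x in Icc u v, ENNReal.ofReal (x ^ a)
      = ENNReal.ofReal ((v ^ (a + 1) - u ^ (a + 1)) / (a + 1)) := by
  have hint : IntervalIntegrable (fun x : ℝ => x ^ a) volume u v :=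
    intervalIntegral.intervalIntegrable_rpow (Or.inl ha)
  rw [← integral_rpow (Or.inl (by linarith)), intervalIntegral.integral_of_le huv,
    ← integral_Icc_eq_integral_Ioc, ofReal_integral_eq_lintegral_ofReal]
  · exact (intervalIntegrable_iff_integrableOn_Icc_of_le huv).1 hint
  · filter_upwards [ae_restrict_mem measurableSet_Icc] with x hx
    exact Real.rpow_nonneg (hu.trans hx.1) a

theorem Icc_union_Icc_add_smul {b t : ℝ} (hb : 2 ≤ b) (ht : 0 ≤ t) :
    (Icc (0 : ℝ) 1 ∪ Icc 2 b) + t • Icc (-1 : ℝ) 1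
      = Icc (-t) (1 + t) ∪ Icc (2 - t) (b + t) := by
  have hsm : t • Icc (-1 : ℝ) 1 = Icc (-t) t := by
    rcases ht.eq_or_lt with rfl | ht
    · rw [zero_smul_set ⟨0, by norm_num⟩, neg_zero, Icc_self, singleton_zero]
    · rw [← image_smul]
      simp only [smul_eq_mul]
      rw [image_mul_left_Icc' ht]; simp
  rw [hsm, union_add, Icc_add_Icc (by norm_num) (by linarith), Icc_add_Icc hb (by linarith)]
  simp [sub_eq_add_neg]

theorem withDensity_rpow_parallel_set {a b t : ℝ} (ha : 0 ≤ a) (hb : 2 ≤ b) (ht : 0 ≤ t)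
    (ht' : t ≤ 1 / 4) :
    (volume.withDensity (fun x => ENNReal.ofReal (if x ∈ Icc (0 : ℝ) b then x ^ a else 0))
      ((Icc (0 : ℝ) 1 ∪ Icc 2 b) + t • Icc (-1 : ℝ) 1)).toReal
      = ((1 + t) ^ (a + 1) - (2 - t) ^ (a + 1) + b ^ (a + 1)) / (a + 1) := by
  have hind : (fun x => ENNReal.ofReal (if x ∈ Icc (0 : ℝ) b then x ^ a else 0))
      = (Icc (0 : ℝ) b).indicator fun x => ENNReal.ofReal (x ^ a) := by
    ext x
    by_cases hx : x ∈ Icc (0 : ℝ) b <;> simp only [hx, indicator, if_true, if_false,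
      ENNReal.ofReal_zero]
  have hinter : Icc (0 : ℝ) b ∩ (Icc (-t) (1 + t) ∪ Icc (2 - t) (b + t))
      = Icc 0 (1 + t) ∪ Icc (2 - t) b := by
    rw [inter_union_distrib_left, Icc_inter_Icc, Icc_inter_Icc, sup_of_le_left (by linarith),
      inf_of_le_right (by linarith), sup_of_le_right (by linarith), inf_of_le_left (by linarith)]
  have hdisj : Disjoint (Icc 0 (1 + t)) (Icc (2 - t) b) :=
    disjoint_left.2 fun x hx hx' => by linarith [hx.2, hx'.1]
  have h2 : (2 - t) ^ (a + 1) ≤ b ^ (a + 1) :=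
    Real.rpow_le_rpow (by linarith) (by linarith) (by linarith)
  have h1 : 0 ≤ (1 + t) ^ (a + 1) := Real.rpow_nonneg (by linarith) _
  rw [Icc_union_Icc_add_smul hb ht, hind,
    withDensity_apply _ (measurableSet_Icc.union measurableSet_Icc),
    setLIntegral_indicator measurableSet_Icc, hinter,
    lintegral_union measurableSet_Icc hdisj, lintegral_Icc_rpow ha le_rfl (by linarith),
    lintegral_Icc_rpow ha (by linarith) (by linarith), Real.zero_rpow (by linarith),
    ← ENNReal.ofReal_add (by rw [sub_zero]; positivity)
      (div_nonneg (by linarith) (by linarith)), ENNReal.toReal_ofReal]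
  · ring
  · rw [sub_zero]
    exact add_nonneg (by positivity) (div_nonneg (by linarith) (by linarith))

/-- The numerical inequality expressing that the `s`-th power of the parallel volume has positive
second derivative at `0`. -/
theorem one_add_two_rpow_sq_lt {a b : ℝ} (ha : 0 < a) (ha1 : a < 1)
    (hb : b = 10 * (1 - (2 : ℝ) ^ (a - 1))⁻¹) :
    10 ≤ b ∧ (1 + (2 : ℝ) ^ a) ^ 2
      < (1 - 2 ^ (a + 1) + b ^ (a + 1)) * (1 - (2 : ℝ) ^ (a - 1)) := by
  have e1 : (2 : ℝ) ^ (a + 1) = 2 ^ a * 2 := Real.rpow_add_one (by norm_num) a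
  have e2 : (2 : ℝ) ^ (a - 1) = 2 ^ a / 2 := Real.rpow_sub_one (by norm_num) a
  have hy2 : (2 : ℝ) ^ a < 2 := by
    simpa using Real.rpow_lt_rpow_of_exponent_lt (x := 2) (by norm_num) ha1
  have hy0 : (0 : ℝ) < 2 ^ a := by positivity
  rw [e2] at hb
  have hc : 0 < 1 - (2 : ℝ) ^ a / 2 := by linarith
  have hbc : b * (1 - (2 : ℝ) ^ a / 2) = 10 := by
    rw [hb, mul_assoc, inv_mul_cancel₀ hc.ne', mul_one]
  have hb10 : 10 ≤ b := by
    rw [hb]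
    linarith [(one_le_inv₀ hc).2 (by linarith)]
  have hba : (2 : ℝ) ^ a ≤ b ^ a := Real.rpow_le_rpow (by norm_num) (by linarith) ha.le
  refine ⟨hb10, ?_⟩
  rw [e1, e2, Real.rpow_add_one (by linarith)]
  have : b ^ a * b * (1 - (2 : ℝ) ^ a / 2) = 10 * b ^ a := by rw [mul_assoc, hbc]; ring
  rw [add_mul, this]
  nlinarith

/-- For s ∈ (1/2, 1) the parallel μ-volume of `A = [0,1] ∪ [2,b]` with respect to
the s-concave measure with density `x^{1/γ} 1_{[0,b]}` is not s-concave. -/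
theorem parallel_volume_not_sconcave_large_s
    (s : ℝ) (hs : s ∈ Ioo (1 / 2 : ℝ) 1) (γ : ℝ) (hγ : γ = s / (1 - s))
    (b : ℝ) (hb : b = 10 * (1 - (2 : ℝ) ^ ((1 - γ) / γ))⁻¹)
    (μ : Measure ℝ)
    (hμ : μ = volume.withDensity fun x =>
      ENNReal.ofReal (if x ∈ Icc (0 : ℝ) b then x ^ (1 / γ) else 0))
    (A : Set ℝ) (hA : A = Icc (0 : ℝ) 1 ∪ Icc 2 b) :
    ∃ t₁ t₂ : ℝ, 0 ≤ t₁ ∧ 0 ≤ t₂ ∧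
      0 < (μ (A + t₁ • Icc (-1 : ℝ) 1)).toReal * (μ (A + t₂ • Icc (-1 : ℝ) 1)).toReal ∧
      ∃ l ∈ Icc (0 : ℝ) 1,
        (μ (A + ((1 - l) * t₁ + l * t₂) • Icc (-1 : ℝ) 1)).toReal <
          ((1 - l) * (μ (A + t₁ • Icc (-1 : ℝ) 1)).toReal ^ s
            + l * (μ (A + t₂ • Icc (-1 : ℝ) 1)).toReal ^ s) ^ (1 / s) := by
  obtain ⟨hs1, hs2⟩ := hs
  have hs0 : 0 < s := by linarith
  have hγ1 : 1 < γ := by rw [hγ, one_lt_div (by linarith)]; linarith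
  obtain ⟨a, ha⟩ : ∃ a, a = 1 / γ := ⟨_, rfl⟩
  have ha0 : 0 < a := by rw [ha]; positivity
  have ha1 : a < 1 := by rw [ha, div_lt_one (by linarith)]; exact hγ1
  have hsa : s * (a + 1) = 1 := by
    have : 1 - s ≠ 0 := by linarith
    rw [ha, hγ]; field_simp; ring
  have hexp : (1 - γ) / γ = a - 1 := by rw [ha]; field_simp
  rw [hexp] at hb
  rw [← ha] at hμ
  obtain ⟨hb10, hkey⟩ := one_add_two_rpow_sq_lt ha0 ha1 hb
  set H : ℝ → ℝ := fun t => ((1 + t) ^ (a + 1) - (2 - t) ^ (a + 1) + b ^ (a + 1)) / (a + 1)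
    with hHdef
  have hF : ∀ t ∈ Icc (0 : ℝ) (1 / 4), (μ (A + t • Icc (-1 : ℝ) 1)).toReal = H t := by
    intro t ht
    rw [hμ, hA]
    exact withDensity_rpow_parallel_set ha0.le (by linarith) ht.1 ht.2
  have hpos : ∀ t ∈ Icc (0 : ℝ) (1 / 4), 0 < H t := by
    intro t ht
    have h1 : 0 < (1 + t) ^ (a + 1) := Real.rpow_pos_of_pos (by linarith [ht.1]) _
    have h2 : (2 - t) ^ (a + 1) ≤ b ^ (a + 1) :=
      Real.rpow_le_rpow (by linarith [ht.2]) (by linarith [ht.1]) (by linarith)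
    exact div_pos (by linarith) (by linarith)
  have hH : ∀ t ∈ Icc (0 : ℝ) (1 / 4), HasDerivAt H ((1 + t) ^ a + (2 - t) ^ a) t := by
    intro t ht
    have h1 := ((hasDerivAt_id t).const_add 1).rpow_const (p := a + 1)
      (Or.inl (by simp only [id]; linarith [ht.1]))
    have h2 := ((hasDerivAt_id t).const_sub 2).rpow_const (p := a + 1)
      (Or.inl (by simp only [id]; linarith [ht.2]))
    have h3 := ((h1.sub h2).add_const (b ^ (a + 1))).div_const (a + 1)
    refine h3.congr_deriv ?_
    simp only [id, add_sub_cancel_right]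
    field_simp
    ring
  have hH' : HasDerivAt (fun t : ℝ => (1 + t) ^ a + (2 - t) ^ a)
      (a * (1 - 2 ^ (a - 1))) 0 := by
    have h1 := ((hasDerivAt_id (0 : ℝ)).const_add 1).rpow_const (p := a)
      (Or.inl (by simp))
    have h2 := ((hasDerivAt_id (0 : ℝ)).const_sub 2).rpow_const (p := a)
      (Or.inl (by simp))
    refine (h1.add h2).congr_deriv ?_
    simp
    ring
  have hnc := not_concaveOn_rpow_of_second_deriv hs0 (by norm_num) hH hH' hpos (by
    have hsinv : s = 1 / (a + 1) := by field_simp; linarith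
    have hp : 0 < a / (a + 1) := by positivity
    have hmul := mul_lt_mul_of_pos_left hkey hp
    simp only [hHdef, add_zero, sub_zero, Real.one_rpow]
    have e : 1 - s = a / (a + 1) := by rw [hsinv]; field_simp; ring
    rw [e]
    refine hmul.trans_eq ?_
    ring)
  by_contra! hcon
  refine hnc ⟨convex_Icc _ _, ?_⟩
  intro x hx y hy k l hk hl hkl
  have hmem := convex_Icc (0 : ℝ) (1 / 4) hx hy hk hl hkl
  have hk' : k = 1 - l := by linarith
  subst hk'
  simp only [smul_eq_mul] at hmem ⊢
  have h := hcon x y hx.1 hy.1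
    (by rw [hF x hx, hF y hy]; exact mul_pos (hpos x hx) (hpos y hy)) l ⟨hl, by linarith⟩
  rw [hF x hx, hF y hy, hF _ hmem] at h
  have hX := Real.rpow_nonneg (hpos x hx).le s
  have hY := Real.rpow_nonneg (hpos y hy).le s
  have hnn : 0 ≤ (1 - l) * H x ^ s + l * H y ^ s := by positivity
  rw [one_div] at h
  exact (Real.rpow_inv_le_iff_of_pos hnn (hpos _ hmem).le hs0).1 h
end

section
/- Let I ⊆ ℝ be an open interval and let ψ : ℝ → [0,∞) be a function that is concave on I and vanishes outside I, and let μ be the Borel measure on ℝ with density ψ with respect to Lebesgue measure. Let A ⊆ ℝ be a nonempty compact set and let d > 0 be such that A + [-d,d] ⊆ I. Then the function t ↦ μ(A + t·[-1,1]) is concave on [0,d]. -/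
open MeasureTheory Set Pointwise

open Metric Filter Topology

/-- The integral of an antitone function is a concave function of its upper endpoint. -/
lemma AntitoneOn.concaveOn_integral {g : ℝ → ℝ} {d : ℝ} (hg : AntitoneOn g (Icc 0 d)) :
    ConcaveOn ℝ (Icc 0 d) (fun t => ∫ y in (0 : ℝ)..t, g y) := by
  have hint : ∀ {u v : ℝ}, u ∈ Icc 0 d → v ∈ Icc 0 d → IntervalIntegrable g volume u v :=
    fun hu hv => (hg.mono (uIcc_subset_Icc hu hv)).intervalIntegrable
  refine concaveOn_of_slope_anti_adjacent (convex_Icc 0 d) ?_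
  intro x y z hx hz hxy hyz
  have hy : y ∈ Icc 0 d := ⟨hx.1.trans hxy.le, hyz.le.trans hz.2⟩
  have h0 : (0 : ℝ) ∈ Icc 0 d := ⟨le_rfl, hx.1.trans hx.2⟩
  rw [intervalIntegral.integral_interval_sub_left (hint h0 hz) (hint h0 hy),
    intervalIntegral.integral_interval_sub_left (hint h0 hy) (hint h0 hx)]
  have upper : ∫ u in y..z, g u ≤ (z - y) * g y := by
    have := intervalIntegral.integral_mono_on hyz.le (hint hy hz)
      (intervalIntegrable_const (c := g y))
      (fun u hu => hg hy ⟨hy.1.trans hu.1, hu.2.trans hz.2⟩ hu.1)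
    simpa using this
  have lower : (y - x) * g y ≤ ∫ u in x..y, g u := by
    have := intervalIntegral.integral_mono_on hxy.le
      (intervalIntegrable_const (c := g y)) (hint hx hy)
      (fun u hu => hg ⟨hx.1.trans hu.1, hu.2.trans hy.2⟩ hy hu.2)
    simpa using this
  calc (∫ u in y..z, g u) / (z - y) ≤ g y := by
        rw [div_le_iff₀ (sub_pos.2 hyz)]; linarith
    _ ≤ (∫ u in x..y, g u) / (y - x) := by
        rw [le_div_iff₀ (sub_pos.2 hxy)]; linarith

/-- Symmetric sums of a concave function decrease when moving away from the centre. -/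
lemma ConcaveOn.antitoneOn_symm_add {I : Set ℝ} {ψ : ℝ → ℝ} (hψ : ConcaveOn ℝ I ψ) {x d : ℝ}
    (hsub : Icc (x - d) (x + d) ⊆ I) :
    AntitoneOn (fun t => ψ (x - t) + ψ (x + t)) (Icc 0 d) := by
  intro s hs t ht hst
  rcases eq_or_lt_of_le ht.1 with h0 | h0
  · have : s = t := le_antisymm hst (h0 ▸ hs.1)
    simp [this]
  have hm : x - t ∈ I := hsub ⟨by linarith [ht.2], by linarith [ht.2]⟩
  have hp : x + t ∈ I := hsub ⟨by linarith [ht.2], by linarith [ht.2]⟩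
  have hu : 0 ≤ (t + s) / (2 * t) := div_nonneg (by linarith [hs.1]) (by linarith)
  have hv : 0 ≤ (t - s) / (2 * t) := div_nonneg (by linarith) (by linarith)
  have huv : (t + s) / (2 * t) + (t - s) / (2 * t) = 1 := by field_simp; ring
  have h1 := hψ.2 hm hp hu hv huv
  have h2 := hψ.2 hp hm hu hv huv
  simp only [smul_eq_mul] at h1 h2
  have e1 : (t + s) / (2 * t) * (x - t) + (t - s) / (2 * t) * (x + t) = x - s := by
    field_simp; ring
  have e2 : (t + s) / (2 * t) * (x + t) + (t - s) / (2 * t) * (x - t) = x + s := by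
    field_simp; ring
  rw [e1] at h1
  rw [e2] at h2
  have hsum : ψ (x - t) + ψ (x + t)
      = ((t + s) / (2 * t) + (t - s) / (2 * t)) * (ψ (x - t) + ψ (x + t)) := by
    rw [huv, one_mul]
  show ψ (x - t) + ψ (x + t) ≤ ψ (x - s) + ψ (x + s)
  rw [hsum]
  linarith

lemma ConcaveOn.concaveOn_integral_symm {I : Set ℝ} {ψ : ℝ → ℝ} (hψ : ConcaveOn ℝ I ψ)
    (hcont : ContinuousOn ψ I) {x d : ℝ} (hsub : Icc (x - d) (x + d) ⊆ I) :
    ConcaveOn ℝ (Icc 0 d) (fun t => ∫ y in (x - t)..(x + t), ψ y) := by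
  refine (hψ.antitoneOn_symm_add hsub).concaveOn_integral.congr ?_
  intro t ht
  have hint : ∀ {u v : ℝ}, u ∈ Icc (x - d) (x + d) → v ∈ Icc (x - d) (x + d) →
      IntervalIntegrable ψ volume u v :=
    fun hu hv => (hcont.mono ((uIcc_subset_Icc hu hv).trans hsub)).intervalIntegrable
  have hd : 0 ≤ d := ht.1.trans ht.2
  have hx : x ∈ Icc (x - d) (x + d) := ⟨by linarith, by linarith⟩
  have hm : x - t ∈ Icc (x - d) (x + d) := ⟨by linarith [ht.2], by linarith [ht.1]⟩
  have hp : x + t ∈ Icc (x - d) (x + d) := ⟨by linarith [ht.1], by linarith [ht.2]⟩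
  have i1 : IntervalIntegrable (fun y => ψ (x - y)) volume 0 t := by
    simpa using ((hint hm hx).comp_sub_left x).symm
  have i2 : IntervalIntegrable (fun y => ψ (x + y)) volume 0 t := by
    simpa using (hint hx hp).comp_add_left x
  simp only
  rw [intervalIntegral.integral_add i1 i2, intervalIntegral.integral_comp_sub_left,
    intervalIntegral.integral_comp_add_left, sub_zero, add_zero,
    intervalIntegral.integral_add_adjacent_intervals (hint hm hx) (hint hx hp)]

lemma ConcaveOn.concaveOn_integral_translate {I : Set ℝ} {ψ : ℝ → ℝ} (hψ : ConcaveOn ℝ I ψ)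
    (hcont : ContinuousOn ψ I) {b x d : ℝ} (hbx : b ≤ x) (hsub : Icc b (x + d) ⊆ I) :
    ConcaveOn ℝ (Icc 0 d) (fun t => ∫ y in (b + t)..(x + t), ψ y) := by
  have hmem : ∀ {t y : ℝ}, t ∈ Icc 0 d → y ∈ Icc b x → y + t ∈ I := fun ht hy =>
    hsub ⟨by linarith [ht.1, hy.1], by linarith [ht.2, hy.2]⟩
  have hint : ∀ {t : ℝ}, t ∈ Icc 0 d → IntervalIntegrable (fun y => ψ (y + t)) volume b x := by
    intro t ht
    refine ContinuousOn.intervalIntegrable ?_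
    rw [uIcc_of_le hbx]
    exact hcont.comp (by fun_prop) fun y hy => hmem ht hy
  refine ⟨convex_Icc 0 d, ?_⟩
  intro s hs t ht a c ha hc hac
  have hw := convex_Icc 0 d hs ht ha hc hac
  simp only [smul_eq_mul] at hw ⊢
  simp only [← intervalIntegral.integral_comp_add_right]
  rw [← intervalIntegral.integral_const_mul, ← intervalIntegral.integral_const_mul,
    ← intervalIntegral.integral_add ((hint hs).const_mul a) ((hint ht).const_mul c)]
  refine intervalIntegral.integral_mono_on hbx
    (((hint hs).const_mul a).add ((hint ht).const_mul c)) (hint hw) ?_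
  intro y hy
  have h := hψ.2 (hmem hs hy) (hmem ht hy) ha hc hac
  simp only [smul_eq_mul] at h
  have e : a * (y + s) + c * (y + t) = y + (a * s + c * t) := by
    linear_combination y * hac
  rwa [e] at h

lemma cthickening_insert_real (A : Set ℝ) (x : ℝ) {t : ℝ} (ht : 0 ≤ t) :
    cthickening t (insert x A) = Icc (x - t) (x + t) ∪ cthickening t A := by
  rw [insert_eq, cthickening_union, cthickening_singleton _ ht, Real.closedBall_eq_Icc]

/-- What a new rightmost point `x` adds to the parallel set of a set with greatest element `b`. -/
lemma Icc_diff_cthickening {A : Set ℝ} (hA : IsCompact A) {b x t : ℝ} (hb : IsGreatest A b)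
    (hbx : b ≤ x) (ht : 0 ≤ t) :
    Icc (x - t) (x + t) \ cthickening t A = Icc (x - t) (x + t) ∩ Ioc (b + t) (x + t) := by
  ext y
  simp only [hA.cthickening_eq_biUnion_closedBall ht, Real.closedBall_eq_Icc, Set.mem_sdiff,
    mem_inter_iff, mem_iUnion, mem_Icc, mem_Ioc, not_exists, not_and, not_le]
  constructor
  · rintro ⟨hy, h⟩
    exact ⟨hy, h b hb.1 (by linarith [hy.1]), hy.2⟩
  · rintro ⟨hy, h⟩
    exact ⟨hy, fun a ha _ => by linarith [hb.2 ha, h.1]⟩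

lemma ConcaveOn.concaveOn_integral_cthickening_finset {I : Set ℝ} {ψ : ℝ → ℝ}
    (hψ : ConcaveOn ℝ I ψ) (hcont : ContinuousOn ψ I) (hψ0 : ∀ x, 0 ≤ ψ x) {d : ℝ}
    (A : Finset ℝ) (hsub : cthickening d (A : Set ℝ) ⊆ I) :
    ConcaveOn ℝ (Icc 0 d) (fun t => ∫ y in cthickening t (A : Set ℝ), ψ y) := by
  induction A using Finset.induction_on_max with
  | empty => simpa using concaveOn_const (0 : ℝ) (convex_Icc 0 d)
  | insert x A hmax ih =>
    rcases lt_or_ge d 0 with hd | hd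
    · rw [Icc_eq_empty hd.not_ge]
      exact ⟨convex_empty, by simp⟩
    rw [Finset.coe_insert] at hsub ⊢
    have hsub' := hsub
    rw [cthickening_insert_real _ _ hd, union_subset_iff] at hsub'
    obtain ⟨hsx, hsA⟩ := hsub'
    have hsymm := hψ.concaveOn_integral_symm hcont hsx
    rcases A.eq_empty_or_nonempty with rfl | hne
    · refine hsymm.congr fun t ht => ?_
      simp only
      rw [cthickening_insert_real _ _ ht.1, Finset.coe_empty, cthickening_empty, union_empty,
        integral_Icc_eq_integral_Ioc, intervalIntegral.integral_of_le (by linarith [ht.1])]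
    set b := A.max' hne
    have hb : IsGreatest (A : Set ℝ) b := A.isGreatest_max' hne
    have hbx : b < x := hmax b hb.1
    have hAc : IsCompact (A : Set ℝ) := A.finite_toSet.isCompact
    have hbI : b ∈ I := hsA (self_subset_cthickening _ hb.1)
    have hxI : x + d ∈ I := hsx ⟨by linarith, le_rfl⟩
    have hbxI : Icc b (x + d) ⊆ I := hψ.1.ordConnected.out hbI hxI
    have htrans := hψ.concaveOn_integral_translate hcont hbx.le hbxI
    refine ((ih hsA).add (hsymm.inf htrans)).congr fun t ht => ?_
    have iA : IntegrableOn ψ (cthickening t (A : Set ℝ)) :=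
      (hcont.mono ((cthickening_mono ht.2 _).trans hsA)).integrableOn_compact hAc.cthickening
    have ix : IntegrableOn ψ (Icc (x - t) (x + t)) :=
      (hcont.mono ((Icc_subset_Icc (by linarith [ht.2]) (by linarith [ht.2])).trans
        hsx)).integrableOn_compact isCompact_Icc
    have ib : IntegrableOn ψ (Icc (b + t) (x + t)) :=
      (hcont.mono ((Icc_subset_Icc (by linarith [ht.1]) (by linarith [ht.2])).trans
        hbxI)).integrableOn_compact isCompact_Icc
    have hkey : ∫ y in Icc (x - t) (x + t) \ cthickening t (A : Set ℝ), ψ y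
        = (∫ y in (x - t)..(x + t), ψ y) ⊓ ∫ y in (b + t)..(x + t), ψ y := by
      rw [Icc_diff_cthickening hAc hb hbx.le ht.1,
        intervalIntegral.integral_of_le (by linarith [ht.1]),
        intervalIntegral.integral_of_le (by linarith [ht.1]), ← integral_Icc_eq_integral_Ioc]
      rcases le_or_gt (x - t) (b + t) with h | h
      · have hss : Ioc (b + t) (x + t) ⊆ Icc (x - t) (x + t) := fun y hy => ⟨h.trans hy.1.le, hy.2⟩
        rw [inter_eq_right.2 hss, inf_eq_right.2]
        exact setIntegral_mono_set ix (ae_of_all _ hψ0) hss.eventuallyLE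
      · have hss : Icc (x - t) (x + t) ⊆ Ioc (b + t) (x + t) :=
          fun y hy => ⟨h.trans_le hy.1, hy.2⟩
        rw [inter_eq_left.2 hss, inf_eq_left.2]
        exact setIntegral_mono_set (ib.mono_set Ioc_subset_Icc_self) (ae_of_all _ hψ0)
          hss.eventuallyLE
    simp only [Pi.add_apply, Pi.inf_apply]
    rw [cthickening_insert_real _ _ ht.1, ← hkey, union_comm, ← union_sdiff_self,
      setIntegral_union disjoint_sdiff_right
        (measurableSet_Icc.diff isClosed_cthickening.measurableSet) iA (ix.mono_set sdiff_subset)]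

/-- If μ has a density that is concave on an open interval I and vanishes outside,
and A + [-d,d] ⊆ I, then the parallel μ-volume is concave on [0,d]. -/
theorem parallel_volume_concave_concave_density
    (I : Set ℝ) (hIopen : IsOpen I) (hIconv : Convex ℝ I)
    (ψ : ℝ → ℝ) (hψ0 : ∀ x, 0 ≤ ψ x) (hψconc : ConcaveOn ℝ I ψ)
    (hψout : ∀ x ∉ I, ψ x = 0)
    (μ : Measure ℝ) (hμ : μ = volume.withDensity fun x => ENNReal.ofReal (ψ x))
    (A : Set ℝ) (hA : IsCompact A) (hAne : A.Nonempty)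
    (d : ℝ) (hd : 0 < d) (hsub : A + Icc (-d) d ⊆ I) :
    ConcaveOn ℝ (Icc 0 d) (fun t => (μ (A + t • Icc (-1 : ℝ) 1)).toReal) := by
  have hcont : ContinuousOn ψ I := hψconc.continuousOn hIopen
  have hthick : ∀ t : ℝ, 0 ≤ t → A + t • Icc (-1 : ℝ) 1 = cthickening t A := by
    intro t ht
    have hIcc : Icc (-1 : ℝ) 1 = closedBall 0 1 := by simp [Real.closedBall_eq_Icc]
    rw [← hA.add_closedBall_zero ht, hIcc, smul_unitClosedBall, Real.norm_of_nonneg ht]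
  have hsub' : cthickening d A ⊆ I := by
    rw [← hA.add_closedBall_zero hd.le, Real.closedBall_eq_Icc]
    simpa using hsub
  suffices h : ConcaveOn ℝ (Icc 0 d) (fun t => (μ (cthickening t A)).toReal) from
    h.congr fun t ht => by simp only [hthick t ht.1]
  have hμK : ∀ K : Set ℝ, IsCompact K → K ⊆ I →
      μ K ≠ ⊤ ∧ (μ K).toReal = ∫ y in K, ψ y := by
    intro K hK hKI
    have hi : IntegrableOn ψ K := (hcont.mono hKI).integrableOn_compact hK
    have hμK : μ K = ENNReal.ofReal (∫ y in K, ψ y) := by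
      rw [hμ, withDensity_apply _ hK.measurableSet,
        ofReal_integral_eq_lintegral_ofReal hi (ae_of_all _ hψ0)]
    rw [hμK, ENNReal.toReal_ofReal (integral_nonneg hψ0)]
    exact ⟨ENNReal.ofReal_ne_top, rfl⟩
  obtain ⟨δ, hδ, hδI⟩ := hA.cthickening.exists_cthickening_subset_open hIopen hsub'
  rw [cthickening_cthickening hδ.le hd.le] at hδI
  have hAI : ∀ {t : ℝ}, t ≤ δ + d → cthickening t A ⊆ I := fun ht =>
    (cthickening_mono ht _).trans hδI
  have hVmono : ∀ {S T : Set ℝ}, T ⊆ I → IsCompact T → S ⊆ T → (μ S).toReal ≤ (μ T).toReal :=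
    fun hT hTc hST => ENNReal.toReal_mono (hμK _ hTc hT).1 (measure_mono hST)
  refine ⟨convex_Icc 0 d, ?_⟩
  intro s hs t ht a c ha hc hac
  have hw := convex_Icc 0 d hs ht ha hc hac
  simp only [smul_eq_mul] at hw ⊢
  set w := a * s + c * t with hwdef
  have hlim : Tendsto (fun ε => (μ (cthickening ε (cthickening w A))).toReal) (𝓝[>] 0)
      (𝓝 (μ (cthickening w A)).toReal) := by
    refine (ENNReal.tendsto_toReal (hμK _ hA.cthickening (hAI (by linarith [hw.2]))).1).comp
      ((tendsto_measure_cthickening_of_isClosed ⟨δ, hδ, ?_⟩ isClosed_cthickening).mono_left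
        nhdsWithin_le_nhds)
    rw [cthickening_cthickening hδ.le hw.1]
    exact (hμK _ hA.cthickening (hAI (by linarith [hw.2]))).1
  refine ge_of_tendsto hlim ?_
  filter_upwards [Ioc_mem_nhdsGT hδ] with ε hε
  rw [cthickening_cthickening hε.1.le hw.1]
  obtain ⟨N, hNA, hNfin, hcover⟩ := hA.finite_cover_balls hε.1
  lift N to Finset ℝ using hNfin
  have hNc : IsCompact (N : Set ℝ) := N.finite_toSet.isCompact
  have hNI : ∀ {r : ℝ}, r ≤ δ + d → cthickening r (N : Set ℝ) ⊆ I := fun hr =>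
    (cthickening_subset_of_subset _ hNA).trans (hAI hr)
  have hAN : A ⊆ cthickening ε (N : Set ℝ) := by
    rw [hNc.cthickening_eq_biUnion_closedBall hε.1.le]
    exact hcover.trans (iUnion₂_mono fun _ _ => ball_subset_closedBall)
  have hle : ∀ r ∈ Icc 0 d, (μ (cthickening r A)).toReal
      ≤ ∫ y in cthickening (r + ε) (N : Set ℝ), ψ y := by
    intro r hr
    have hrI : cthickening (r + ε) (N : Set ℝ) ⊆ I := hNI (by linarith [hr.2, hε.2])
    rw [← (hμK _ hNc.cthickening hrI).2]
    refine hVmono hrI hNc.cthickening ?_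
    rw [← cthickening_cthickening hr.1 hε.1.le]
    exact cthickening_subset_of_subset _ hAN
  have hconc := hψconc.concaveOn_integral_cthickening_finset hcont hψ0 N (hNI le_rfl)
  have hmem : ∀ r ∈ Icc 0 d, r + ε ∈ Icc 0 (δ + d) := fun r hr =>
    ⟨by linarith [hr.1, hε.1], by linarith [hr.2, hε.2]⟩
  have hineq := hconc.2 (hmem s hs) (hmem t ht) ha hc hac
  simp only [smul_eq_mul] at hineq
  have e : a * (s + ε) + c * (t + ε) = ε + w := by
    rw [hwdef]; linear_combination ε * hac
  have hεw : ε + w ≤ δ + d := by linarith [hw.2, hε.2]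
  rw [e, ← (hμK _ hNc.cthickening (hNI hεw)).2] at hineq
  calc a * (μ (cthickening s A)).toReal + c * (μ (cthickening t A)).toReal
      ≤ _ := add_le_add (mul_le_mul_of_nonneg_left (hle s hs) ha)
        (mul_le_mul_of_nonneg_left (hle t ht) hc)
    _ ≤ _ := hineq
    _ ≤ _ := hVmono (hAI hεw) hA.cthickening (cthickening_subset_of_subset _ hNA)
end

section
/- Let C > 0 and a < b be real numbers, and let μ be the Borel measure on ℝ with density x ↦ C·1_{[a,b]}(x) with respect to Lebesgue measure. Let A ⊆ [a,b] be a nonempty compact set. Then the function t ↦ μ(A + t·[-1,1]) is concave on [0,∞). -/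
open MeasureTheory Set Pointwise

/-- If translating sets away from the origin decreases their `ν`-measure, then consecutive
intervals have decreasing mean `ν`-density. -/
theorem measure_Ioc_mul_le_of_translate_le (ν : Measure ℝ) [SFinite ν]
    (hν : ∀ B : Set ℝ, MeasurableSet B → B ⊆ Ioi 0 → ∀ h : ℝ, 0 ≤ h →
      ν ((fun z => z - h) ⁻¹' B) ≤ ν B)
    {u v w : ℝ} (hu : 0 ≤ u) :
    ν (Ioc v w) * ENNReal.ofReal (v - u) ≤ ν (Ioc u v) * ENNReal.ofReal (w - v) := by
  have hS : MeasurableSet {p : ℝ × ℝ | p.1 ∈ Ioc v w ∧ p.1 - p.2 ∈ Ioc u v} :=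
    (measurableSet_Ioc.preimage measurable_fst).inter
      (measurableSet_Ioc.preimage (measurable_fst.sub measurable_snd))
  have hT : MeasurableSet {p : ℝ × ℝ | p.1 ∈ Ioc u v ∧ p.1 + p.2 ∈ Ioc v w} :=
    (measurableSet_Ioc.preimage measurable_fst).inter
      (measurableSet_Ioc.preimage (measurable_fst.add measurable_snd))
  have hSν : (ν.prod volume) {p : ℝ × ℝ | p.1 ∈ Ioc v w ∧ p.1 - p.2 ∈ Ioc u v}
      = ν (Ioc v w) * ENNReal.ofReal (v - u) := by
    rw [Measure.prod_apply hS, mul_comm, ← lintegral_indicator_const measurableSet_Ioc]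
    refine lintegral_congr fun z => ?_
    by_cases hz : z ∈ Ioc v w
    · have : Prod.mk z ⁻¹' {p : ℝ × ℝ | p.1 ∈ Ioc v w ∧ p.1 - p.2 ∈ Ioc u v}
          = Ico (z - v) (z - u) := by
        ext h
        refine (and_iff_right hz).trans ?_
        simp only [mem_Ioc, mem_Ico]
        constructor <;> rintro ⟨h₁, h₂⟩ <;> constructor <;> linarith
      rw [this, indicator_of_mem hz, Real.volume_Ico]
      congr 1
      ring
    · simp only [preimage_ofPred_eq, hz, false_and, ofPred_false, measure_empty,
        indicator_of_notMem, not_false_eq_true]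
  have hTν : (ν.prod volume) {p : ℝ × ℝ | p.1 ∈ Ioc u v ∧ p.1 + p.2 ∈ Ioc v w}
      = ν (Ioc u v) * ENNReal.ofReal (w - v) := by
    rw [Measure.prod_apply hT, mul_comm, ← lintegral_indicator_const measurableSet_Ioc]
    refine lintegral_congr fun y => ?_
    by_cases hy : y ∈ Ioc u v
    · have : Prod.mk y ⁻¹' {p : ℝ × ℝ | p.1 ∈ Ioc u v ∧ p.1 + p.2 ∈ Ioc v w}
          = Ioc (v - y) (w - y) := by
        ext h
        refine (and_iff_right hy).trans ?_
        simp only [mem_Ioc]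
        constructor <;> rintro ⟨h₁, h₂⟩ <;> constructor <;> linarith
      rw [this, indicator_of_mem hy, Real.volume_Ioc]
      congr 1
      ring
    · simp only [preimage_ofPred_eq, hy, false_and, ofPred_false, measure_empty,
        indicator_of_notMem, not_false_eq_true]
  rw [← hSν, ← hTν, Measure.prod_apply_symm hS, Measure.prod_apply_symm hT]
  refine lintegral_mono fun h => ?_
  rcases le_or_gt 0 h with hh | hh
  · have hB : MeasurableSet ((fun y => (y, h)) ⁻¹'
        {p : ℝ × ℝ | p.1 ∈ Ioc u v ∧ p.1 + p.2 ∈ Ioc v w}) := measurable_prodMk_right hT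
    refine le_trans (measure_mono ?_) (hν _ hB (fun y hy => hu.trans_lt hy.1.1) h hh)
    rintro z ⟨hz₁, hz₂⟩
    exact ⟨hz₂, by simpa using hz₁⟩
  · have : (fun z => (z, h)) ⁻¹' {p : ℝ × ℝ | p.1 ∈ Ioc v w ∧ p.1 - p.2 ∈ Ioc u v} = ∅ := by
      refine eq_empty_of_forall_notMem ?_
      rintro z ⟨hz₁, hz₂⟩
      have h₁ := hz₁.1
      have h₂ := hz₂.2
      dsimp only at h₁ h₂
      linarith
    rw [this, measure_empty]
    exact zero_le

theorem concaveOn_measureReal_Iic_of_translate_le (ν : Measure ℝ) [IsFiniteMeasure ν]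
    (hν : ∀ B : Set ℝ, MeasurableSet B → B ⊆ Ioi 0 → ∀ h : ℝ, 0 ≤ h →
      ν ((fun z => z - h) ⁻¹' B) ≤ ν B) :
    ConcaveOn ℝ (Ici (0 : ℝ)) (fun t => ν.real (Iic t)) := by
  have hIoc : ∀ {x y : ℝ}, x ≤ y → ν.real (Iic y) - ν.real (Iic x) = ν.real (Ioc x y) := by
    intro x y hxy
    rw [← Iic_union_Ioc_eq_Iic hxy, measureReal_union (Iic_disjoint_Ioc le_rfl) measurableSet_Ioc,
      add_sub_cancel_left]
  refine concaveOn_of_slope_anti_adjacent (convex_Ici 0) fun {x y z} hx _ hxy hyz => ?_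
  rw [hIoc hxy.le, hIoc hyz.le, div_le_div_iff₀ (sub_pos.2 hyz) (sub_pos.2 hxy)]
  have key := ENNReal.toReal_mono (by finiteness)
    (measure_Ioc_mul_le_of_translate_le ν hν (v := y) (w := z) (mem_Ici.1 hx))
  rwa [ENNReal.toReal_mul, ENNReal.toReal_mul, ENNReal.toReal_ofReal (sub_pos.2 hxy).le,
    ENNReal.toReal_ofReal (sub_pos.2 hyz).le] at key

/-- Moving towards a nearest point `p` decreases the distance at unit speed. -/
theorem Metric.infDist_eq_dist_of_dist_add_dist {X : Type*} [PseudoMetricSpace X] {A : Set X}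
    {x y p : X} (hp : p ∈ A) (hxp : Metric.infDist x A = dist x p)
    (hy : dist x y + dist y p = dist x p) : Metric.infDist y A = dist y p := by
  refine le_antisymm (Metric.infDist_le_dist_of_mem hp) ?_
  have := Metric.infDist_le_infDist_add_dist (s := A) (x := x) (y := y)
  linarith

/-- The distribution of the distance to `A ⊆ [a, b]` over `[a, b]` decreases under translation
away from the origin. -/
theorem map_infDist_translate_le {a b : ℝ} {A : Set ℝ} (hA : IsCompact A) (hAne : A.Nonempty)
    (hAsub : A ⊆ Icc a b) {B : Set ℝ} (hB : MeasurableSet B) (hB0 : B ⊆ Ioi 0)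
    {h : ℝ} (hh : 0 ≤ h) :
    (volume.restrict (Icc a b)).map (Metric.infDist · A) ((fun z => z - h) ⁻¹' B) ≤
      (volume.restrict (Icc a b)).map (Metric.infDist · A) B := by
  have hd : Continuous (Metric.infDist · A) := Metric.continuous_infDist_pt A
  have hL : MeasurableSet {x : ℝ | x - Metric.infDist x A ∈ A} :=
    (hA.isClosed.preimage (continuous_id.sub hd)).measurableSet
  have hBh : MeasurableSet ((fun z => z - h) ⁻¹' B) := hB.preimage (measurable_id.sub_const h)
  rw [Measure.map_apply hd.measurable hBh, Measure.map_apply hd.measurable hB,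
    Measure.restrict_apply (hBh.preimage hd.measurable),
    Measure.restrict_apply (hB.preimage hd.measurable),
    ← measure_inter_add_sdiff _ hL, ← measure_inter_add_sdiff (_ ⁻¹' B ∩ _) hL]
  refine add_le_add ?_ ?_
  · refine (measure_mono ?_).trans_eq (measure_preimage_add_right volume (-h) _)
    rintro x ⟨⟨hxB, hxab⟩, hxA⟩
    replace hxB : Metric.infDist x A - h ∈ B := hxB
    replace hxA : x - Metric.infDist x A ∈ A := hxA
    have hpos : 0 < Metric.infDist x A - h := hB0 hxB
    have hxh : Metric.infDist (x + -h) A = Metric.infDist x A - h := by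
      rw [Metric.infDist_eq_dist_of_dist_add_dist (x := x) hxA] <;> simp only [Real.dist_eq] <;>
        grind
    refine ⟨⟨?_, ?_, ?_⟩, ?_⟩
    · change Metric.infDist (x + -h) A ∈ B
      rwa [hxh]
    · linarith [(hAsub hxA).1]
    · linarith [hxab.2]
    · change x + -h - Metric.infDist (x + -h) A ∈ A
      rwa [hxh, ← sub_eq_add_neg, sub_sub_sub_cancel_right]
  · refine (measure_mono ?_).trans_eq (measure_preimage_add_right volume h _)
    rintro x ⟨⟨hxB, hxab⟩, hxA⟩
    replace hxB : Metric.infDist x A - h ∈ B := hxB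
    replace hxA : x - Metric.infDist x A ∉ A := hxA
    have hpos : 0 < Metric.infDist x A - h := hB0 hxB
    have hxA' : x + Metric.infDist x A ∈ A := by
      obtain ⟨p, hp, hxp⟩ := hA.exists_infDist_eq_dist hAne x
      rw [Real.dist_eq] at hxp
      grind
    have hxh : Metric.infDist (x + h) A = Metric.infDist x A - h := by
      rw [Metric.infDist_eq_dist_of_dist_add_dist (x := x) hxA'] <;> simp only [Real.dist_eq] <;>
        grind
    refine ⟨⟨?_, ?_, ?_⟩, ?_⟩
    · change Metric.infDist (x + h) A ∈ B
      rwa [hxh]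
    · linarith [hxab.1]
    · linarith [(hAsub hxA').2]
    · change x + h - Metric.infDist (x + h) A ∉ A
      rw [hxh]
      intro hmem
      rcases hh.eq_or_lt with rfl | hh'
      · exact hxA (by simpa using hmem)
      have hle := Metric.infDist_le_dist_of_mem (x := x) hmem
      rw [Real.dist_eq] at hle
      grind

theorem mem_add_smul_Icc_iff_infDist_le {A : Set ℝ} (hA : IsCompact A) (hAne : A.Nonempty)
    {t : ℝ} (ht : 0 ≤ t) {x : ℝ} :
    x ∈ A + t • Icc (-1 : ℝ) 1 ↔ Metric.infDist x A ≤ t := by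
  constructor
  · rintro ⟨p, hp, _, ⟨r, hr, rfl⟩, rfl⟩
    refine (Metric.infDist_le_dist_of_mem hp).trans ?_
    simpa [Real.dist_eq, abs_mul, abs_of_nonneg ht] using
      mul_le_mul_of_nonneg_left (abs_le.2 hr) ht
  · intro hx
    obtain ⟨p, hp, hxp⟩ := hA.exists_infDist_eq_dist hAne x
    rw [hxp, Real.dist_eq] at hx
    refine ⟨p, hp, x - p, ?_, add_sub_cancel p x⟩
    rcases ht.eq_or_lt with rfl | ht'
    · exact ⟨0, by simp, by simpa using (abs_nonpos_iff.1 hx).symm⟩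
    · refine ⟨(x - p) / t, ?_, mul_div_cancel₀ _ ht'.ne'⟩
      rw [mem_Icc, ← abs_le, abs_div, abs_of_pos ht']
      exact div_le_one_of_le₀ hx ht

/-- For the model 1-concave measure `C·1_{[a,b]} dx` and a compact A ⊆ [a,b],
the parallel μ-volume is concave on [0,∞). -/
theorem parallel_volume_concave_uniform_measure
    (C : ℝ) (hC : 0 < C) (a b : ℝ) (hab : a < b)
    (μ : Measure ℝ)
    (hμ : μ = volume.withDensity fun x =>
      ENNReal.ofReal (if x ∈ Icc a b then C else 0))
    (A : Set ℝ) (hA : IsCompact A) (hAne : A.Nonempty) (hAsub : A ⊆ Icc a b) :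
    ConcaveOn ℝ (Ici (0 : ℝ)) (fun t => (μ (A + t • Icc (-1 : ℝ) 1)).toReal) := by
  have hd : Measurable (Metric.infDist · A) := (Metric.continuous_infDist_pt A).measurable
  have hconc := (concaveOn_measureReal_Iic_of_translate_le
    ((volume.restrict (Icc a b)).map (Metric.infDist · A))
    fun _ hB hB0 _ hh => map_infDist_translate_le hA hAne hAsub hB hB0 hh).smul hC.le
  refine hconc.congr fun t ht => ?_
  have hset : A + t • Icc (-1 : ℝ) 1 = (Metric.infDist · A) ⁻¹' Iic t :=
    Set.ext fun _ => mem_add_smul_Icc_iff_infDist_le hA hAne ht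
  have hμ' : μ = ENNReal.ofReal C • volume.restrict (Icc a b) := by
    rw [hμ, ← withDensity_const, ← withDensity_indicator measurableSet_Icc]
    congr 1
    ext x
    by_cases hx : x ∈ Icc a b <;> simp only [hx, indicator, if_true, if_false, ENNReal.ofReal_zero]
  simp only [hset, hμ', Measure.smul_apply, smul_eq_mul, ENNReal.toReal_mul,
    ENNReal.toReal_ofReal hC.le, measureReal_def, Measure.map_apply hd measurableSet_Iic]
end

section
/- Let n ≥ 2, work in Euclidean space ℝⁿ with Lebesgue measure |·|, let B₂ⁿ be the closed Euclidean unit ball, let e₁ be the first standard basis vector, and let A = B₂ⁿ ∪ {2e₁}. Then the function t ↦ |A + t·B₂ⁿ|^{1/n} is not concave on [0,∞): there exist t₁, t₂ ≥ 0 and λ ∈ [0,1] such that |A + ((1-λ)t₁ + λt₂)·B₂ⁿ|^{1/n} < (1-λ)·|A + t₁·B₂ⁿ|^{1/n} + λ·|A + t₂·B₂ⁿ|^{1/n}. -/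
open MeasureTheory Set Pointwise

/-- The volume of the parallel set of `B₂ⁿ ∪ {x}`, `‖x‖ = 2`, at a distance `t < 1/2`, where the
two components do not meet yet. -/
theorem volume_closedBall_union_singleton_add {n : ℕ} {x : EuclideanSpace ℝ (Fin n)}
    (hx : ‖x‖ = 2) {t : ℝ} (ht : 0 ≤ t) (ht' : t < 1 / 2) :
    (volume ((Metric.closedBall (0 : EuclideanSpace ℝ (Fin n)) 1 ∪ {x}) +
        t • Metric.closedBall (0 : EuclideanSpace ℝ (Fin n)) 1)).toReal =
      ((1 + t) ^ n + t ^ n) *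
        (volume (Metric.ball (0 : EuclideanSpace ℝ (Fin n)) 1)).toReal := by
  rw [smul_unitClosedBall_of_nonneg ht, union_add,
    closedBall_add_closedBall zero_le_one ht, singleton_add_closedBall, add_zero, add_zero,
    measure_union _ measurableSet_closedBall, Measure.addHaar_closedBall _ _ (by positivity),
    Measure.addHaar_closedBall _ _ ht, finrank_euclideanSpace_fin, ← add_mul,
    ← ENNReal.ofReal_add (by positivity) (by positivity), ENNReal.toReal_mul,
    ENNReal.toReal_ofReal (by positivity)]
  apply Metric.closedBall_disjoint_closedBall
  rw [dist_zero_left, hx]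
  linarith

/-- Strict Minkowski inequality in `ℓⁿ` for the vectors `(1, 0)` and `(a, b)`. -/
theorem one_add_pow_add_pow_lt {n : ℕ} (hn : 2 ≤ n) {a b s : ℝ} (ha : 0 ≤ a) (hb : 0 < b)
    (hs : 0 < s) (h : s ^ n = a ^ n + b ^ n) : (1 + a) ^ n + b ^ n < (1 + s) ^ n := by
  have hs1 : 0 < 1 + s := by positivity
  have hconv : (1 / (1 + s) * 1 + s / (1 + s) * (a / s)) ^ n ≤
      1 / (1 + s) * 1 ^ n + s / (1 + s) * (a / s) ^ n :=
    (convexOn_pow (𝕜 := ℝ) n).2 (mem_Ici.2 zero_le_one)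
      (mem_Ici.2 (by positivity : 0 ≤ a / s)) (by positivity) (by positivity) (by field_simp)
  have hc : s / (1 + s) < 1 := by rw [div_lt_one hs1]; linarith
  have hpow : (s / (1 + s)) ^ n < s / (1 + s) :=
    pow_lt_self_of_lt_one₀ (by positivity) hc (by omega)
  have hb' : (s / (1 + s)) ^ n * (b / s) ^ n < s / (1 + s) * (b / s) ^ n :=
    mul_lt_mul_of_pos_right hpow (by positivity)
  have hsum : (a / s) ^ n + (b / s) ^ n = 1 := by
    rw [div_pow, div_pow, ← add_div, ← h, div_self (by positivity)]
  have e₁ : 1 / (1 + s) * 1 + s / (1 + s) * (a / s) = (1 + a) / (1 + s) := by field_simp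
  have e₂ : s / (1 + s) * (b / s) = b / (1 + s) := by field_simp
  have e₃ : 1 / (1 + s) + s / (1 + s) = 1 := by field_simp
  rw [← mul_pow, e₂, div_pow] at hb'
  rw [e₁, one_pow, div_pow] at hconv
  rw [← div_lt_one (by positivity), add_div]
  calc _ < 1 / (1 + s) * 1 + s / (1 + s) * ((a / s) ^ n + (b / s) ^ n) := by linarith
    _ = 1 := by rw [hsum]; linarith

/-- Counterexample to the Costa-Cover conjecture in dimension n ≥ 2: for
`A = B₂ⁿ ∪ {2e₁}` the function `t ↦ |A + tB₂ⁿ|^{1/n}` is not concave. -/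
theorem parallel_volume_root_not_concave
    (n : ℕ) (hn : 2 ≤ n) :
    ∃ t₁ t₂ : ℝ, 0 ≤ t₁ ∧ 0 ≤ t₂ ∧ ∃ l ∈ Icc (0 : ℝ) 1,
      (volume ((Metric.closedBall (0 : EuclideanSpace ℝ (Fin n)) 1 ∪
          {(2 : ℝ) • EuclideanSpace.single (⟨0, by omega⟩ : Fin n) (1 : ℝ)}) +
          ((1 - l) * t₁ + l * t₂) •
            Metric.closedBall (0 : EuclideanSpace ℝ (Fin n)) 1)).toReal ^ (1 / (n : ℝ))
        < (1 - l) * (volume ((Metric.closedBall (0 : EuclideanSpace ℝ (Fin n)) 1 ∪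
              {(2 : ℝ) • EuclideanSpace.single (⟨0, by omega⟩ : Fin n) (1 : ℝ)}) +
              t₁ • Metric.closedBall (0 : EuclideanSpace ℝ (Fin n)) 1)).toReal ^ (1 / (n : ℝ))
          + l * (volume ((Metric.closedBall (0 : EuclideanSpace ℝ (Fin n)) 1 ∪
              {(2 : ℝ) • EuclideanSpace.single (⟨0, by omega⟩ : Fin n) (1 : ℝ)}) +
              t₂ • Metric.closedBall (0 : EuclideanSpace ℝ (Fin n)) 1)).toReal ^ (1 / (n : ℝ)) := by
  have hn0 : n ≠ 0 := by omega
  have hx : ‖(2 : ℝ) • EuclideanSpace.single (⟨0, by omega⟩ : Fin n) (1 : ℝ)‖ = 2 := by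
    simp [norm_smul]
  refine ⟨0, 2 / 5, le_rfl, by norm_num, 1 / 2, ⟨by norm_num, by norm_num⟩, ?_⟩
  rw [volume_closedBall_union_singleton_add hx (by norm_num) (by norm_num),
    volume_closedBall_union_singleton_add hx (by norm_num) (by norm_num),
    volume_closedBall_union_singleton_add hx (by norm_num) (by norm_num)]
  have hω : 0 < (volume (Metric.ball (0 : EuclideanSpace ℝ (Fin n)) 1)).toReal :=
    ENNReal.toReal_pos (Metric.measure_ball_pos _ _ one_pos).ne' measure_ball_lt_top.ne
  rw [Real.mul_rpow (by positivity) hω.le, Real.mul_rpow (by positivity) hω.le,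
    Real.mul_rpow (by positivity) hω.le, ← mul_assoc, ← mul_assoc, ← add_mul]
  refine mul_lt_mul_of_pos_right ?_ (by positivity)
  set s : ℝ := ((1 + 2 / 5) ^ n + (2 / 5) ^ n) ^ (1 / (n : ℝ))
  have hs : 0 < s := by positivity
  have hsn : s ^ n = (1 + 2 / 5) ^ n + (2 / 5) ^ n := by
    simp only [s, one_div]
    exact Real.rpow_inv_natCast_pow (by positivity) hn0
  have key := one_add_pow_add_pow_lt hn (by norm_num) (by norm_num) hs hsn
  have hhalf : ((1 + ((1 - 1 / 2) * 0 + 1 / 2 * (2 / 5))) ^ n +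
      ((1 - 1 / 2) * 0 + 1 / 2 * (2 / 5)) ^ n : ℝ) < ((1 + s) / 2) ^ n := by
    calc _ = ((1 + (1 + 2 / 5)) ^ n + (2 / 5) ^ n : ℝ) / 2 ^ n := by
          rw [add_div, ← div_pow, ← div_pow]; norm_num
      _ < (1 + s) ^ n / 2 ^ n := by gcongr
      _ = _ := (div_pow _ _ _).symm
  have hroot := Real.rpow_lt_rpow (by positivity) hhalf
    (show (0 : ℝ) < 1 / n by positivity)
  rw [one_div (n : ℝ), Real.pow_rpow_inv_natCast (by positivity) hn0, ← one_div] at hroot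
  refine hroot.trans_eq ?_
  simp only [add_zero, one_pow, zero_pow hn0, Real.one_rpow]
  ring
end

section
/- Work in Euclidean space ℝ² with Lebesgue measure, let B₁² = {x ∈ ℝ² : |x₁| + |x₂| ≤ 1} be the closed ℓ¹ unit ball, let μ be the restriction of Lebesgue measure to B₁², and let B₂² be the closed Euclidean unit ball. Then there exist a nonempty compact connected set A ⊆ ℝ², reals t₁, t₂ ≥ 0 with μ(A + t₁·B₂²)·μ(A + t₂·B₂²) > 0, and λ ∈ [0,1] such that μ(A + ((1-λ)t₁ + λt₂)·B₂²)^{1/2} < (1-λ)·μ(A + t₁·B₂²)^{1/2} + λ·μ(A + t₂·B₂²)^{1/2}. -/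
open MeasureTheory Set Pointwise

namespace ParallelVolume

/-- The Euclidean plane. -/
abbrev Plane := EuclideanSpace ℝ (Fin 2)

/-- The closed `ℓ¹` unit ball of the plane. -/
def diamond : Set Plane := {x | |x 0| + |x 1| ≤ 1}

/-- The part of a large disc lying in one of the half-planes `x + y ≤ -1/2`, `x + y ≥ 3/2`,
`x - y ≥ 3/2`. The third half-plane connects the other two outside the `ℓ¹` unit ball. -/
def clamp : Set Plane :=
  (Metric.closedBall 0 10 ∩ {x | x 0 + x 1 ≤ -1 / 2} ∪
      Metric.closedBall 0 10 ∩ {x | 3 / 2 ≤ x 0 - x 1}) ∪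
    Metric.closedBall 0 10 ∩ {x | 3 / 2 ≤ x 0 + x 1}

lemma norm_sq_eq (x : Plane) : ‖x‖ ^ 2 = x 0 ^ 2 + x 1 ^ 2 := by
  simp [EuclideanSpace.norm_sq_eq]

lemma norm_le_iff (x : Plane) {r : ℝ} (hr : 0 ≤ r) : ‖x‖ ≤ r ↔ x 0 ^ 2 + x 1 ^ 2 ≤ r ^ 2 := by
  rw [← norm_sq_eq, sq_le_sq₀ (norm_nonneg x) hr]

lemma mem_diamond_iff (x : Plane) :
    x ∈ diamond ↔ |x 0 + x 1| ≤ 1 ∧ |x 0 - x 1| ≤ 1 := by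
  simp only [diamond, mem_ofPred_eq]
  constructor
  · intro h
    constructor <;> rw [abs_le] <;> constructor <;>
      linarith [le_abs_self (x 0), le_abs_self (x 1), neg_abs_le (x 0), neg_abs_le (x 1)]
  · rintro ⟨h, h'⟩
    rw [abs_le] at h h'
    rcases abs_cases (x 0) with h0 | h0 <;> rcases abs_cases (x 1) with h1 | h1 <;> linarith

lemma isClosed_diamond : IsClosed diamond :=
  isClosed_le (by fun_prop) continuous_const

lemma norm_le_one_of_mem_diamond {x : Plane} (hx : x ∈ diamond) : ‖x‖ ≤ 1 := by
  simp only [diamond, mem_ofPred_eq] at hx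
  rw [norm_le_iff x zero_le_one, ← sq_abs (x 0), ← sq_abs (x 1)]
  nlinarith [abs_nonneg (x 0), abs_nonneg (x 1)]

lemma volume_diamond_ne_top : volume diamond ≠ ⊤ :=
  ((measure_mono fun _ hx => by simpa using norm_le_one_of_mem_diamond hx).trans_lt
    (measure_closedBall_lt_top (x := (0 : Plane)) (r := 1))).ne

lemma volume_diamond_pos : 0 < volume diamond := by
  refine (Metric.measure_ball_pos volume (0 : Plane) (by norm_num : (0 : ℝ) < 1 / 2)).trans_le
    (measure_mono fun x hx => ?_)
  have h := (norm_le_iff x (by norm_num)).1 (mem_ball_zero_iff.1 hx).le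
  rw [mem_diamond_iff]
  constructor <;> apply abs_le_of_sq_le_sq _ zero_le_one <;>
    nlinarith [sq_nonneg (x 0 + x 1), sq_nonneg (x 0 - x 1)]

lemma isCompact_clamp : IsCompact clamp := by
  have hball := isCompact_closedBall (0 : Plane) 10
  exact ((hball.inter_right (isClosed_le (by fun_prop) continuous_const)).union
    (hball.inter_right (isClosed_le continuous_const (by fun_prop)))).union
    (hball.inter_right (isClosed_le continuous_const (by fun_prop)))

lemma isConnected_clamp : IsConnected clamp := by
  have hball := convex_closedBall (0 : Plane) 10
  have hadd : IsLinearMap ℝ fun x : Plane => x 0 + x 1 :=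
    ⟨fun x y => by simp; ring, fun c x => by simp; ring⟩
  have hsub : IsLinearMap ℝ fun x : Plane => x 0 - x 1 :=
    ⟨fun x y => by simp; ring, fun c x => by simp; ring⟩
  have hp : (!₂[1, -2] : Plane) ∈ Metric.closedBall (0 : Plane) 10 := by
    rw [mem_closedBall_zero_iff, norm_le_iff _ (by norm_num)]; norm_num
  have hq : (!₂[3, 0] : Plane) ∈ Metric.closedBall (0 : Plane) 10 := by
    rw [mem_closedBall_zero_iff, norm_le_iff _ (by norm_num)]; norm_num
  have hp1 : (!₂[1, -2] : Plane) ∈ Metric.closedBall 0 10 ∩ {x : Plane | x 0 + x 1 ≤ -1 / 2} :=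
    ⟨hp, by norm_num⟩
  have hp2 : (!₂[1, -2] : Plane) ∈ Metric.closedBall 0 10 ∩ {x : Plane | 3 / 2 ≤ x 0 - x 1} :=
    ⟨hp, by norm_num⟩
  have hq2 : (!₂[3, 0] : Plane) ∈ Metric.closedBall 0 10 ∩ {x : Plane | 3 / 2 ≤ x 0 - x 1} :=
    ⟨hq, by norm_num⟩
  have hq3 : (!₂[3, 0] : Plane) ∈ Metric.closedBall 0 10 ∩ {x : Plane | 3 / 2 ≤ x 0 + x 1} :=
    ⟨hq, by norm_num⟩
  exact ⟨⟨_, Or.inl (Or.inl hp1)⟩,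
    IsPreconnected.union _ (Or.inr hq2) hq3
      (IsPreconnected.union _ hp1 hp2
        (hball.inter (convex_halfSpace_le hadd _)).isPreconnected
        (hball.inter (convex_halfSpace_ge hsub _)).isPreconnected)
      (hball.inter (convex_halfSpace_ge hadd _)).isPreconnected⟩

lemma mem_add_smul_closedBall_iff {A : Set Plane} {t : ℝ} (ht : 0 ≤ t) {x : Plane} :
    x ∈ A + t • Metric.closedBall (0 : Plane) 1 ↔ ∃ a ∈ A, ‖x - a‖ ≤ t := by
  rw [smul_unitClosedBall_of_nonneg ht, mem_add]
  constructor
  · rintro ⟨a, ha, b, hb, rfl⟩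
    exact ⟨a, ha, by simpa using hb⟩
  · rintro ⟨a, ha, h⟩
    exact ⟨a, ha, x - a, by simpa using h, by simp⟩

/-- Four translates of the strip `x + y ≤ -1/2` of the `ℓ¹` ball cover the ball. -/
lemma volume_diamond_le_four_mul :
    volume diamond ≤ 4 * volume ({x : Plane | x 0 + x 1 ≤ -1 / 2} ∩ diamond) := by
  set S : Set Plane := {x : Plane | x 0 + x 1 ≤ -1 / 2} ∩ diamond with hS
  have hcover : diamond ⊆ ⋃ k : Fin 4,
      (fun x : Plane => x + !₂[-(k : ℝ) / 4, -(k : ℝ) / 4]) ⁻¹' S := by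
    intro x hx
    rw [mem_diamond_iff, abs_le, abs_le] at hx
    obtain ⟨⟨h1, h2⟩, h3, h4⟩ := hx
    simp only [mem_iUnion, mem_preimage, hS, mem_inter_iff, mem_ofPred_eq, mem_diamond_iff, abs_le]
    rcases le_total (x 0 + x 1) (-1 / 2) with h | h
    · exact ⟨0, by norm_num; refine ⟨?_, ⟨?_, ?_⟩, ?_, ?_⟩ <;> linarith⟩
    rcases le_total (x 0 + x 1) 0 with h' | h'
    · exact ⟨1, by norm_num; refine ⟨?_, ⟨?_, ?_⟩, ?_, ?_⟩ <;> linarith⟩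
    rcases le_total (x 0 + x 1) (1 / 2) with h'' | h''
    · exact ⟨2, by norm_num; refine ⟨?_, ⟨?_, ?_⟩, ?_, ?_⟩ <;> linarith⟩
    · exact ⟨3, by norm_num; refine ⟨?_, ⟨?_, ?_⟩, ?_, ?_⟩ <;> linarith⟩
  calc volume diamond ≤ _ := measure_mono hcover
    _ ≤ _ := measure_iUnion_fintype_le _ _
    _ = 4 * volume S := by simp only [measure_preimage_add_right]; simp

lemma two_mul_volume_le_volume_diamond :
    2 * volume ({x : Plane | x 0 + x 1 < 0} ∩ diamond) ≤ volume diamond := by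
  set S : Set Plane := {x : Plane | x 0 + x 1 < 0} ∩ diamond with hS
  have hmeas : MeasurableSet S :=
    (isOpen_lt (by fun_prop) continuous_const).measurableSet.inter isClosed_diamond.measurableSet
  have hdisj : Disjoint (-S) S := by
    rw [Set.disjoint_left]
    rintro x ⟨hx, -⟩ ⟨hx', -⟩
    simp only [mem_ofPred_eq, PiLp.neg_apply] at hx hx'
    linarith
  have hsub : -S ∪ S ⊆ diamond := by
    rintro x (⟨-, hx⟩ | ⟨-, hx⟩)
    · simpa [diamond] using hx
    · exact hx
  calc 2 * volume S = volume (-S) + volume S := by rw [Measure.measure_neg, two_mul]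
    _ = volume (-S ∪ S) := (measure_union hdisj hmeas).symm
    _ ≤ volume diamond := measure_mono hsub

lemma mem_clamp_of_mem_diamond {x : Plane} (hx : x ∈ diamond) (h : x 0 + x 1 ≤ -1 / 2) :
    x ∈ clamp :=
  Or.inl (Or.inl ⟨by simpa using (norm_le_one_of_mem_diamond hx).trans (by norm_num), h⟩)

lemma diamond_subset_clamp_add :
    diamond ⊆ clamp + (71 / 100 : ℝ) • Metric.closedBall (0 : Plane) 1 := by
  intro x hx
  rw [mem_add_smul_closedBall_iff (by norm_num)]
  have hw : ‖(!₂[1 / 2, 1 / 2] : Plane)‖ ≤ 71 / 100 := by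
    rw [norm_le_iff _ (by norm_num)]; norm_num
  have hx1 := norm_le_one_of_mem_diamond hx
  rcases le_total (x 0 + x 1) (1 / 2) with h | h
  · refine ⟨x - !₂[1 / 2, 1 / 2], Or.inl (Or.inl ⟨?_, ?_⟩), by simpa using hw⟩
    · rw [mem_closedBall_zero_iff]
      linarith [norm_sub_le x !₂[1 / 2, 1 / 2]]
    · simp only [mem_ofPred_eq, PiLp.sub_apply]
      norm_num
      linarith
  · refine ⟨x + !₂[1 / 2, 1 / 2], Or.inr ⟨?_, ?_⟩, by simpa using hw⟩
    · rw [mem_closedBall_zero_iff]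
      linarith [norm_add_le x !₂[1 / 2, 1 / 2]]
    · simp only [mem_ofPred_eq, PiLp.add_apply]
      norm_num
      linarith

lemma clamp_add_inter_diamond_subset {t : ℝ} (ht : 0 ≤ t) (ht' : 2 * t ^ 2 < 1 / 4) :
    (clamp + t • Metric.closedBall (0 : Plane) 1) ∩ diamond ⊆
      {x : Plane | x 0 + x 1 < 0} ∩ diamond := by
  rintro x ⟨hx, hxd⟩
  refine ⟨?_, hxd⟩
  obtain ⟨a, ha, hxa⟩ := (mem_add_smul_closedBall_iff ht).1 hx
  rw [mem_diamond_iff, abs_le, abs_le] at hxd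
  rw [norm_le_iff _ ht] at hxa
  simp only [PiLp.sub_apply] at hxa
  have hu : |(x 0 - a 0) + (x 1 - a 1)| < 1 / 2 :=
    abs_lt_of_sq_lt_sq (by nlinarith [sq_nonneg ((x 0 - a 0) - (x 1 - a 1))]) (by norm_num)
  have hv : |(x 0 - a 0) - (x 1 - a 1)| < 1 / 2 :=
    abs_lt_of_sq_lt_sq (by nlinarith [sq_nonneg ((x 0 - a 0) + (x 1 - a 1))]) (by norm_num)
  rw [abs_lt] at hu hv
  simp only [mem_ofPred_eq]
  rcases ha with (⟨-, ha⟩ | ⟨-, ha⟩) | ⟨-, ha⟩ <;> simp only [mem_ofPred_eq] at ha <;> linarith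

lemma rpow_half_lt {V a m : ℝ} (hV : 0 < V) (ha : V ≤ 4 * a) (hm : 2 * m ≤ V) :
    m ^ (1 / 2 : ℝ) < (1 - 9 / 20) * a ^ (1 / 2 : ℝ) + 9 / 20 * V ^ (1 / 2 : ℝ) := by
  simp only [← Real.sqrt_eq_rpow]
  have hs := Real.sqrt_pos.2 hV
  have hsq := Real.sq_sqrt hV.le
  have h1 : √V / 2 ≤ √a := Real.le_sqrt_of_sq_le (by nlinarith)
  have h2 : √m < 29 / 40 * √V := by
    rw [Real.sqrt_lt' (by positivity)]
    nlinarith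
  linarith

end ParallelVolume

open ParallelVolume

/-- In dimension 2 there is a compact connected set A such that the parallel
μ-volume for the (1/2-concave) uniform measure μ on the ℓ¹ unit ball is not
1/2-concave. -/
theorem parallel_volume_connected_not_half_concave :
    ∃ A : Set (EuclideanSpace ℝ (Fin 2)), A.Nonempty ∧ IsCompact A ∧ IsConnected A ∧
      ∃ t₁ t₂ : ℝ, 0 ≤ t₁ ∧ 0 ≤ t₂ ∧
        0 < ((volume.restrict {x : EuclideanSpace ℝ (Fin 2) | |x 0| + |x 1| ≤ 1})
              (A + t₁ • Metric.closedBall (0 : EuclideanSpace ℝ (Fin 2)) 1)).toReal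
            * ((volume.restrict {x : EuclideanSpace ℝ (Fin 2) | |x 0| + |x 1| ≤ 1})
              (A + t₂ • Metric.closedBall (0 : EuclideanSpace ℝ (Fin 2)) 1)).toReal ∧
        ∃ l ∈ Icc (0 : ℝ) 1,
          ((volume.restrict {x : EuclideanSpace ℝ (Fin 2) | |x 0| + |x 1| ≤ 1})
              (A + ((1 - l) * t₁ + l * t₂) •
                Metric.closedBall (0 : EuclideanSpace ℝ (Fin 2)) 1)).toReal ^ (1 / 2 : ℝ)
            < (1 - l) * ((volume.restrict {x : EuclideanSpace ℝ (Fin 2) | |x 0| + |x 1| ≤ 1})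
                (A + t₁ • Metric.closedBall (0 : EuclideanSpace ℝ (Fin 2)) 1)).toReal ^ (1 / 2 : ℝ)
              + l * ((volume.restrict {x : EuclideanSpace ℝ (Fin 2) | |x 0| + |x 1| ≤ 1})
                (A + t₂ • Metric.closedBall (0 : EuclideanSpace ℝ (Fin 2)) 1)).toReal ^ (1 / 2 : ℝ) := by
  change ∃ A : Set Plane, A.Nonempty ∧ IsCompact A ∧ IsConnected A ∧
      ∃ t₁ t₂ : ℝ, 0 ≤ t₁ ∧ 0 ≤ t₂ ∧
        0 < (volume.restrict diamond (A + t₁ • Metric.closedBall (0 : Plane) 1)).toReal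
            * (volume.restrict diamond (A + t₂ • Metric.closedBall (0 : Plane) 1)).toReal ∧
        ∃ l ∈ Icc (0 : ℝ) 1,
          (volume.restrict diamond (A + ((1 - l) * t₁ + l * t₂) •
              Metric.closedBall (0 : Plane) 1)).toReal ^ (1 / 2 : ℝ)
            < (1 - l) * (volume.restrict diamond
                (A + t₁ • Metric.closedBall (0 : Plane) 1)).toReal ^ (1 / 2 : ℝ)
              + l * (volume.restrict diamond
                (A + t₂ • Metric.closedBall (0 : Plane) 1)).toReal ^ (1 / 2 : ℝ)
  simp only [Measure.restrict_apply' isClosed_diamond.measurableSet]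
  refine ⟨clamp, isConnected_clamp.nonempty, isCompact_clamp, isConnected_clamp,
    0, 71 / 100, le_rfl, by norm_num, ?_⟩
  have hfin (s : Set Plane) : volume (s ∩ diamond) ≠ ⊤ :=
    measure_ne_top_of_subset inter_subset_right volume_diamond_ne_top
  have hV : 0 < (volume diamond).toReal :=
    ENNReal.toReal_pos volume_diamond_pos.ne' volume_diamond_ne_top
  have ha : (volume diamond).toReal ≤ 4 * (volume
      ((clamp + (0 : ℝ) • Metric.closedBall (0 : Plane) 1) ∩ diamond)).toReal := by
    have h := volume_diamond_le_four_mul.trans (mul_le_mul_right (measure_mono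
      (show _ ⊆ (clamp + (0 : ℝ) • Metric.closedBall (0 : Plane) 1) ∩ diamond from
        fun x hx => ⟨(mem_add_smul_closedBall_iff le_rfl).2
          ⟨x, mem_clamp_of_mem_diamond hx.2 hx.1, by simp⟩, hx.2⟩)) 4)
    simpa using ENNReal.toReal_mono (ENNReal.mul_ne_top (by simp) (hfin _)) h
  have hm : 2 * (volume ((clamp + ((1 - 9 / 20) * 0 + 9 / 20 * (71 / 100) : ℝ) •
      Metric.closedBall (0 : Plane) 1) ∩ diamond)).toReal ≤ (volume diamond).toReal := by
    have h := (mul_le_mul_right (measure_mono (clamp_add_inter_diamond_subset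
      (t := (1 - 9 / 20) * 0 + 9 / 20 * (71 / 100)) (by norm_num) (by norm_num))) 2).trans
      two_mul_volume_le_volume_diamond
    simpa using ENNReal.toReal_mono volume_diamond_ne_top h
  rw [inter_eq_self_of_subset_right diamond_subset_clamp_add]
  exact ⟨mul_pos (by linarith) hV, 9 / 20, by norm_num, rpow_half_lt hV ha hm⟩
end

section
/- Let s ∈ (0, 1/2], let γ = s/(1-s), let μ be the Borel measure on ℝ with density x ↦ x^{1/γ}·1_{[0,3]}(x) with respect to Lebesgue measure, let A = [0,1] ∪ [2,3], and let B = [0,1]. Then the function t ↦ μ(A + t·B) is not s-concave on [0,∞): there exist t₁, t₂ ≥ 0 with μ(A + t₁·B)·μ(A + t₂·B) > 0 and λ ∈ [0,1] such that μ(A + ((1-λ)t₁ + λt₂)·B) < ((1-λ)·μ(A + t₁·B)^s + λ·μ(A + t₂·B)^s)^{1/s}. -/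
open MeasureTheory Set Pointwise

/-- A strict instance of Minkowski's inequality in `ℓᵖ` of two points, for the vectors `(1, d)` and
`(2, d)`, where `d ^ p = c`. -/
theorem half_add_rpow_lt_add_rpow {p c : ℝ} (hp : 1 < p) (hc : 0 < c) :
    ((3 / 2 : ℝ) ^ p + c) ^ (1 / p) <
      1 / 2 * (1 + c) ^ (1 / p) + 1 / 2 * ((2 : ℝ) ^ p + c) ^ (1 / p) := by
  have hp0 : 0 < p := by linarith
  obtain ⟨a, ha0, hap, ha⟩ : ∃ a : ℝ, 0 < a ∧ a ^ p = 1 + c ∧ (1 + c) ^ (1 / p) = a :=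
    ⟨(1 + c) ^ (1 / p), by positivity,
      by rw [one_div, Real.rpow_inv_rpow (by positivity) hp0.ne'], rfl⟩
  obtain ⟨b, hb0, hbp, hb⟩ :
      ∃ b : ℝ, 0 < b ∧ b ^ p = 2 ^ p + c ∧ ((2 : ℝ) ^ p + c) ^ (1 / p) = b :=
    ⟨((2 : ℝ) ^ p + c) ^ (1 / p), by positivity,
      by rw [one_div, Real.rpow_inv_rpow (by positivity) hp0.ne'], rfl⟩
  obtain ⟨d, hd0, hdp⟩ : ∃ d : ℝ, 0 < d ∧ d ^ p = c :=
    ⟨c ^ (1 / p), by positivity,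
      by rw [one_div, Real.rpow_inv_rpow hc.le hp0.ne']⟩
  have h2p1 : (1 : ℝ) < 2 ^ p := Real.one_lt_rpow (by norm_num) hp0
  have hne : 1 / a ≠ 2 / b := by
    intro h
    have h' : b = 2 * a := by field_simp at h; linarith
    rw [h', Real.mul_rpow (by norm_num) ha0.le, hap] at hbp
    nlinarith
  have hw : a / (a + b) + b / (a + b) = 1 := by field_simp
  have key₁ := (strictConvexOn_rpow hp).2 (show 1 / a ∈ Ici (0 : ℝ) from mem_Ici.2 (by positivity))
    (show 2 / b ∈ Ici (0 : ℝ) from mem_Ici.2 (by positivity)) hne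
    (show 0 < a / (a + b) by positivity) (show 0 < b / (a + b) by positivity) hw
  have key₂ := (convexOn_rpow hp.le).2 (show d / a ∈ Ici (0 : ℝ) from mem_Ici.2 (by positivity))
    (show d / b ∈ Ici (0 : ℝ) from mem_Ici.2 (by positivity))
    (show 0 ≤ a / (a + b) by positivity) (show 0 ≤ b / (a + b) by positivity) hw
  have e₁ : a / (a + b) * (1 / a) + b / (a + b) * (2 / b) = (3 / 2) / ((a + b) / 2) := by
    field_simp; norm_num
  have e₂ : a / (a + b) * (d / a) + b / (a + b) * (d / b) = d / ((a + b) / 2) := by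
    field_simp; norm_num
  simp only [smul_eq_mul] at key₁ key₂
  rw [e₁, Real.div_rpow (by positivity) (by positivity), Real.div_rpow (by positivity) ha0.le,
    Real.div_rpow (by positivity) hb0.le, Real.one_rpow, hap, hbp] at key₁
  rw [e₂, Real.div_rpow hd0.le (by positivity), Real.div_rpow hd0.le ha0.le,
    Real.div_rpow hd0.le hb0.le, hdp, hap, hbp] at key₂
  have hsum : ((3 / 2 : ℝ) ^ p + c) / ((a + b) / 2) ^ p < 1 := by
    rw [add_div]
    refine (add_lt_add_of_lt_of_le key₁ key₂).trans_eq ?_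
    field_simp
    ring
  rw [div_lt_one (by positivity)] at hsum
  rw [ha, hb, ← mul_add, one_div_mul_eq_div, one_div, 
    Real.rpow_inv_lt_iff_of_pos (by positivity) (by positivity) hp0]
  exact hsum

theorem Icc_union_Icc_add_smul_Icc {t : ℝ} (ht : 0 ≤ t) :
    (Icc (0 : ℝ) 1 ∪ Icc 2 3) + t • Icc (0 : ℝ) 1 = Icc 0 (1 + t) ∪ Icc 2 (3 + t) := by
  have h : t • Icc (0 : ℝ) 1 = Icc 0 t := by
    have := Set.image_mul_left_Icc (a := t) (b := 0) (c := 1) ht zero_le_one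
    simpa [← image_smul] using this
  rw [h, union_add, Set.Icc_add_Icc zero_le_one ht, Set.Icc_add_Icc (by norm_num) ht]
  simp

section PowerDensity

variable {q : ℝ}

theorem withDensity_rpow_Icc (hq : 0 ≤ q) {a b : ℝ} (ha : 0 ≤ a) (hab : a ≤ b) (ha3 : a ≤ 3) :
    (volume.withDensity fun x : ℝ =>
      ENNReal.ofReal (if x ∈ Icc (0 : ℝ) 3 then x ^ q else 0)) (Icc a b) =
      ENNReal.ofReal (((min b 3) ^ (q + 1) - a ^ (q + 1)) / (q + 1)) := by
  have hind : (fun x : ℝ => ENNReal.ofReal (if x ∈ Icc (0 : ℝ) 3 then x ^ q else 0)) =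
      (Icc (0 : ℝ) 3).indicator fun x => ENNReal.ofReal (x ^ q) := by
    ext x
    by_cases hx : x ∈ Icc (0 : ℝ) 3 <;> simp only [hx, indicator, if_true, if_false,
      ENNReal.ofReal_zero]
  have ham : a ≤ min b 3 := le_min hab ha3
  have hcont : Continuous fun x : ℝ => x ^ q := Real.continuous_rpow_const hq
  rw [withDensity_apply _ measurableSet_Icc, hind, setLIntegral_indicator measurableSet_Icc,
    Icc_inter_Icc, sup_of_le_right ha, inf_comm,
    ← ofReal_integral_eq_lintegral_ofReal hcont.integrableOn_Icc, integral_Icc_eq_integral_Ioc,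
    ← intervalIntegral.integral_of_le ham, integral_rpow (Or.inl (by linarith))]
  filter_upwards [ae_restrict_mem measurableSet_Icc] with x hx
  exact Real.rpow_nonneg (ha.trans hx.1) q

theorem withDensity_rpow_Icc_union_Icc (hq : 0 ≤ q) {u v : ℝ} (hu : 0 ≤ u) (hu2 : u ≤ 2)
    (hv : 3 ≤ v) :
    ((volume.withDensity fun x : ℝ =>
      ENNReal.ofReal (if x ∈ Icc (0 : ℝ) 3 then x ^ q else 0)) (Icc 0 u ∪ Icc 2 v)).toReal =
      (u ^ (q + 1) + ((3 : ℝ) ^ (q + 1) - 2 ^ (q + 1))) / (q + 1) := by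
  have hdisj : AEDisjoint (volume.withDensity fun x : ℝ =>
      ENNReal.ofReal (if x ∈ Icc (0 : ℝ) 3 then x ^ q else 0)) (Icc 0 u) (Icc 2 v) := by
    refine withDensity_absolutelyContinuous _ _ (measure_mono_null (t := {2}) ?_ (by simp))
    rintro x ⟨hx, hx'⟩
    exact le_antisymm (hx.2.trans hu2) hx'.1
  have h23 : (2 : ℝ) ^ (q + 1) ≤ 3 ^ (q + 1) :=
    Real.rpow_le_rpow (by norm_num) (by norm_num) (by linarith)
  have hu' : 0 ≤ u ^ (q + 1) := Real.rpow_nonneg hu _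
  rw [measure_union₀ measurableSet_Icc.nullMeasurableSet hdisj,
    withDensity_rpow_Icc hq le_rfl hu (by norm_num),
    withDensity_rpow_Icc hq (by norm_num) (by linarith) (by norm_num),
    min_eq_left (by linarith), min_eq_right hv, Real.zero_rpow (by linarith), sub_zero,
    ← ENNReal.ofReal_add (by positivity) (div_nonneg (by linarith) (by linarith)),
    ENNReal.toReal_ofReal (add_nonneg (by positivity) (div_nonneg (by linarith) (by linarith))),
    add_div]

end PowerDensity

/-- The symmetric interval cannot be replaced by an arbitrary convex body:
for `B = [0,1]`, `A = [0,1] ∪ [2,3]` and the s-concave measure with density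
`x^{1/γ} 1_{[0,3]}`, the parallel μ-volume `t ↦ μ(A + tB)` is not s-concave. -/
theorem parallel_volume_not_sconcave_asymmetric_body
    (s : ℝ) (hs : s ∈ Ioc (0 : ℝ) (1 / 2)) (γ : ℝ) (hγ : γ = s / (1 - s))
    (μ : Measure ℝ)
    (hμ : μ = volume.withDensity fun x =>
      ENNReal.ofReal (if x ∈ Icc (0 : ℝ) 3 then x ^ (1 / γ) else 0))
    (A B : Set ℝ) (hA : A = Icc (0 : ℝ) 1 ∪ Icc 2 3) (hB : B = Icc (0 : ℝ) 1) :
    ∃ t₁ t₂ : ℝ, 0 ≤ t₁ ∧ 0 ≤ t₂ ∧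
      0 < (μ (A + t₁ • B)).toReal * (μ (A + t₂ • B)).toReal ∧
      ∃ l ∈ Icc (0 : ℝ) 1,
        (μ (A + ((1 - l) * t₁ + l * t₂) • B)).toReal <
          ((1 - l) * (μ (A + t₁ • B)).toReal ^ s
            + l * (μ (A + t₂ • B)).toReal ^ s) ^ (1 / s) := by
  obtain ⟨hs0, hs2⟩ := hs
  have hexp : 1 / γ + 1 = 1 / s := by
    have : 1 - s ≠ 0 := by linarith
    rw [hγ]
    field_simp
    ring
  have hp : 1 < 1 / s := by rw [lt_div_iff₀ hs0]; linarith
  have hvol : ∀ t : ℝ, 0 ≤ t → t ≤ 1 → (μ (A + t • B)).toReal =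
      s * ((1 + t) ^ (1 / s) + ((3 : ℝ) ^ (1 / s) - 2 ^ (1 / s))) := by
    intro t ht ht1
    rw [hμ, hA, hB, Icc_union_Icc_add_smul_Icc ht, withDensity_rpow_Icc_union_Icc (by linarith)
      (by linarith) (by linarith) (by linarith), hexp, div_div_eq_mul_div, div_one, mul_comm]
  obtain ⟨c, hc⟩ : ∃ c : ℝ, c = (3 : ℝ) ^ (1 / s) - 2 ^ (1 / s) := ⟨_, rfl⟩
  have hc0 : 0 < c := by
    rw [hc, sub_pos]
    exact Real.rpow_lt_rpow (by norm_num) (by norm_num) (by linarith)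
  rw [← hc] at hvol
  refine ⟨0, 1, le_rfl, zero_le_one, ?_, 1 / 2, by norm_num, ?_⟩
  · rw [hvol 0 le_rfl zero_le_one, hvol 1 zero_le_one le_rfl]
    positivity
  · have key := half_add_rpow_lt_add_rpow hp hc0
    rw [one_div_one_div] at key
    rw [hvol 0 le_rfl zero_le_one, hvol 1 zero_le_one le_rfl, hvol _ (by norm_num) (by norm_num),
      one_div s, Real.lt_rpow_inv_iff_of_pos (by positivity) (by positivity) hs0, ← one_div s,
      Real.mul_rpow hs0.le (by positivity), Real.mul_rpow hs0.le (by positivity),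
      Real.mul_rpow hs0.le (by positivity)]
    have hss : 0 < s ^ s := by positivity
    have := mul_lt_mul_of_pos_left key hss
    norm_num at this ⊢
    linarith
end

section
/- Let n ≥ 1 and let γ ∈ ℝ with γ ≠ 0. Let f, g : ℝⁿ → [0,∞) be bounded γ-concave functions. For t > 0 define h_t(z) = sup{((f(x))^γ + t·(g(y))^γ)^{1/γ} : x, y ∈ ℝⁿ, z = x + t·y, f(x) > 0, g(y) > 0} (with sup of the empty set taken as 0). Then for all t₁, t₂ > 0, all λ ∈ [0,1], and all y₁, y₂ ∈ ℝⁿ such that the defining sets of h_{t₁}(y₁) and of h_{t₂}(y₂) are nonempty, one has h_{(1-λ)t₁ + λt₂}((1-λ)y₁ + λy₂) ≥ ((1-λ)·h_{t₁}(y₁)^γ + λ·h_{t₂}(y₂)^γ)^{1/γ}. -/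
open MeasureTheory Set Pointwise

/-- The map `(u, v) ↦ (u ^ γ + t * v ^ γ) ^ (1 / γ)` is monotone on positive reals, stated with
lower bounds given as `1 / γ`-th powers. -/
lemma rpow_add_mul_le_of_rpow_le {γ P Q t u v : ℝ} (hγ : γ ≠ 0) (hP : 0 < P) (hQ : 0 < Q)
    (ht : 0 ≤ t) (hu : P ^ (1 / γ) ≤ u) (hv : Q ^ (1 / γ) ≤ v) :
    (P + t * Q) ^ (1 / γ) ≤ (u ^ γ + t * v ^ γ) ^ (1 / γ) := by
  have hP' : 0 < P ^ (1 / γ) := Real.rpow_pos_of_pos hP _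
  have hQ' : 0 < Q ^ (1 / γ) := Real.rpow_pos_of_pos hQ _
  have cancel : ∀ R : ℝ, 0 < R → (R ^ (1 / γ)) ^ γ = R := fun R hR ↦ by
    rw [← Real.rpow_mul hR.le, one_div_mul_cancel hγ, Real.rpow_one]
  have hu' : 0 < u ^ γ := Real.rpow_pos_of_pos (hP'.trans_le hu) _
  have hv' : 0 < v ^ γ := Real.rpow_pos_of_pos (hQ'.trans_le hv) _
  rcases hγ.lt_or_gt with hneg | hpos
  · have h1 := Real.rpow_le_rpow_of_nonpos hP' hu hneg.le
    have h2 := Real.rpow_le_rpow_of_nonpos hQ' hv hneg.le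
    rw [cancel _ hP] at h1
    rw [cancel _ hQ] at h2
    refine Real.rpow_le_rpow_of_nonpos (by positivity) ?_ (one_div_neg.2 hneg).le
    gcongr
  · have h1 := Real.rpow_le_rpow hP'.le hu hpos.le
    have h2 := Real.rpow_le_rpow hQ'.le hv hpos.le
    rw [cancel _ hP] at h1
    rw [cancel _ hQ] at h2
    refine Real.rpow_le_rpow (by positivity) ?_ (one_div_pos.2 hpos).le
    gcongr

/-- Bounded positive values have bounded `γ`-sums `(u ^ γ + t * v ^ γ) ^ (1 / γ)`. -/
lemma exists_rpow_add_mul_le {γ t : ℝ} (hγ : γ ≠ 0) (ht : 0 ≤ t) (M N : ℝ) :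
    ∃ C, ∀ u v : ℝ, 0 < u → 0 < v → u ≤ M → v ≤ N →
      (u ^ γ + t * v ^ γ) ^ (1 / γ) ≤ C := by
  refine ⟨(M ^ γ + t * N ^ γ) ^ (1 / γ), fun u v hu hv huM hvN ↦ ?_⟩
  have cancel : ∀ R : ℝ, 0 < R → (R ^ γ) ^ (1 / γ) = R := fun R hR ↦ by
    rw [← Real.rpow_mul hR.le, mul_one_div_cancel hγ, Real.rpow_one]
  exact rpow_add_mul_le_of_rpow_le hγ (Real.rpow_pos_of_pos hu _) (Real.rpow_pos_of_pos hv _) ht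
    ((cancel u hu).trans_le huM) ((cancel v hv).trans_le hvN)

/-- An upper bound for the `γ`-means of the elements of two sets of positive reals also bounds the
`γ`-mean of their suprema. -/
lemma rpow_mean_sSup_le {γ l C : ℝ} {S T : Set ℝ} (hl : l ∈ Icc (0 : ℝ) 1)
    (hS : S.Nonempty) (hT : T.Nonempty) (hSb : BddAbove S) (hTb : BddAbove T)
    (hS0 : ∀ a ∈ S, 0 < a) (hT0 : ∀ b ∈ T, 0 < b)
    (hC : ∀ a ∈ S, ∀ b ∈ T, ((1 - l) * a ^ γ + l * b ^ γ) ^ (1 / γ) ≤ C) :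
    ((1 - l) * sSup S ^ γ + l * sSup T ^ γ) ^ (1 / γ) ≤ C := by
  obtain ⟨a, -, ha, haS⟩ := exists_seq_tendsto_sSup hS hSb
  obtain ⟨b, -, hb, hbT⟩ := exists_seq_tendsto_sSup hT hTb
  have hSpos : 0 < sSup S := (hS0 _ (haS 0)).trans_le (le_csSup hSb (haS 0))
  have hTpos : 0 < sSup T := (hT0 _ (hbT 0)).trans_le (le_csSup hTb (hbT 0))
  have hpos : 0 < (1 - l) * sSup S ^ γ + l * sSup T ^ γ :=
    (convex_Ioi (0 : ℝ)) (Real.rpow_pos_of_pos hSpos γ) (Real.rpow_pos_of_pos hTpos γ)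
      (sub_nonneg.2 hl.2) hl.1 (sub_add_cancel 1 l)
  refine le_of_tendsto ((((ha.rpow_const (.inl hSpos.ne')).const_mul (1 - l)).add
    ((hb.rpow_const (.inl hTpos.ne')).const_mul l)).rpow_const (.inl hpos.ne')) ?_
  exact .of_forall fun k ↦ hC _ (haS k) _ (hbT k)

/-- Pointwise joint concavity in (t, y) of the γ-supremal convolution h_t of
two γ-concave functions. -/
theorem hopf_lax_pointwise_concave
    (n : ℕ) (hn : 1 ≤ n) (γ : ℝ) (hγ0 : γ ≠ 0)
    (f g : EuclideanSpace ℝ (Fin n) → ℝ)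
    (hf0 : ∀ x, 0 ≤ f x) (hg0 : ∀ x, 0 ≤ g x)
    (hfb : ∃ M, ∀ x, f x ≤ M) (hgb : ∃ M, ∀ x, g x ≤ M)
    (hfconc : ∀ x y, 0 < f x * f y → ∀ l ∈ Icc (0 : ℝ) 1,
      ((1 - l) * f x ^ γ + l * f y ^ γ) ^ (1 / γ) ≤ f ((1 - l) • x + l • y))
    (hgconc : ∀ x y, 0 < g x * g y → ∀ l ∈ Icc (0 : ℝ) 1,
      ((1 - l) * g x ^ γ + l * g y ^ γ) ^ (1 / γ) ≤ g ((1 - l) • x + l • y))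
    (h : ℝ → EuclideanSpace ℝ (Fin n) → ℝ)
    (hh : ∀ t z, h t z = sSup {v : ℝ | ∃ x y, z = x + t • y ∧ 0 < f x ∧ 0 < g y ∧
      v = (f x ^ γ + t * g y ^ γ) ^ (1 / γ)}) :
    ∀ t₁ t₂ : ℝ, 0 < t₁ → 0 < t₂ → ∀ l ∈ Icc (0 : ℝ) 1,
      ∀ y₁ y₂ : EuclideanSpace ℝ (Fin n),
        (∃ x y, y₁ = x + t₁ • y ∧ 0 < f x ∧ 0 < g y) →
        (∃ x y, y₂ = x + t₂ • y ∧ 0 < f x ∧ 0 < g y) →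
        ((1 - l) * h t₁ y₁ ^ γ + l * h t₂ y₂ ^ γ) ^ (1 / γ)
          ≤ h ((1 - l) * t₁ + l * t₂) ((1 - l) • y₁ + l • y₂) := by
  intro t₁ t₂ ht₁ ht₂ l hl y₁ y₂ hne₁ hne₂
  have hl' : 0 ≤ 1 - l := sub_nonneg.2 hl.2
  obtain ⟨M, hM⟩ := hfb
  obtain ⟨N, hN⟩ := hgb
  have bdd : ∀ t z, 0 < t → BddAbove {v : ℝ | ∃ x y, z = x + t • y ∧ 0 < f x ∧ 0 < g y ∧
      v = (f x ^ γ + t * g y ^ γ) ^ (1 / γ)} := by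
    intro t z ht
    obtain ⟨C, hC⟩ := exists_rpow_add_mul_le hγ0 ht.le M N
    refine ⟨C, ?_⟩
    rintro _ ⟨x, y, -, hx, hy, rfl⟩
    exact hC _ _ hx hy (hM x) (hN y)
  have sum_pos : ∀ {t x y}, 0 < t → 0 < f x → 0 < g y → 0 < f x ^ γ + t * g y ^ γ := by
    intro t x y ht hx hy
    positivity
  have convex_pos : ∀ {m a b : ℝ}, m ∈ Icc (0 : ℝ) 1 → 0 < a → 0 < b →
      0 < (1 - m) * a + m * b := fun hm ha hb ↦
    (convex_Ioi (0 : ℝ)) ha hb (sub_nonneg.2 hm.2) hm.1 (sub_add_cancel 1 _)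
  rw [hh t₁, hh t₂]
  refine rpow_mean_sSup_le hl ?_ ?_ (bdd _ _ ht₁) (bdd _ _ ht₂) ?_ ?_ ?_
  · obtain ⟨x, y, hz, hx, hy⟩ := hne₁
    exact ⟨_, x, y, hz, hx, hy, rfl⟩
  · obtain ⟨x, y, hz, hx, hy⟩ := hne₂
    exact ⟨_, x, y, hz, hx, hy, rfl⟩
  · rintro _ ⟨x, y, -, hx, hy, rfl⟩
    exact Real.rpow_pos_of_pos (sum_pos ht₁ hx hy) _
  · rintro _ ⟨x, y, -, hx, hy, rfl⟩
    exact Real.rpow_pos_of_pos (sum_pos ht₂ hx hy) _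
  rintro _ ⟨x₁, w₁, rfl, hx₁, hw₁, rfl⟩ _ ⟨x₂, w₂, rfl, hx₂, hw₂, rfl⟩
  have ht : 0 < (1 - l) * t₁ + l * t₂ := convex_pos hl ht₁ ht₂
  rw [← Real.rpow_mul (sum_pos ht₁ hx₁ hw₁).le, ← Real.rpow_mul (sum_pos ht₂ hx₂ hw₂).le,
    one_div_mul_cancel hγ0, Real.rpow_one, Real.rpow_one, hh]
  set t := (1 - l) * t₁ + l * t₂ with ht_def
  set m := l * t₂ / t with hm_def
  have htm : t * m = l * t₂ := mul_div_cancel₀ _ ht.ne'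
  have htm' : t * (1 - m) = (1 - l) * t₁ := by rw [mul_sub, htm, ht_def]; ring
  have hm : m ∈ Icc (0 : ℝ) 1 := by
    refine ⟨div_nonneg (mul_nonneg hl.1 ht₂.le) ht.le, (div_le_one ht).2 ?_⟩
    exact le_add_of_nonneg_left (mul_nonneg hl' ht₁.le)
  have hP := convex_pos hl (Real.rpow_pos_of_pos hx₁ γ) (Real.rpow_pos_of_pos hx₂ γ)
  have hQ := convex_pos hm (Real.rpow_pos_of_pos hw₁ γ) (Real.rpow_pos_of_pos hw₂ γ)
  have hfx := hfconc x₁ x₂ (mul_pos hx₁ hx₂) l hl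
  have hgw := hgconc w₁ w₂ (mul_pos hw₁ hw₂) m hm
  have hsum : (1 - l) * (f x₁ ^ γ + t₁ * g w₁ ^ γ) + l * (f x₂ ^ γ + t₂ * g w₂ ^ γ) =
      ((1 - l) * f x₁ ^ γ + l * f x₂ ^ γ) + t * ((1 - m) * g w₁ ^ γ + m * g w₂ ^ γ) := by
    linear_combination (-g w₁ ^ γ) * htm' - g w₂ ^ γ * htm
  rw [hsum]
  refine (rpow_add_mul_le_of_rpow_le hγ0 hP hQ ht.le hfx hgw).trans (le_csSup (bdd _ _ ht) ?_)
  refine ⟨_, _, ?_, (Real.rpow_pos_of_pos hP _).trans_le hfx,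
    (Real.rpow_pos_of_pos hQ _).trans_le hgw, rfl⟩
  rw [smul_add t, smul_smul t, smul_smul t, htm, htm']
  module
end
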